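/- Fix l ∈ {1,…,N}. Suppose y ∈ D satisfies y(a) = y^a and y_i(b) = y_i^b for all i ≠ l (with y_l(b) free), and y is a local minimizer (with respect to ‖·‖_{1,∞}) of J over all trajectories in D satisfying these conditions. Assume in addition that for each i = 1, …, N the function x ↦ ∂L/∂v_i(x, y(x), C D_γ^{α,β} y(x)) is absolutely continuous on [a,b] and its combined Riemann–Liouville derivative D_{1−γ}^{β,α} exists and is continuous on [a,b]. Then y satisfies the Euler–Lagrange equations ∂L/∂y_i(x, y(x), C D_γ^{α,β} y(x)) + D_{1−γ}^{β,α}( ∂L/∂v_i(·, y(·), C D_γ^{α,β} y(·)) )(x) = 0 for i = 1,…,N and all x ∈ [a,b], together with the transversality condition [ γ·(xI_b^{1−α}(∂L/∂v_l(·, y(·), C D_γ^{α,β} y(·))))(x) − (1−γ)·(aI_x^{1−β}(∂L/∂v_l(·, y(·), C D_γ^{α,β} y(·))))(x) ] evaluated at x = b equals 0. -/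

import Mathlib

open MeasureTheory Set Real

noncomputable section

/-- Left Riemann–Liouville fractional integral `(ₐIₓ^α f)(x)`. -/
def leftRLI (a α : ℝ) (f : ℝ → ℝ) (x : ℝ) : ℝ :=
  (1 / Real.Gamma α) * ∫ t in a..x, (x - t) ^ (α - 1) * f t

/-- Right Riemann–Liouville fractional integral `(ₓI_b^α f)(x)`. -/
def rightRLI (b α : ℝ) (f : ℝ → ℝ) (x : ℝ) : ℝ :=
  (1 / Real.Gamma α) * ∫ t in x..b, (t - x) ^ (α - 1) * f t

/-- A function is absolutely continuous on `[a, b]` iff it is the integral of its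
(almost everywhere defined) derivative. -/
def AbsolutelyContinuousOn (f : ℝ → ℝ) (a b : ℝ) : Prop :=
  IntervalIntegrable (deriv f) volume a b ∧
    ∀ x ∈ Icc a b, f x = f a + ∫ t in a..x, deriv f t

/-- Left Caputo fractional derivative `(ᶜₐDₓ^α f)(x)`. -/
def caputoLeft (a α : ℝ) (f : ℝ → ℝ) (x : ℝ) : ℝ :=
  (1 / Real.Gamma (1 - α)) * ∫ t in a..x, (x - t) ^ (-α) * deriv f t

/-- Right Caputo fractional derivative `(ᶜₓD_b^α f)(x)`. -/
def caputoRight (b α : ℝ) (f : ℝ → ℝ) (x : ℝ) : ℝ :=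
  -(1 / Real.Gamma (1 - α)) * ∫ t in x..b, (t - x) ^ (-α) * deriv f t

/-- Left Riemann–Liouville fractional derivative `(ₐDₓ^α g)(x) = d/dx (ₐIₓ^{1-α} g)(x)`. -/
def rlLeftD (a α : ℝ) (g : ℝ → ℝ) (x : ℝ) : ℝ :=
  deriv (leftRLI a (1 - α) g) x

/-- Right Riemann–Liouville fractional derivative `(ₓD_b^α g)(x) = -d/dx (ₓI_b^{1-α} g)(x)`. -/
def rlRightD (b α : ℝ) (g : ℝ → ℝ) (x : ℝ) : ℝ :=
  -deriv (rightRLI b (1 - α) g) x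

/-- Combined Caputo fractional derivative `ᶜD_γ^{α,β} f = γ ᶜₐDₓ^α f + (1-γ) ᶜₓD_b^β f`. -/
def combCaputo (a b α β γ : ℝ) (f : ℝ → ℝ) (x : ℝ) : ℝ :=
  γ * caputoLeft a α f x + (1 - γ) * caputoRight b β f x

/-- Combined Riemann–Liouville derivative `D_{1-γ}^{β,α} g = (1-γ) ₐDₓ^β g + γ ₓD_b^α g`. -/
def combRL (a b α β γ : ℝ) (g : ℝ → ℝ) (x : ℝ) : ℝ :=
  (1 - γ) * rlLeftD a β g x + γ * rlRightD b α g x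

/-- Componentwise combined Caputo derivative of a vector-valued function. -/
def combCaputoVec (a b α β γ : ℝ) {N : ℕ} (y : ℝ → Fin N → ℝ) (x : ℝ) : Fin N → ℝ :=
  fun i => combCaputo a b α β γ (fun t => y t i) x

/-- The class `𝐃` of trajectories: each component absolutely continuous on `[a,b]` and the
combined Caputo derivative exists and is continuous on `[a,b]`. -/
def memD (a b α β γ : ℝ) {N : ℕ} (y : ℝ → Fin N → ℝ) : Prop :=
  (∀ i, AbsolutelyContinuousOn (fun t => y t i) a b) ∧
    ∀ i, ContinuousOn (fun x => combCaputo a b α β γ (fun t => y t i) x) (Icc a b)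

/-- The norm `‖y‖_{1,∞} = max_{[a,b]} ‖y(x)‖ + max_{[a,b]} ‖ᶜD_γ^{α,β} y(x)‖`. -/
def norm1inf (a b α β γ : ℝ) {N : ℕ} (y : ℝ → Fin N → ℝ) : ℝ :=
  sSup ((fun x => ‖y x‖) '' Icc a b) +
    sSup ((fun x => ‖combCaputoVec a b α β γ y x‖) '' Icc a b)

/-- Partial derivative of a Lagrangian `L(x, y, v)` w.r.t. the `i`-th component of `y`. -/
def pdY {N : ℕ} (L : ℝ → (Fin N → ℝ) → (Fin N → ℝ) → ℝ) (i : Fin N) (x : ℝ)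
    (u v : Fin N → ℝ) : ℝ :=
  deriv (fun s => L x (Function.update u i s) v) (u i)

/-- Partial derivative of a Lagrangian `L(x, y, v)` w.r.t. the `i`-th component of `v`. -/
def pdV {N : ℕ} (L : ℝ → (Fin N → ℝ) → (Fin N → ℝ) → ℝ) (i : Fin N) (x : ℝ)
    (u v : Fin N → ℝ) : ℝ :=
  deriv (fun s => L x u (Function.update v i s)) (v i)

/-!
Let `p` be a continuous function with compact support in `(a, b)`, and vary one component of `y` by
`ε ∫ₐˣ p`. The derivative of the functional at `ε = 0` is, by Fubini, `∫ momentum * p`, where the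
momentum is `∫ₜᵇ ∂L/∂yᵢ + γ ₜI_b^{1-α} ∂L/∂vᵢ - (1-γ) ₐIₜ^{1-β} ∂L/∂vᵢ`. If it vanishes whenever
`∫ p = 0`, the momentum is constant; in a free component `p` is unrestricted and the constant is
`0`. Differentiating the momentum gives the Euler–Lagrange equation, and evaluating it at `b` the
transversality condition.

The difficulty is that such a variation may leave the class `memD`. The combined derivative is
defined pointwise, and at a point where one of the two one-sided integrals of `y'` diverges its Lean
value is that of the other one alone, the divergent integral being `0`. The continuity of this value
may be destroyed by adding even a smooth function. Therefore `ε p` is replaced by a nearby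
integrable `h` for which both one-sided integrals of `y' + h` converge on `(a, b)`. On `(a, b)` the
combined derivative is a convolution `K ⋆ y'` which agrees almost everywhere with a continuous
function, so smoothing the pieces of `y'` in a partition of unity of `(a, b)` changes `y'` by little
in `L¹` and `K ⋆ y'` by little uniformly. At the endpoints convergence may fail, and `h` is chosen
orthogonal to the weights `(t - a) ^ (-β)` and `(b - t) ^ (-α)`, so that the value there is
unchanged. This restricts `p` as well: the momentum is then only known to be a combination of `1`
and the two weights, and the coefficients of the weights vanish because the momentum is bounded.

It remains to keep the norm of `h` small, at the points where just one one-sided integral of `y'`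
converges. If each one-sided kernel is controlled by `K`, this is automatic. Otherwise some bumps
have a large one-sided convolution and a small convolution with `K`; added near such points,
separated from each other, they cancel the values there if there are finitely many points, and make
them unbounded if there are infinitely many, when the supremum in the norm takes the junk value `0`.
-/

local notation:67 k:68 " ⋆ " q:67 => convolution k q (ContinuousLinearMap.mul ℝ ℝ) volume

section Convolution

/-- The integral defining the convolution of two real functions converges absolutely at `x`. -/
abbrev ConvolvableAt (k q : ℝ → ℝ) (x : ℝ) : Prop :=
  ConvolutionExistsAt k q x (ContinuousLinearMap.mul ℝ ℝ) volume

variable {k k' q q' : ℝ → ℝ} {x : ℝ}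

lemma convolution_eq_integral (k q : ℝ → ℝ) (x : ℝ) : (k ⋆ q) x = ∫ t, k (x - t) * q t :=
  convolution_mul_swap

lemma convolvableAt_iff : ConvolvableAt k q x ↔ Integrable fun t => k (x - t) * q t :=
  convolutionExistsAt_iff_integrable_swap

lemma ConvolvableAt.add (h : ConvolvableAt k q x) (h' : ConvolvableAt k q' x) :
    ConvolvableAt k (q + q') x := by
  rw [convolvableAt_iff] at *
  exact (Integrable.add h h').congr (.of_forall fun t => (mul_add _ _ _).symm)

lemma ConvolvableAt.neg (h : ConvolvableAt k q x) : ConvolvableAt k (-q) x := by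
  rw [convolvableAt_iff] at *
  exact (Integrable.neg h).congr (.of_forall fun t => (mul_neg _ _).symm)

lemma ConvolvableAt.sub (h : ConvolvableAt k q x) (h' : ConvolvableAt k q' x) :
    ConvolvableAt k (q - q') x :=
  sub_eq_add_neg q q' ▸ h.add h'.neg

lemma ConvolvableAt.add_kernel (h : ConvolvableAt k q x) (h' : ConvolvableAt k' q x) :
    ConvolvableAt (k + k') q x := by
  rw [convolvableAt_iff] at *
  exact (Integrable.add h h').congr (.of_forall fun t => (add_mul _ _ _).symm)

lemma ConvolvableAt.convolution_sub (h : ConvolvableAt k q x) (h' : ConvolvableAt k q' x) :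
    (k ⋆ (q - q')) x = (k ⋆ q) x - (k ⋆ q') x :=
  eq_sub_of_add_eq (by rw [← (h.sub h').distrib_add h', sub_add_cancel])

lemma convolution_mul_comm (k q : ℝ → ℝ) : k ⋆ q = q ⋆ k := by
  ext x
  rw [convolution_mul_swap, convolution_mul]
  simp only [mul_comm]

lemma convolution_const_mul (k q : ℝ → ℝ) (c x : ℝ) :
    (k ⋆ fun t => c * q t) x = c * (k ⋆ q) x :=
  congrFun (convolution_smul (f := k) (g := q) (y := c)) x

lemma convolution_comp_add_right (k q : ℝ → ℝ) (x s : ℝ) :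
    (k ⋆ fun t => q (t + x)) s = (k ⋆ q) (s + x) := by
  simp only [convolution_mul, ← sub_add_eq_add_sub]

lemma abs_convolution_le (k q : ℝ → ℝ) (x : ℝ) :
    |(k ⋆ q) x| ≤ ((fun s => |k s|) ⋆ fun s => |q s|) x := by
  simp only [convolution_mul, ← abs_mul]
  exact abs_integral_le_integral_abs

lemma integral_abs_convolution_le (hk : Integrable k) (hq : Integrable q) :
    ∫ x, |(k ⋆ q) x| ≤ (∫ s, |k s|) * ∫ s, |q s| :=
  (integral_mono (hk.integrable_convolution _ hq).abs
    (hk.abs.integrable_convolution _ hq.abs) (abs_convolution_le k q)).trans_eq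
    (integral_convolution (ContinuousLinearMap.mul ℝ ℝ) hk.abs hq.abs)

lemma convolution_left_comm {ρ : ℝ → ℝ} (hk : Integrable k) (hρ : Continuous ρ)
    (hc : HasCompactSupport ρ) (hq : Integrable q) : k ⋆ (ρ ⋆ q) = ρ ⋆ (k ⋆ q) := by
  have hρi : Integrable ρ := hρ.integrable_of_hasCompactSupport hc
  have h_assoc : (ρ ⋆ q) ⋆ k = ρ ⋆ (q ⋆ k) := by
    ext x
    refine convolution_assoc _ _ _ _ (fun x y z => by simp [mul_assoc]) hρi.aestronglyMeasurable
      hq.aestronglyMeasurable hk.aestronglyMeasurable (hρi.ae_convolution_exists _ hq)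
      (hq.norm.ae_convolution_exists _ hk.norm) ?_
    exact hc.norm.convolutionExists_left _ hρ.norm
      (hq.norm.integrable_convolution _ hk.norm).locallyIntegrable x
  rw [convolution_mul_comm k, h_assoc, convolution_mul_comm q]

end Convolution

section WeaklySingular

/-- Integrable, compactly supported convolution kernels, continuous off a countable set, with at
most a `1 / |s|` singularity at the origin. This covers the kernels of all fractional integrals of
order in `(0, 1)`, truncated to a bounded interval. -/
structure WeaklySingular (k : ℝ → ℝ) (C : ℝ) : Prop where
  measurable : Measurable k
  integrable : Integrable k
  abs_id_mul_le : ∀ s, |s * k s| ≤ C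
  continuousAt : ∃ Z : Set ℝ, Z.Countable ∧ ∀ s ∉ Z, ContinuousAt k s
  eq_zero_of_le : ∃ B, ∀ s, B ≤ |s| → k s = 0

namespace WeaklySingular

variable {k k' q : ℝ → ℝ} {C C' : ℝ}

lemma nonneg (hk : WeaklySingular k C) : 0 ≤ C := by simpa using hk.abs_id_mul_le 0

lemma add (hk : WeaklySingular k C) (hk' : WeaklySingular k' C') :
    WeaklySingular (k + k') (C + C') where
  measurable := hk.measurable.add hk'.measurable
  integrable := hk.integrable.add hk'.integrable
  abs_id_mul_le s := by
    rw [Pi.add_apply, mul_add]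
    exact (abs_add_le _ _).trans (add_le_add (hk.abs_id_mul_le s) (hk'.abs_id_mul_le s))
  continuousAt := by
    obtain ⟨Z, hZ, h⟩ := hk.continuousAt
    obtain ⟨Z', hZ', h'⟩ := hk'.continuousAt
    refine ⟨Z ∪ Z', hZ.union hZ', fun s hs => ?_⟩
    rw [mem_union, not_or] at hs
    exact (h s hs.1).add (h' s hs.2)
  eq_zero_of_le := by
    obtain ⟨B, h⟩ := hk.eq_zero_of_le
    obtain ⟨B', h'⟩ := hk'.eq_zero_of_le
    refine ⟨max B B', fun s hs => ?_⟩
    rw [Pi.add_apply, h s ((le_max_left _ _).trans hs), h' s ((le_max_right _ _).trans hs),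
      add_zero]

lemma const_mul (hk : WeaklySingular k C) (c : ℝ) :
    WeaklySingular (fun s => c * k s) (|c| * C) where
  measurable := hk.measurable.const_mul c
  integrable := hk.integrable.const_mul c
  abs_id_mul_le s := by
    rw [mul_left_comm, abs_mul]
    exact mul_le_mul_of_nonneg_left (hk.abs_id_mul_le s) (abs_nonneg c)
  continuousAt := by
    obtain ⟨Z, hZ, h⟩ := hk.continuousAt
    exact ⟨Z, hZ, fun s hs => continuousAt_const.mul (h s hs)⟩
  eq_zero_of_le := by
    obtain ⟨B, h⟩ := hk.eq_zero_of_le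
    exact ⟨B, fun s hs => by rw [h s hs, mul_zero]⟩

lemma comp_neg (hk : WeaklySingular k C) : WeaklySingular (fun s => k (-s)) C where
  measurable := hk.measurable.comp measurable_neg
  integrable := hk.integrable.comp_neg
  abs_id_mul_le s := by simpa only [neg_mul, abs_neg] using hk.abs_id_mul_le (-s)
  continuousAt := by
    obtain ⟨Z, hZ, h⟩ := hk.continuousAt
    exact ⟨Neg.neg ⁻¹' Z, hZ.preimage neg_injective, fun s hs =>
      (h (-s) hs).comp continuous_neg.continuousAt⟩
  eq_zero_of_le := by
    obtain ⟨B, h⟩ := hk.eq_zero_of_le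
    exact ⟨B, fun s hs => h _ (by rwa [abs_neg])⟩

lemma convolvableAt_ae (hk : WeaklySingular k C) (hq : Integrable q) :
    ∀ᵐ x, ConvolvableAt k q x :=
  hk.integrable.ae_convolution_exists _ hq

lemma convolvableAt_of_continuous (hk : WeaklySingular k C) (hq : Continuous q)
    (hqc : HasCompactSupport q) (x : ℝ) : ConvolvableAt k q x :=
  hqc.convolutionExists_right _ hk.integrable.locallyIntegrable hq x

lemma continuous_convolution (hk : WeaklySingular k C) (hq : Continuous q)
    (hqc : HasCompactSupport q) : Continuous (k ⋆ q) :=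
  hqc.continuous_convolution_right _ hk.integrable.locallyIntegrable hq

lemma abs_le_div (hk : WeaklySingular k C) {d s : ℝ} (hd : 0 < d) (hs : d ≤ |s|) :
    |k s| ≤ C / d := by
  rw [le_div_iff₀ hd, mul_comm]
  exact (mul_le_mul_of_nonneg_right hs (abs_nonneg _)).trans
    ((abs_mul _ _).symm.trans_le (hk.abs_id_mul_le s))

lemma aestronglyMeasurable_kernel_mul (hk : WeaklySingular k C) (hq : Integrable q) (x : ℝ) :
    AEStronglyMeasurable (fun t => k (x - t) * q t) :=
  (hk.measurable.comp (measurable_const.sub measurable_id)).aestronglyMeasurable.mul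
    hq.aestronglyMeasurable

section AwayFromSupport

variable {d x : ℝ}

lemma norm_kernel_mul_le_of_dist (hk : WeaklySingular k C) (hd : 0 < d)
    (h : ∀ t, q t ≠ 0 → d ≤ |x - t|) (t : ℝ) : ‖k (x - t) * q t‖ ≤ C / d * |q t| := by
  rw [norm_eq_abs, abs_mul]
  by_cases hqt : q t = 0
  · simp [hqt]
  · exact mul_le_mul_of_nonneg_right (hk.abs_le_div hd (h t hqt)) (abs_nonneg _)

lemma convolvableAt_of_dist (hk : WeaklySingular k C) (hq : Integrable q) (hd : 0 < d)
    (h : ∀ t, q t ≠ 0 → d ≤ |x - t|) : ConvolvableAt k q x :=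
  convolvableAt_iff.2 <| (hq.abs.const_mul (C / d)).mono'
    (hk.aestronglyMeasurable_kernel_mul hq x) (.of_forall (hk.norm_kernel_mul_le_of_dist hd h))

lemma integral_abs_kernel_mul_le_of_dist (hk : WeaklySingular k C) (hq : Integrable q)
    (hd : 0 < d) (h : ∀ t, q t ≠ 0 → d ≤ |x - t|) :
    ∫ t, |k (x - t) * q t| ≤ C / d * ∫ t, |q t| := by
  rw [← integral_const_mul]
  exact integral_mono (convolvableAt_iff.1 (hk.convolvableAt_of_dist hq hd h)).norm
    (hq.abs.const_mul _) (hk.norm_kernel_mul_le_of_dist hd h)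

end AwayFromSupport

end WeaklySingular

end WeaklySingular

section Commutator

/-- The commutator of convolution with `k` and multiplication by `ψ`, applied to `f`: formally
`k ⋆ (ψ f) - ψ (k ⋆ f)`, but written as one integral, which converges everywhere for Lipschitz
`ψ` because the factor `ψ t - ψ x` cancels the singularity of `k`. -/
def convCommutator (k ψ f : ℝ → ℝ) (x : ℝ) : ℝ := ∫ t, (ψ t - ψ x) * k (x - t) * f t

namespace WeaklySingular

open scoped NNReal

variable {k ψ f : ℝ → ℝ} {C : ℝ} {Λ : ℝ≥0}

lemma norm_commutator_integrand_le (hk : WeaklySingular k C) (hψ : LipschitzWith Λ ψ) (x t : ℝ) :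
    ‖(ψ t - ψ x) * k (x - t) * f t‖ ≤ Λ * C * |f t| := by
  rw [norm_mul, norm_eq_abs, norm_eq_abs]
  refine mul_le_mul_of_nonneg_right ?_ (abs_nonneg _)
  calc |(ψ t - ψ x) * k (x - t)|
      ≤ (Λ * |t - x|) * |k (x - t)| := by
        rw [abs_mul]
        exact mul_le_mul_of_nonneg_right (hψ.dist_le_mul t x) (abs_nonneg _)
    _ = Λ * |(x - t) * k (x - t)| := by rw [abs_mul, abs_sub_comm, mul_assoc]
    _ ≤ Λ * C := mul_le_mul_of_nonneg_left (hk.abs_id_mul_le _) Λ.coe_nonneg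

lemma aestronglyMeasurable_commutator_integrand (hk : WeaklySingular k C)
    (hψ : LipschitzWith Λ ψ) (hf : Integrable f) (x : ℝ) :
    AEStronglyMeasurable (fun t => (ψ t - ψ x) * k (x - t) * f t) :=
  ((hψ.continuous.measurable.sub measurable_const).mul
    (hk.measurable.comp (measurable_const.sub measurable_id))).aestronglyMeasurable.mul
      hf.aestronglyMeasurable

lemma integrable_commutator_integrand (hk : WeaklySingular k C) (hψ : LipschitzWith Λ ψ)
    (hf : Integrable f) (x : ℝ) : Integrable (fun t => (ψ t - ψ x) * k (x - t) * f t) :=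
  (hf.abs.const_mul (Λ * C)).mono' (hk.aestronglyMeasurable_commutator_integrand hψ hf x)
    (.of_forall (hk.norm_commutator_integrand_le hψ x))

lemma abs_convCommutator_le (hk : WeaklySingular k C) (hψ : LipschitzWith Λ ψ)
    (hf : Integrable f) (x : ℝ) : |convCommutator k ψ f x| ≤ Λ * C * ∫ t, |f t| := by
  rw [← integral_const_mul]
  exact norm_integral_le_of_norm_le (hf.abs.const_mul _)
    (.of_forall (hk.norm_commutator_integrand_le hψ x))

lemma continuous_convCommutator (hk : WeaklySingular k C) (hψ : LipschitzWith Λ ψ)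
    (hf : Integrable f) : Continuous (convCommutator k ψ f) := by
  obtain ⟨Z, hZ, hkZ⟩ := hk.continuousAt
  rw [continuous_iff_continuousAt]
  intro x₀
  refine continuousAt_of_dominated (bound := fun t => Λ * C * |f t|)
    (.of_forall fun x => hk.aestronglyMeasurable_commutator_integrand hψ hf x)
    (.of_forall fun x => .of_forall (hk.norm_commutator_integrand_le hψ x))
    (hf.abs.const_mul _) ?_
  have hZ_ae : ∀ᵐ t : ℝ, x₀ - t ∉ Z :=
    (hZ.preimage (sub_right_injective (b := x₀))).ae_notMem volume
  filter_upwards [hZ_ae] with t ht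
  refine ((continuousAt_const.sub hψ.continuous.continuousAt).mul ?_).mul continuousAt_const
  exact ContinuousAt.comp (f := fun x => x - t) (hkZ _ ht) (by fun_prop)

lemma convolvableAt_mul (hk : WeaklySingular k C) (hψ : LipschitzWith Λ ψ) (hf : Integrable f)
    {x : ℝ} (h : ψ x = 0 ∨ ConvolvableAt k f x) : ConvolvableAt k (fun t => ψ t * f t) x := by
  have hψf : Integrable fun t => ψ x * (k (x - t) * f t) := by
    rcases h with h | h
    · simp [h]
    · exact (convolvableAt_iff.1 h).const_mul _
  rw [convolvableAt_iff]
  exact (hψf.add (hk.integrable_commutator_integrand hψ hf x)).congr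
    (.of_forall fun t => by simp only [Pi.add_apply]; ring)

lemma convolution_mul_eq (hk : WeaklySingular k C) (hψ : LipschitzWith Λ ψ) (hf : Integrable f)
    {x : ℝ} (h : ψ x = 0 ∨ ConvolvableAt k f x) :
    (k ⋆ fun t => ψ t * f t) x = ψ x * (k ⋆ f) x + convCommutator k ψ f x := by
  have hψf : Integrable fun t => ψ x * (k (x - t) * f t) := by
    rcases h with h | h
    · simp [h]
    · exact (convolvableAt_iff.1 h).const_mul _
  simp only [convolution_eq_integral, convCommutator]
  rw [← integral_const_mul, ← integral_add hψf (hk.integrable_commutator_integrand hψ hf x)]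
  exact integral_congr_ae (.of_forall fun t => by ring)

lemma convolution_mul_ae_eq (hk : WeaklySingular k C) (hψ : LipschitzWith Λ ψ)
    (hf : Integrable f) {φ : ℝ → ℝ} (hφ : ∀ᵐ x, ψ x ≠ 0 → (k ⋆ f) x = φ x) :
    (k ⋆ fun t => ψ t * f t) =ᵐ[volume] fun x => ψ x * φ x + convCommutator k ψ f x := by
  filter_upwards [hφ, hk.convolvableAt_ae hf] with x hx h
  rw [hk.convolution_mul_eq hψ hf (.inr h)]
  by_cases hψx : ψ x = 0
  · simp [hψx]
  · rw [hx hψx]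

lemma hasCompactSupport_convCommutator (hk : WeaklySingular k C) {B : ℝ}
    (hψB : ∀ x, B ≤ |x| → ψ x = 0) : HasCompactSupport (convCommutator k ψ f) := by
  obtain ⟨B', hkB'⟩ := hk.eq_zero_of_le
  refine HasCompactSupport.intro (isCompact_closedBall (0 : ℝ) (|B| + |B'|)) fun x hx => ?_
  rw [mem_closedBall_zero_iff, norm_eq_abs, not_le] at hx
  have hψx : ψ x = 0 := hψB x (by linarith [le_abs_self B, abs_nonneg B'])
  have h_integrand : ∀ t, (ψ t - ψ x) * k (x - t) * f t = 0 := by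
    intro t
    rcases le_or_gt B |t| with hBt | htB
    · simp [hψx, hψB t hBt]
    · have : B' ≤ |x - t| := by
        linarith [abs_sub_abs_le_abs_sub x t, le_abs_self B, le_abs_self B']
      simp [hkB' _ this]
  simp [convCommutator, h_integrand]

end WeaklySingular

end Commutator
section Mollification

lemma hasCompactSupport_of_forall_le_abs {q : ℝ → ℝ} {B : ℝ} (h : ∀ t, B ≤ |t| → q t = 0) :
    HasCompactSupport q :=
  .intro (isCompact_closedBall (0 : ℝ) B) fun x hx => h x <| by
    rw [mem_closedBall_zero_iff, norm_eq_abs, not_le] at hx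
    exact hx.le

lemma exists_forall_le_abs_eq_zero {q : ℝ → ℝ} (h : HasCompactSupport q) :
    ∃ B, 0 < B ∧ ∀ t, B ≤ |t| → q t = 0 := by
  obtain ⟨B, hB⟩ := h.isCompact.isBounded.subset_closedBall 0
  refine ⟨|B| + 1, by positivity, fun t ht => ?_⟩
  by_contra hqt
  have htB := hB (subset_tsupport _ hqt)
  rw [mem_closedBall_zero_iff, norm_eq_abs] at htB
  linarith [le_abs_self B]

/-- The standard smooth bump of integral scale `r`, supported in the ball of radius `r`. -/
def mollifier (r : ℝ) (hr : 0 < r) : ContDiffBump (0 : ℝ) :=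
  ⟨r / 2, r, by positivity, by linarith⟩

/-- Mollification of `q` at scale `r`. -/
def mollify (r : ℝ) (hr : 0 < r) (q : ℝ → ℝ) : ℝ → ℝ := (mollifier r hr).normed volume ⋆ q

variable {r : ℝ} (hr : 0 < r) {q q' : ℝ → ℝ}

lemma mollify_eq_lsmul : mollify r hr q =
    convolution ((mollifier r hr).normed volume) q (ContinuousLinearMap.lsmul ℝ ℝ) volume :=
  rfl

lemma integrable_mollify (hq : Integrable q) : Integrable (mollify r hr q) :=
  (mollifier r hr).integrable_normed.integrable_convolution _ hq

lemma continuous_mollify (hq : Integrable q) : Continuous (mollify r hr q) :=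
  (mollifier r hr).hasCompactSupport_normed.continuous_convolution_left _
    (mollifier r hr).continuous_normed hq.locallyIntegrable

lemma integral_abs_mollify_le (hq : Integrable q) : ∫ x, |mollify r hr q x| ≤ ∫ x, |q x| := by
  have h := integral_abs_convolution_le (mollifier r hr).integrable_normed hq
  simp_rw [abs_of_nonneg ((mollifier r hr).nonneg_normed (μ := volume) _)] at h
  rwa [(mollifier r hr).integral_normed, one_mul] at h

lemma exists_of_mollify_ne_zero {x : ℝ} (h : mollify r hr q x ≠ 0) :
    ∃ t, |x - t| < r ∧ q t ≠ 0 := by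
  obtain ⟨s, hs, t, ht, rfl⟩ := support_convolution_subset _ (Function.mem_support.2 h)
  rw [ContDiffBump.support_normed_eq, mem_ball_zero_iff] at hs
  exact ⟨t, by simpa [mollifier] using hs, ht⟩

lemma mollify_eq_zero_of_forall_le_abs {B : ℝ} (h : ∀ t, B ≤ |t| → q t = 0) (t : ℝ)
    (ht : B + r ≤ |t|) : mollify r hr q t = 0 := by
  by_contra h0
  obtain ⟨s, hs, hqs⟩ := exists_of_mollify_ne_zero hr h0
  exact hqs (h s (by linarith [abs_sub_abs_le_abs_sub t s]))

lemma hasCompactSupport_mollify (h : HasCompactSupport q) :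
    HasCompactSupport (mollify r hr q) :=
  HasCompactSupport.convolution _ (mollifier r hr).hasCompactSupport_normed h

lemma abs_mollify_sub_le {ε x : ℝ} (hm : AEStronglyMeasurable q)
    (h : ∀ t, |t - x| < r → |q t - q x| ≤ ε) : |mollify r hr q x - q x| ≤ ε := by
  rw [mollify_eq_lsmul, ← Real.dist_eq]
  exact ContDiffBump.dist_normed_convolution_le hm fun t ht =>
    h t (by simpa [Real.dist_eq, mollifier] using ht)

lemma abs_mollify_le {M : ℝ} (h : ∀ᵐ x, |q x| ≤ M) (x : ℝ) : |mollify r hr q x| ≤ M := by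
  have hρ := (mollifier r hr).nonneg_normed (μ := volume)
  have h_integrand : ∀ᵐ t, ‖(mollifier r hr).normed volume t * q (x - t)‖ ≤
      M * (mollifier r hr).normed volume t := by
    filter_upwards [(quasiMeasurePreserving_sub_left_of_right_invariant volume x).ae h] with t ht
    rw [norm_mul, norm_eq_abs, norm_eq_abs, abs_of_nonneg (hρ t), mul_comm]
    exact mul_le_mul_of_nonneg_right ht (hρ t)
  have h_integral := norm_integral_le_of_norm_le
    ((mollifier r hr).integrable_normed.const_mul M) h_integrand
  rwa [integral_const_mul, ContDiffBump.integral_normed, mul_one] at h_integral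

lemma convolution_mollify {k : ℝ → ℝ} (hk : Integrable k) (hq : Integrable q) :
    k ⋆ mollify r hr q = mollify r hr (k ⋆ q) :=
  convolution_left_comm hk (mollifier r hr).continuous_normed
    (mollifier r hr).hasCompactSupport_normed hq

lemma mollify_congr (h : q =ᵐ[volume] q') : mollify r hr q = mollify r hr q' :=
  convolution_congr _ (ae_eq_refl _) h

lemma mollify_sub (hq : Integrable q) (hq' : Integrable q') :
    mollify r hr (q - q') = mollify r hr q - mollify r hr q' := by
  have h_exists : ∀ {p : ℝ → ℝ} (x : ℝ), Integrable p →
      ConvolvableAt ((mollifier r hr).normed volume) p x := fun x hp =>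
    (mollifier r hr).hasCompactSupport_normed.convolutionExists_left _
      (mollifier r hr).continuous_normed hp.locallyIntegrable x
  ext x
  exact (h_exists x hq).convolution_sub (h_exists x hq')

lemma ae_tendsto_mollify (hq : Integrable q) :
    ∀ᵐ x, Filter.Tendsto (fun n : ℕ => mollify (1 / ((n : ℝ) + 1)) Nat.one_div_pos_of_nat q x)
      Filter.atTop (nhds (q x)) := by
  refine ContDiffBump.ae_convolution_tendsto_right_of_locallyIntegrable
    (φ := fun n : ℕ => mollifier (1 / ((n : ℝ) + 1)) Nat.one_div_pos_of_nat) (K := 2)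
    tendsto_one_div_add_atTop_nhds_zero_nat (.of_forall fun n => ?_) hq.locallyIntegrable
  simp only [mollifier]
  linarith

lemma exists_abs_mollify_sub_le {Φ : ℝ → ℝ} (hΦ : Continuous Φ) (hc : HasCompactSupport Φ)
    {ε : ℝ} (hε : 0 < ε) :
    ∃ r₀ > 0, ∀ r (hr : 0 < r), r ≤ r₀ → ∀ x, |mollify r hr Φ x - Φ x| ≤ ε := by
  obtain ⟨δ, hδ, h⟩ := Metric.uniformContinuous_iff.1
    (hc.uniformContinuous_of_continuous hΦ) ε hε
  refine ⟨δ, hδ, fun r hr hrδ x => abs_mollify_sub_le hr hΦ.aestronglyMeasurable fun t ht => ?_⟩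
  exact (h (a := t) (b := x) (ht.trans_le hrδ)).le

lemma integral_abs_le_of_forall_le_abs {p : ℝ → ℝ} {B ε : ℝ} (hB : 0 ≤ B)
    (hp0 : ∀ t, B ≤ |t| → p t = 0) (hp : ∀ t, |p t| ≤ ε) : ∫ t, |p t| ≤ ε * (2 * B) := by
  have h_compl : ∀ t, t ∉ Icc (-B) B → |p t| = 0 := fun t ht => by
    rw [hp0 t (not_le.1 fun h => ht (abs_le.1 h)).le, abs_zero]
  rw [← setIntegral_eq_integral_of_forall_compl_eq_zero h_compl]
  have h := norm_setIntegral_le_of_norm_le_const (μ := volume) (s := Icc (-B) B)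
    (f := fun t => |p t|) (C := ε) (by simp) (fun t _ => by simpa using hp t)
  rw [Real.volume_real_Icc_of_le (by linarith)] at h
  exact (le_abs_self _).trans (h.trans_eq (by ring))

lemma exists_integral_abs_mollify_sub_le_of_continuous {c : ℝ → ℝ} (hc : Continuous c)
    (hcc : HasCompactSupport c) {ε : ℝ} (hε : 0 < ε) :
    ∃ r₀ > 0, ∀ r (hr : 0 < r), r ≤ r₀ → ∫ x, |mollify r hr c x - c x| ≤ ε := by
  obtain ⟨B, hB, hcB⟩ := exists_forall_le_abs_eq_zero hcc
  obtain ⟨r₀, hr₀, h⟩ := exists_abs_mollify_sub_le hc hcc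
    (show 0 < ε / (2 * (B + 1)) by positivity)
  refine ⟨min r₀ 1, by positivity, fun r hr hrr₀ => ?_⟩
  have h_far : ∀ t, B + 1 ≤ |t| → mollify r hr c t - c t = 0 := fun t ht => by
    rw [mollify_eq_zero_of_forall_le_abs hr hcB t (by linarith [hrr₀.trans (min_le_right r₀ 1)]),
      hcB t (by linarith), sub_zero]
  refine (integral_abs_le_of_forall_le_abs (by positivity) h_far
    (h r hr (hrr₀.trans (min_le_left _ _)))).trans_eq ?_
  field_simp

lemma integral_abs_mollify_sub_le_of_approx {c : ℝ → ℝ} (hq : Integrable q) (hc : Integrable c) :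
    ∫ x, |mollify r hr q x - q x| ≤
      2 * (∫ x, |q x - c x|) + ∫ x, |mollify r hr c x - c x| := by
  have hqc : Integrable (q - c) := hq.sub hc
  have i₁ : Integrable fun x => |mollify r hr (q - c) x| := (integrable_mollify hr hqc).abs
  have i₂ : Integrable fun x => |mollify r hr c x - c x| := ((integrable_mollify hr hc).sub hc).abs
  have i₃ : Integrable fun x => |q x - c x| := hqc.abs
  have h_split : ∀ x, |mollify r hr q x - q x| ≤
      |mollify r hr (q - c) x| + |mollify r hr c x - c x| + |q x - c x| := fun x => by
    rw [mollify_sub hr hq hc, Pi.sub_apply, abs_sub_comm (q x)]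
    refine le_trans (le_of_eq ?_) (abs_add_three _ _ _)
    ring_nf
  calc ∫ x, |mollify r hr q x - q x|
      ≤ ∫ x, (|mollify r hr (q - c) x| + |mollify r hr c x - c x| + |q x - c x|) :=
        integral_mono ((integrable_mollify hr hq).sub hq).abs ((i₁.add i₂).add i₃) h_split
    _ = (∫ x, |mollify r hr (q - c) x|) + (∫ x, |mollify r hr c x - c x|) + ∫ x, |q x - c x| := by
        rw [← integral_add i₁ i₂]
        exact integral_add (i₁.add i₂) i₃
    _ ≤ _ := by
        have h_contr : ∫ x, |mollify r hr (q - c) x| ≤ ∫ x, |q x - c x| :=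
          integral_abs_mollify_le hr hqc
        linarith

lemma exists_integral_abs_mollify_sub_le (hq : Integrable q) {ε : ℝ} (hε : 0 < ε) :
    ∃ r₀ > 0, ∀ r (hr : 0 < r), r ≤ r₀ → ∫ x, |mollify r hr q x - q x| ≤ ε := by
  obtain ⟨c, hcc, hcε, hc, hci⟩ :=
    hq.exists_hasCompactSupport_integral_sub_le (show 0 < ε / 4 by positivity)
  obtain ⟨r₀, hr₀, h⟩ :=
    exists_integral_abs_mollify_sub_le_of_continuous hc hcc (show 0 < ε / 2 by positivity)
  refine ⟨r₀, hr₀, fun r hr hrr₀ => ?_⟩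
  have hcε' : ∫ x, |q x - c x| ≤ ε / 4 := hcε
  linarith [integral_abs_mollify_sub_le_of_approx hr hq hci, h r hr hrr₀]

end Mollification
section Tent

/-- The tent function of radius `η` centred at `x`. -/
def tent (x η t : ℝ) : ℝ := max 0 (1 - |t - x| / η)

variable {x η : ℝ}

lemma tent_nonneg (x η t : ℝ) : 0 ≤ tent x η t := le_max_left _ _

lemma tent_le_one (hη : 0 < η) (t : ℝ) : tent x η t ≤ 1 :=
  max_le zero_le_one (sub_le_self _ (by positivity))

lemma tent_self (x η : ℝ) : tent x η x = 1 := by simp [tent]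

lemma tent_eq_zero (hη : 0 < η) {t : ℝ} (h : η ≤ |t - x|) : tent x η t = 0 :=
  max_eq_left (sub_nonpos.2 ((one_le_div hη).2 h))

lemma lipschitzWith_tent (hη : 0 < η) : LipschitzWith (Real.toNNReal η⁻¹) (tent x η) := by
  refine (LipschitzWith.of_dist_le_mul fun s t => ?_).const_max 0
  rw [Real.coe_toNNReal _ (inv_nonneg.2 hη.le), Real.dist_eq, Real.dist_eq,
    show 1 - |s - x| / η - (1 - |t - x| / η) = η⁻¹ * (|t - x| - |s - x|) by ring, abs_mul,
    abs_of_pos (inv_pos.2 hη), abs_sub_comm s t, ← sub_sub_sub_cancel_right t s x]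
  exact mul_le_mul_of_nonneg_left (abs_abs_sub_abs_le _ _) (inv_nonneg.2 hη.le)

end Tent

section Domination

/-- Convolution with `k` is controlled, uniformly over test functions, by convolution with `K` and
the `L¹` norm. -/
def ConvDominated (k K : ℝ → ℝ) : Prop :=
  ∃ C : ℝ, 0 ≤ C ∧ ∀ q : ℝ → ℝ, Continuous q → HasCompactSupport q → ∀ M : ℝ,
    ∫ t, |q t| ≤ M → (∀ x, |(K ⋆ q) x| ≤ M) → ∀ x, |(k ⋆ q) x| ≤ C * M

/-- A bump at the origin of radius, mass and `K`-convolution at most `η`, on which convolution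
with `k` nevertheless takes the value `1`; such bumps are the obstruction to `ConvDominated`. -/
structure IsConcentratedBump (k K : ℝ → ℝ) (η : ℝ) (q : ℝ → ℝ) : Prop where
  continuous : Continuous q
  eq_zero_of_le : ∀ t, η ≤ |t| → q t = 0
  integral_abs_le : ∫ t, |q t| ≤ η
  abs_convolution_le : ∀ x, |(K ⋆ q) x| ≤ η
  convolution_zero_eq_one : (k ⋆ q) 0 = 1

variable {k K q : ℝ → ℝ} {Ck CK C M η x : ℝ}

lemma isConcentratedBump_rescale (hq : Continuous q) (hqx : ∀ t, η ≤ |t - x| → q t = 0)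
    (hM : ∫ t, |q t| ≤ M) (hKM : ∀ s, |(K ⋆ q) s| ≤ M) (hM0 : 0 ≤ M)
    (hlt : M < |(k ⋆ q) x| * η) (hη : 0 < η) :
    IsConcentratedBump k K η fun t => ((k ⋆ q) x)⁻¹ * q (t + x) := by
  have hc : 0 < |(k ⋆ q) x| := pos_of_mul_pos_left (hM0.trans_lt hlt) hη.le
  have h_scale : ∀ v, v ≤ M → |((k ⋆ q) x)⁻¹| * v ≤ η := fun v hv => by
    rw [abs_inv, inv_mul_le_iff₀ hc]
    exact hv.trans hlt.le
  refine ⟨by fun_prop, fun t ht => ?_, ?_, fun s => ?_, ?_⟩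
  · rw [hqx (t + x) (by rwa [add_sub_cancel_right]), mul_zero]
  · simp_rw [abs_mul, integral_const_mul]
    rw [integral_add_right_eq_self (fun t => |q t|) x]
    exact h_scale _ hM
  · rw [convolution_const_mul, convolution_comp_add_right, abs_mul]
    exact h_scale _ (hKM _)
  · rw [convolution_const_mul, convolution_comp_add_right, zero_add]
    exact inv_mul_cancel₀ (abs_pos.1 hc)

lemma abs_tent_mul_le (hη : 0 < η) (t u : ℝ) : |tent x η t * u| ≤ |u| := by
  rw [abs_mul, abs_of_nonneg (tent_nonneg x η t)]
  exact mul_le_of_le_one_left (abs_nonneg _) (tent_le_one hη t)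

lemma WeaklySingular.abs_convCommutator_tent_le (hk : WeaklySingular k Ck) (hη : 0 < η)
    (hq : Integrable q) (hM : ∫ t, |q t| ≤ M) (s : ℝ) :
    |convCommutator k (tent x η) q s| ≤ η⁻¹ * Ck * M := by
  have h := hk.abs_convCommutator_le (lipschitzWith_tent (x := x) hη) hq s
  rw [Real.coe_toNNReal _ (inv_nonneg.2 hη.le)] at h
  exact h.trans (mul_le_mul_of_nonneg_left hM (mul_nonneg (inv_nonneg.2 hη.le) hk.nonneg))

lemma WeaklySingular.abs_convolution_tent_mul_le (hK : WeaklySingular K CK) (hη : 0 < η)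
    (hq : Continuous q) (hqc : HasCompactSupport q) (hM : ∫ t, |q t| ≤ M)
    (hKM : ∀ s, |(K ⋆ q) s| ≤ M) (s : ℝ) :
    |(K ⋆ fun t => tent x η t * q t) s| ≤ (1 + η⁻¹ * CK) * M := by
  have hqi : Integrable q := hq.integrable_of_hasCompactSupport hqc
  rw [hK.convolution_mul_eq (lipschitzWith_tent hη) hqi
    (.inr (hK.convolvableAt_of_continuous hq hqc s)), add_mul, one_mul]
  exact (abs_add_le _ _).trans (add_le_add ((abs_tent_mul_le hη s _).trans (hKM s))
    (hK.abs_convCommutator_tent_le hη hqi hM s))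

lemma exists_isConcentratedBump (hk : WeaklySingular k Ck) (hK : WeaklySingular K CK)
    (h : ¬ ConvDominated k K) (hη : 0 < η) : ∃ q, IsConcentratedBump k K η q := by
  by_contra! h_none
  have hCk := hk.nonneg
  have hCK := hK.nonneg
  refine h ⟨(1 + η⁻¹ * CK) / η + η⁻¹ * Ck, by positivity, fun q hq hqc M hM hKM x => ?_⟩
  have hqi : Integrable q := hq.integrable_of_hasCompactSupport hqc
  have hM0 : 0 ≤ M := (integral_nonneg fun t => abs_nonneg _).trans hM
  set p : ℝ → ℝ := fun t => tent x η t * q t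
  have hp : Continuous p := (lipschitzWith_tent hη).continuous.mul hq
  have hpM : ∫ t, |p t| ≤ (1 + η⁻¹ * CK) * M :=
    calc ∫ t, |p t| ≤ ∫ t, |q t| :=
          integral_mono (hp.integrable_of_hasCompactSupport hqc.mul_left).abs hqi.abs
            fun t => abs_tent_mul_le hη t (q t)
      _ ≤ M := hM
      _ ≤ (1 + η⁻¹ * CK) * M := le_mul_of_one_le_left hM0 (le_add_of_nonneg_right (by positivity))
  have h_local : |(k ⋆ p) x| ≤ (1 + η⁻¹ * CK) * M / η := by
    by_contra! hlt
    exact h_none _ (isConcentratedBump_rescale hp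
      (fun t ht => mul_eq_zero_of_left (tent_eq_zero hη ht) _) hpM
      (hK.abs_convolution_tent_mul_le hη hq hqc hM hKM) (by positivity)
      ((div_lt_iff₀ hη).1 hlt) hη)
  have h_comm := hk.convolution_mul_eq (lipschitzWith_tent (x := x) hη) hqi
    (.inr (hk.convolvableAt_of_continuous hq hqc x))
  rw [tent_self, one_mul] at h_comm
  calc |(k ⋆ q) x| = |(k ⋆ p) x - convCommutator k (tent x η) q x| := by rw [h_comm]; ring_nf
    _ ≤ (1 + η⁻¹ * CK) * M / η + η⁻¹ * Ck * M :=
        (abs_sub _ _).trans (add_le_add h_local (hk.abs_convCommutator_tent_le hη hqi hM x))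
    _ = _ := by ring

lemma ConvDominated.exists_ae_bound (h : ConvDominated k K) (hk : Integrable k)
    (hK : Integrable K) : ∃ C : ℝ, 0 ≤ C ∧ ∀ q : ℝ → ℝ, Integrable q → HasCompactSupport q →
      ∀ M : ℝ, ∫ t, |q t| ≤ M → (∀ᵐ x, |(K ⋆ q) x| ≤ M) → ∀ᵐ x, |(k ⋆ q) x| ≤ C * M := by
  obtain ⟨C, hC0, hC⟩ := h
  refine ⟨C, hC0, fun q hq hqc M hM hKM => ?_⟩
  filter_upwards [ae_tendsto_mollify
    (hk.integrable_convolution (ContinuousLinearMap.mul ℝ ℝ) hq)] with x hx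
  refine le_of_tendsto hx.abs (.of_forall fun n => ?_)
  rw [← convolution_mollify _ hk hq]
  refine hC _ (continuous_mollify _ hq) (hasCompactSupport_mollify _ hqc) M
    ((integral_abs_mollify_le _ hq).trans hM) (fun s => ?_) x
  rw [convolution_mollify _ hK hq]
  exact abs_mollify_le _ hKM s

end Domination

section OneSidedAverages

/-- The mean of `k` over the oriented interval from `v` to `v + h`. -/
def intervalMean (k : ℝ → ℝ) (h v : ℝ) : ℝ := h⁻¹ * ∫ u in v..(v + h), k u

/-- The means of `|k|` over short intervals starting at `τ`, in the direction `σ = ±1`, are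
dominated by `|k τ|`; this holds for a power `s ^ (-e)` in the direction away from its
singularity. -/
def MeanDominated (σ : ℝ) (k : ℝ → ℝ) (R : ℝ) : Prop :=
  ∃ C, ∀ τ, |τ| ≤ R → ∀ ε ∈ Ioc (0 : ℝ) 1, intervalMean (fun u => |k u|) (σ * ε) τ ≤ C * |k τ|

variable {k q : ℝ → ℝ} {C R M σ h v x : ℝ}

lemma abs_intervalMean_le_intervalMean_abs (k : ℝ → ℝ) (h v : ℝ) :
    |intervalMean k h v| ≤ intervalMean (fun u => |k u|) h v := by
  unfold intervalMean
  rw [abs_mul, abs_inv]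
  rcases le_total 0 h with h0 | h0
  · rw [abs_of_nonneg h0]
    exact mul_le_mul_of_nonneg_left
      (intervalIntegral.abs_integral_le_integral_abs (by linarith)) (inv_nonneg.2 h0)
  · rw [abs_of_nonpos h0, inv_neg, intervalIntegral.integral_symm, abs_neg,
      intervalIntegral.integral_symm (v + h), neg_mul_comm]
    exact mul_le_mul_of_nonpos_left
      (neg_le_neg (intervalIntegral.abs_integral_le_integral_abs (by linarith))) (inv_nonpos.2 h0)

lemma abs_intervalMean_le (hh : h ≠ 0) (hM : ∀ᵐ u, |k u| ≤ M) : |intervalMean k h v| ≤ M := by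
  rw [intervalMean, abs_mul, abs_inv, inv_mul_le_iff₀ (abs_pos.2 hh), mul_comm]
  simpa using intervalIntegral.norm_integral_le_of_norm_le_const_ae (f := k) (C := M)
    (a := v) (b := v + h) (hM.mono fun u hu _ => hu)

lemma continuous_intervalMean (hk : Integrable k) (h : ℝ) : Continuous (intervalMean k h) := by
  have hki : ∀ p r, IntervalIntegrable k volume p r := fun p r => hk.intervalIntegrable
  have h_prim : Continuous fun v => ∫ u in (0 : ℝ)..v, k u :=
    intervalIntegral.continuous_primitive hki 0
  have h_eq : ∀ v, intervalMean k h v =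
      h⁻¹ * ((∫ u in (0 : ℝ)..(v + h), k u) - ∫ u in (0 : ℝ)..v, k u) := fun v => by
    rw [intervalIntegral.integral_interval_sub_left (hki _ _) (hki _ _), intervalMean]
  simp_rw [funext h_eq]
  exact continuous_const.mul ((h_prim.comp (by fun_prop)).sub h_prim)

lemma tendsto_intervalMean (hk : Integrable k) (hkm : Measurable k) (hkv : ContinuousAt k v) :
    Filter.Tendsto (fun h => intervalMean k h v) (nhdsWithin 0 {0}ᶜ) (nhds (k v)) := by
  have h_deriv := intervalIntegral.integral_hasDerivAt_right (a := v) (b := v) (f := k)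
    hk.intervalIntegrable hkm.stronglyMeasurable.stronglyMeasurableAtFilter hkv
  simpa [hasDerivAt_iff_tendsto_slope_zero, intervalMean] using h_deriv

lemma intervalMean_convolution (hk : Integrable k) (hq : Integrable q) (h x : ℝ) :
    (intervalMean k h ⋆ q) x = intervalMean (k ⋆ q) h x := by
  have h_shift : ∀ t, (∫ u in (x - t)..(x - t + h), k u) = ∫ u in x..(x + h), k (u - t) :=
    fun t => by
      rw [intervalIntegral.integral_comp_sub_right]
      congr 1
      ring
  have h_int : Integrable (fun p : ℝ × ℝ => k (p.1 - p.2) * q p.2)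
      ((volume.restrict (uIoc x (x + h))).prod volume) := by
    have h_prod : Integrable (fun p : ℝ × ℝ => k (p.1 - p.2) * q p.2) (volume.prod volume) :=
      (hq.convolution_integrand (ContinuousLinearMap.mul ℝ ℝ) hk).congr
        (.of_forall fun p => mul_comm _ _)
    exact h_prod.mono_measure (Measure.prod_mono Measure.restrict_le_self le_rfl)
  have h_swap := integral_integral_swap (f := fun u t => k (u - t) * q t) h_int
  unfold intervalMean
  simp_rw [convolution_eq_integral, h_shift,
    intervalIntegral.intervalIntegral_eq_integral_uIoc, smul_eq_mul]
  rw [h_swap, ← integral_const_mul, ← integral_const_mul]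
  refine integral_congr_ae (.of_forall fun t => ?_)
  simp only [integral_mul_const]
  ring

lemma tendsto_convolution_intervalMean (hk : WeaklySingular k C) (hσ : σ ≠ 0)
    (hdom : MeanDominated σ k R) (hq : Integrable q) (hqR : ∀ t, q t ≠ 0 → |x - t| ≤ R)
    (hx : ConvolvableAt k q x) :
    Filter.Tendsto (fun n : ℕ => (intervalMean k (σ * (1 / ((n : ℝ) + 1))) ⋆ q) x)
      Filter.atTop (nhds ((k ⋆ q) x)) := by
  obtain ⟨C₁, hC₁⟩ := hdom
  obtain ⟨Z, hZ, hkZ⟩ := hk.continuousAt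
  simp_rw [convolution_eq_integral]
  refine tendsto_integral_of_dominated_convergence (fun t => C₁ * |k (x - t) * q t|)
    (fun n => ?_) ((convolvableAt_iff.1 hx).norm.const_mul C₁)
    (fun n => .of_forall fun t => ?_) ?_
  · exact ((continuous_intervalMean hk.integrable _).comp
      (by fun_prop : Continuous fun t => x - t)).aestronglyMeasurable.mul hq.aestronglyMeasurable
  · rw [norm_mul, norm_eq_abs, norm_eq_abs, abs_mul (k _), ← mul_assoc]
    by_cases hqt : q t = 0
    · simp [hqt]
    · have h_unit : (1 : ℝ) / (n + 1) ∈ Ioc (0 : ℝ) 1 :=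
        ⟨Nat.one_div_pos_of_nat, (div_le_one (by positivity)).2 (by simp)⟩
      exact mul_le_mul_of_nonneg_right ((abs_intervalMean_le_intervalMean_abs _ _ _).trans
        (hC₁ (x - t) (hqR t hqt) _ h_unit)) (abs_nonneg _)
  · have h_step : Filter.Tendsto (fun n : ℕ => σ * (1 / ((n : ℝ) + 1))) Filter.atTop
        (nhdsWithin 0 {0}ᶜ) := by
      refine tendsto_nhdsWithin_iff.2 ⟨?_, .of_forall fun n => ?_⟩
      · simpa using (tendsto_one_div_add_atTop_nhds_zero_nat (𝕜 := ℝ)).const_mul σ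
      · exact mul_ne_zero hσ Nat.one_div_pos_of_nat.ne'
    have hZ_ae : ∀ᵐ t : ℝ, x - t ∉ Z :=
      (hZ.preimage (sub_right_injective (b := x))).ae_notMem volume
    filter_upwards [hZ_ae] with t ht
    exact ((tendsto_intervalMean hk.integrable hk.measurable (hkZ _ ht)).comp h_step).mul_const _

lemma MeanDominated.abs_convolution_le (hdom : MeanDominated σ k R) (hk : WeaklySingular k C)
    (hσ : σ ≠ 0) (hq : Integrable q) (hqR : ∀ t, q t ≠ 0 → |x - t| ≤ R)
    (hx : ConvolvableAt k q x) (hM : ∀ᵐ u, |(k ⋆ q) u| ≤ M) : |(k ⋆ q) x| ≤ M := by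
  refine le_of_tendsto (tendsto_convolution_intervalMean hk hσ hdom hq hqR hx).abs
    (.of_forall fun n => ?_)
  rw [intervalMean_convolution hk.integrable hq]
  exact abs_intervalMean_le (mul_ne_zero hσ Nat.one_div_pos_of_nat.ne') hM

end OneSidedAverages

section Series

lemma integrable_tsum_of_summable_integral_norm {X ι E : Type*} [MeasurableSpace X]
    {μ : Measure X} [NormedAddCommGroup E] [CompleteSpace E] [Countable ι] {u : ι → X → E}
    (hu : ∀ i, Integrable (u i) μ) (hs : Summable fun i => ∫ t, ‖u i t‖ ∂μ) :
    Integrable (fun t => ∑' i, u i t) μ ∧ ∫ t, ‖∑' i, u i t‖ ∂μ ≤ ∑' i, ∫ t, ‖u i t‖ ∂μ := by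
  have h_nonneg : ∀ i, 0 ≤ ∫ t, ‖u i t‖ ∂μ := fun i => integral_nonneg fun t => norm_nonneg _
  have h_total : ∫⁻ t, ∑' i, ‖u i t‖ₑ ∂μ = ENNReal.ofReal (∑' i, ∫ t, ‖u i t‖ ∂μ) := by
    rw [lintegral_tsum fun i => (hu i).aestronglyMeasurable.enorm,
      ENNReal.ofReal_tsum_of_nonneg h_nonneg hs]
    exact tsum_congr fun i => (ofReal_integral_norm_eq_lintegral_enorm (hu i)).symm
  have h_summable : ∀ᵐ t ∂μ, Summable fun i => u i t := by
    filter_upwards [ae_lt_top' (AEMeasurable.tsum fun i => (hu i).aestronglyMeasurable.enorm)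
      (h_total ▸ ENNReal.ofReal_ne_top)] with t ht
    exact .of_norm (NNReal.summable_coe.2 (ENNReal.tsum_coe_ne_top_iff_summable.1 ht.ne))
  have h_meas : AEStronglyMeasurable (fun t => ∑' i, u i t) μ :=
    aestronglyMeasurable_of_tendsto_ae (Filter.atTop : Filter (Finset ι))
      (fun s => Finset.aestronglyMeasurable_fun_sum s fun i _ => (hu i).aestronglyMeasurable)
      (h_summable.mono fun t ht => ht.hasSum)
  have h_le : ∫⁻ t, ‖∑' i, u i t‖ₑ ∂μ ≤ ENNReal.ofReal (∑' i, ∫ t, ‖u i t‖ ∂μ) :=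
    (lintegral_mono fun t => enorm_tsum_le_tsum_enorm).trans_eq h_total
  have h_int : Integrable (fun t => ∑' i, u i t) μ :=
    ⟨h_meas, h_le.trans_lt ENNReal.ofReal_lt_top⟩
  rw [← ofReal_integral_norm_eq_lintegral_enorm h_int] at h_le
  exact ⟨h_int, (ENNReal.ofReal_le_ofReal_iff (tsum_nonneg h_nonneg)).1 h_le⟩

lemma convolvableAt_tsum {ι : Type*} [Countable ι] {k : ℝ → ℝ} {u : ι → ℝ → ℝ} {x : ℝ}
    (hu : ∀ i, ConvolvableAt k (u i) x) (hs : Summable fun i => ∫ t, |k (x - t) * u i t|) :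
    ConvolvableAt k (fun t => ∑' i, u i t) x ∧
      HasSum (fun i => (k ⋆ u i) x) ((k ⋆ fun t => ∑' i, u i t) x) := by
  simp_rw [convolvableAt_iff, convolution_eq_integral, ← tsum_mul_left] at hu ⊢
  exact ⟨(integrable_tsum_of_summable_integral_norm hu hs).1,
    hasSum_integral_of_summable_integral_norm hu hs⟩

lemma exists_pos_summable_tsum_le (ι : Type*) [Countable ι] {ε : ℝ} (hε : 0 < ε) :
    ∃ e : ι → ℝ, (∀ i, 0 < e i) ∧ Summable e ∧ ∑' i, e i ≤ ε := by
  have := Encodable.ofCountable ι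
  obtain ⟨e, he, c, hc, hcε⟩ := posSumOfEncodable hε ι
  exact ⟨e, he, hc.summable, hc.tsum_eq.trans_le hcε⟩

end Series

section Boundary

/-- The signed distance to the boundary of `[a, b]`. -/
def boundaryDist (a b x : ℝ) : ℝ := min (x - a) (b - x)

variable {a b x : ℝ}

lemma boundaryDist_pos : 0 < boundaryDist a b x ↔ x ∈ Ioo a b := by simp [boundaryDist]

lemma lipschitzWith_boundaryDist (a b : ℝ) : LipschitzWith 1 (boundaryDist a b) := by
  have h_left : LipschitzWith 1 fun x : ℝ => x - a :=
    .of_dist_le_mul fun s t => by simp [Real.dist_eq]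
  have h_right : LipschitzWith 1 fun x : ℝ => b - x :=
    .of_dist_le_mul fun s t => by
      rw [Real.dist_eq, sub_sub_sub_cancel_left, abs_sub_comm, NNReal.coe_one, one_mul,
        Real.dist_eq]
  exact (max_self (1 : NNReal)) ▸ h_left.min h_right

lemma boundaryDist_sub_le (a b s t : ℝ) : boundaryDist a b s - boundaryDist a b t ≤ |s - t| := by
  have h := (lipschitzWith_boundaryDist a b).dist_le_mul s t
  rw [Real.dist_eq, NNReal.coe_one, one_mul] at h
  exact (le_abs_self _).trans h

lemma boundaryDist_le_abs_sub (hx : x ∉ Ioo a b) (t : ℝ) : boundaryDist a b t ≤ |x - t| := by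
  have h := boundaryDist_sub_le a b t x
  rw [abs_sub_comm] at h
  linarith [not_lt.1 (boundaryDist_pos.not.2 hx)]

/-- Functions supported in `(a, b)` whose integral against the inverse distance to the boundary is
at most `η`. Their convolutions with weakly singular kernels are small outside `(a, b)`. -/
structure BoundarySmall (a b η : ℝ) (q : ℝ → ℝ) : Prop where
  mem_Ioo : ∀ t, q t ≠ 0 → t ∈ Ioo a b
  integrable_div : Integrable fun t => q t / boundaryDist a b t
  integral_abs_div_le : ∫ t, |q t / boundaryDist a b t| ≤ η

namespace BoundarySmall

variable {k q q' : ℝ → ℝ} {C d η η' : ℝ}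

lemma integrable (hq : BoundarySmall a b η q) : Integrable q := by
  have h_bdd : ∀ t, ‖max 0 (min (boundaryDist a b t) (b - a))‖ ≤ |b - a| := fun t => by
    rw [norm_eq_abs, abs_of_nonneg (le_max_left _ _)]
    exact max_le (abs_nonneg _) ((min_le_right _ _).trans (le_abs_self _))
  refine (hq.integrable_div.mul_bdd (continuous_const.max ((lipschitzWith_boundaryDist a
    b).continuous.min continuous_const)).aestronglyMeasurable (.of_forall h_bdd)).congr
    (.of_forall fun t => ?_)
  by_cases hqt : q t = 0
  · simp [hqt]
  · have ht := hq.mem_Ioo t hqt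
    have h_le : boundaryDist a b t ≤ b - a := (min_le_left _ _).trans (by linarith [ht.2])
    have h_pos := boundaryDist_pos.2 ht
    simp only [min_eq_left h_le, max_eq_right h_pos.le]
    field_simp

lemma mono (hq : BoundarySmall a b η q) (h : η ≤ η') : BoundarySmall a b η' q :=
  { hq with integral_abs_div_le := hq.integral_abs_div_le.trans h }

lemma add (hq : BoundarySmall a b η q) (hq' : BoundarySmall a b η' q') :
    BoundarySmall a b (η + η') (q + q') where
  mem_Ioo t ht := by
    by_cases h : q t = 0
    · exact hq'.mem_Ioo t fun h' => ht (by simp [h, h'])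
    · exact hq.mem_Ioo t h
  integrable_div := by
    simp only [Pi.add_apply, add_div]
    exact hq.integrable_div.add hq'.integrable_div
  integral_abs_div_le := by
    simp only [Pi.add_apply, add_div]
    calc _ ≤ ∫ t, (|q t / boundaryDist a b t| + |q' t / boundaryDist a b t|) :=
          integral_mono (hq.integrable_div.add hq'.integrable_div).abs
            (hq.integrable_div.abs.add hq'.integrable_div.abs) fun t => abs_add_le _ _
      _ = _ := integral_add hq.integrable_div.abs hq'.integrable_div.abs
      _ ≤ η + η' := add_le_add hq.integral_abs_div_le hq'.integral_abs_div_le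

lemma tsum {ι : Type*} [Countable ι] {u : ι → ℝ → ℝ} {e : ι → ℝ}
    (hu : ∀ i, BoundarySmall a b (e i) (u i)) (he : Summable e) :
    BoundarySmall a b (∑' i, e i) fun t => ∑' i, u i t := by
  have h_summable : Summable fun i => ∫ t, ‖u i t / boundaryDist a b t‖ :=
    .of_nonneg_of_le (fun i => integral_nonneg fun t => norm_nonneg _)
      (fun i => (hu i).integral_abs_div_le) he
  have h_tsum := integrable_tsum_of_summable_integral_norm (fun i => (hu i).integrable_div)
    h_summable
  simp_rw [tsum_div_const] at h_tsum
  refine ⟨fun t ht => ?_, h_tsum.1,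
    h_tsum.2.trans (h_summable.tsum_le_tsum (fun i => (hu i).integral_abs_div_le) he)⟩
  obtain ⟨i, hi⟩ : ∃ i, u i t ≠ 0 := by
    by_contra! h
    simp [h] at ht
  exact (hu i).mem_Ioo t hi

lemma of_le_boundaryDist (hq : Integrable q) (hd : 0 < d)
    (h : ∀ t, q t ≠ 0 → d ≤ boundaryDist a b t) (hη : ∫ t, |q t| ≤ d * η) :
    BoundarySmall a b η q := by
  have h_le : ∀ t, |q t / boundaryDist a b t| ≤ d⁻¹ * |q t| := fun t => by
    by_cases hqt : q t = 0
    · simp [hqt]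
    · rw [abs_div, div_eq_inv_mul, abs_of_pos (hd.trans_le (h t hqt))]
      exact mul_le_mul_of_nonneg_right (inv_anti₀ hd (h t hqt)) (abs_nonneg _)
  have h_int : Integrable fun t => q t / boundaryDist a b t :=
    (hq.abs.const_mul d⁻¹).mono' (hq.aestronglyMeasurable.aemeasurable.div
      (lipschitzWith_boundaryDist a b).continuous.aemeasurable).aestronglyMeasurable
      (.of_forall h_le)
  refine ⟨fun t ht => boundaryDist_pos.1 (hd.trans_le (h t ht)), h_int, ?_⟩
  calc _ ≤ ∫ t, d⁻¹ * |q t| := integral_mono h_int.abs (hq.abs.const_mul _) h_le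
    _ = d⁻¹ * ∫ t, |q t| := integral_const_mul _ _
    _ ≤ η := (inv_mul_le_iff₀ hd).2 hη

lemma abs_kernel_mul_le (hq : BoundarySmall a b η q) (hk : WeaklySingular k C)
    (hx : x ∉ Ioo a b) (t : ℝ) : |k (x - t) * q t| ≤ C * |q t / boundaryDist a b t| := by
  rw [abs_mul, abs_div]
  by_cases hqt : q t = 0
  · simp [hqt]
  · have h_pos := boundaryDist_pos.2 (hq.mem_Ioo t hqt)
    rw [abs_of_pos h_pos, mul_div_left_comm, mul_comm]
    exact mul_le_mul_of_nonneg_left (hk.abs_le_div h_pos (boundaryDist_le_abs_sub hx t))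
      (abs_nonneg _)

lemma convolvableAt (hq : BoundarySmall a b η q) (hk : WeaklySingular k C) (hx : x ∉ Ioo a b) :
    ConvolvableAt k q x :=
  convolvableAt_iff.2 <| (hq.integrable_div.abs.const_mul C).mono'
    (hk.aestronglyMeasurable_kernel_mul hq.integrable x) (.of_forall (hq.abs_kernel_mul_le hk hx))

lemma integral_abs_kernel_mul_le (hq : BoundarySmall a b η q) (hk : WeaklySingular k C)
    (hx : x ∉ Ioo a b) : ∫ t, |k (x - t) * q t| ≤ C * η :=
  calc _ ≤ ∫ t, C * |q t / boundaryDist a b t| :=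
        integral_mono (convolvableAt_iff.1 (hq.convolvableAt hk hx)).abs
          (hq.integrable_div.abs.const_mul C) (hq.abs_kernel_mul_le hk hx)
    _ = C * ∫ t, |q t / boundaryDist a b t| := integral_const_mul _ _
    _ ≤ C * η := mul_le_mul_of_nonneg_left hq.integral_abs_div_le hk.nonneg

end BoundarySmall

end Boundary

section PartitionOfUnity

/-- A cutoff function, equal to `1` at distance at least `2 / n` from the boundary of `[a, b]` and
to `0` at distance at most `1 / n`. -/
def cutoff (a b : ℝ) (n : ℕ) (x : ℝ) : ℝ := max 0 (min 1 (n * boundaryDist a b x - 1))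

/-- The `n`-th member of the partition of unity of `(a, b)` associated with `cutoff`. -/
def unityPiece (a b : ℝ) (n : ℕ) (x : ℝ) : ℝ := cutoff a b (n + 1) x - cutoff a b n x

variable {a b x : ℝ} {n : ℕ} {k f : ℝ → ℝ} {C : ℝ}

lemma lipschitzWith_cutoff (n : ℕ) : LipschitzWith n (cutoff a b n) := by
  refine ((LipschitzWith.of_dist_le_mul fun s t => ?_).const_min 1).const_max 0
  have h := (lipschitzWith_boundaryDist a b).dist_le_mul s t
  rw [NNReal.coe_one, one_mul] at h
  rw [dist_sub_right, Real.dist_eq, ← mul_sub, abs_mul, Nat.abs_cast, NNReal.coe_natCast]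
  exact mul_le_mul_of_nonneg_left h (Nat.cast_nonneg n)

lemma cutoff_nonneg (n : ℕ) (x : ℝ) : 0 ≤ cutoff a b n x := le_max_left _ _

lemma cutoff_le_one (n : ℕ) (x : ℝ) : cutoff a b n x ≤ 1 :=
  max_le zero_le_one (min_le_left _ _)

lemma cutoff_eq_zero (h : n * boundaryDist a b x ≤ 1) : cutoff a b n x = 0 :=
  max_eq_left ((min_le_right _ _).trans (sub_nonpos.2 h))

lemma cutoff_eq_one (h : 2 ≤ n * boundaryDist a b x) : cutoff a b n x = 1 := by
  rw [cutoff, min_eq_left (by linarith), max_eq_right zero_le_one]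

lemma lipschitzWith_unityPiece (n : ℕ) :
    LipschitzWith ((n + 1 : ℕ) + n) (unityPiece a b n) :=
  (lipschitzWith_cutoff (n + 1)).sub (lipschitzWith_cutoff n)

lemma boundaryDist_lt_of_unityPiece_ne_zero (h : unityPiece a b n x ≠ 0) :
    1 / ((n : ℝ) + 1) < boundaryDist a b x ∧ n * boundaryDist a b x < 2 := by
  have hn : (0 : ℝ) ≤ n := Nat.cast_nonneg n
  constructor
  · rw [div_lt_iff₀ (by positivity)]
    by_contra! h_small
    refine h (sub_eq_zero.2 ((cutoff_eq_zero (by push_cast; linarith)).trans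
      (cutoff_eq_zero ?_).symm))
    rcases le_total 0 (boundaryDist a b x) with h0 | h0
    · linarith
    · exact (mul_nonpos_of_nonneg_of_nonpos hn h0).trans zero_le_one
  · by_contra! h_large
    have h0 : 0 < boundaryDist a b x := pos_of_mul_pos_right (two_pos.trans_le h_large) hn
    exact h (sub_eq_zero.2 ((cutoff_eq_one (by push_cast; linarith)).trans
      (cutoff_eq_one h_large).symm))

lemma mem_Ioo_of_unityPiece_ne_zero (h : unityPiece a b n x ≠ 0) : x ∈ Ioo a b :=
  boundaryDist_pos.1 (Nat.one_div_pos_of_nat.trans (boundaryDist_lt_of_unityPiece_ne_zero h).1)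

lemma unityPiece_eq_zero_of_le_abs (h : |a| + |b| ≤ |x|) : unityPiece a b n x = 0 := by
  by_contra hx
  obtain ⟨hax, hxb⟩ := mem_Ioo_of_unityPiece_ne_zero hx
  rcases le_total 0 x with h0 | h0
  · rw [abs_of_nonneg h0] at h
    linarith [le_abs_self b, abs_nonneg a]
  · rw [abs_of_nonpos h0] at h
    linarith [neg_abs_le a, abs_nonneg b]

lemma unityPiece_nonneg (n : ℕ) (x : ℝ) : 0 ≤ unityPiece a b n x := by
  by_cases h : unityPiece a b n x = 0
  · exact h.ge
  · have h0 := boundaryDist_pos.2 (mem_Ioo_of_unityPiece_ne_zero h)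
    refine sub_nonneg.2 (max_le_max le_rfl (min_le_min le_rfl (sub_le_sub_right ?_ 1)))
    exact mul_le_mul_of_nonneg_right (by simp) h0.le

lemma sum_unityPiece (N : ℕ) (x : ℝ) :
    ∑ n ∈ Finset.range N, unityPiece a b n x = cutoff a b N x := by
  unfold unityPiece
  rw [Finset.sum_range_sub (fun n => cutoff a b n x), cutoff_eq_zero (n := 0) (by simp), sub_zero]

lemma eventually_le_mul_boundaryDist (hx : x ∈ Ioo a b) (c : ℝ) :
    ∀ᶠ n : ℕ in Filter.atTop, c ≤ n * boundaryDist a b x :=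
  (tendsto_natCast_atTop_atTop.atTop_mul_const (boundaryDist_pos.2 hx)).eventually_ge_atTop c

lemma hasSum_unityPiece (hx : x ∈ Ioo a b) : HasSum (fun n => unityPiece a b n x) 1 := by
  rw [hasSum_iff_tendsto_nat_of_nonneg fun n => unityPiece_nonneg n x]
  simp_rw [sum_unityPiece]
  exact tendsto_const_nhds.congr'
    ((eventually_le_mul_boundaryDist hx 2).mono fun n hn => (cutoff_eq_one hn).symm)

lemma integrable_unityPiece_mul (hf : Integrable f) (n : ℕ) :
    Integrable fun t => unityPiece a b n t * f t := by
  refine hf.abs.mono' ((lipschitzWith_unityPiece n).continuous.aestronglyMeasurable.mul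
    hf.aestronglyMeasurable) (.of_forall fun t => ?_)
  rw [norm_eq_abs, abs_mul, abs_of_nonneg (unityPiece_nonneg n t)]
  exact mul_le_of_le_one_left (abs_nonneg _)
    ((sub_le_self _ (cutoff_nonneg n t)).trans (cutoff_le_one _ t))

lemma summable_integral_abs_unityPiece_mul (hf : Integrable f) :
    Summable fun n => ∫ t, |unityPiece a b n t * f t| := by
  refine summable_of_sum_range_le (c := ∫ t, |f t|)
    (fun n => integral_nonneg fun t => abs_nonneg _) fun N => ?_
  have hi : ∀ n ∈ Finset.range N, Integrable fun t => |unityPiece a b n t * f t| :=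
    fun n _ => (integrable_unityPiece_mul hf n).abs
  rw [← integral_finsetSum _ hi]
  refine integral_mono (integrable_finsetSum _ hi) hf.abs fun t => ?_
  simp_rw [abs_mul, abs_of_nonneg (unityPiece_nonneg _ t)]
  rw [← Finset.sum_mul, sum_unityPiece]
  exact mul_le_of_le_one_left (abs_nonneg _) (cutoff_le_one N t)

lemma boundaryDist_half_le_abs_sub {t c : ℝ} (ht : n * boundaryDist a b t ≤ c)
    (hx : 2 * c ≤ n * boundaryDist a b x) (hn : 0 < n) : boundaryDist a b x / 2 ≤ |x - t| := by
  have hn' : (0 : ℝ) < n := Nat.cast_pos.2 hn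
  have h_le : boundaryDist a b t ≤ boundaryDist a b x / 2 := le_of_mul_le_mul_left (by linarith) hn'
  linarith [boundaryDist_sub_le a b x t]

lemma WeaklySingular.convolvableAt_tsum_near_boundary (hk : WeaklySingular k C) {u : ℕ → ℝ → ℝ}
    (hu : ∀ n, Integrable (u n)) (hs : Summable fun n => ∫ t, |u n t|) {c : ℝ}
    (hc : ∀ n t, u n t ≠ 0 → n * boundaryDist a b t ≤ c) (hx : x ∈ Ioo a b)
    (huk : ∀ n, ConvolvableAt k (u n) x) :
    ConvolvableAt k (fun t => ∑' n, u n t) x ∧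
      HasSum (fun n => (k ⋆ u n) x) ((k ⋆ fun t => ∑' n, u n t) x) := by
  refine convolvableAt_tsum huk ?_
  have hd : 0 < boundaryDist a b x / 2 := half_pos (boundaryDist_pos.2 hx)
  obtain ⟨N, hN⟩ := Filter.eventually_atTop.1 (eventually_le_mul_boundaryDist hx (2 * c))
  rw [← summable_nat_add_iff (N + 1)] at hs ⊢
  refine .of_nonneg_of_le (fun n => integral_nonneg fun t => abs_nonneg _) (fun n => ?_)
    (hs.mul_left (C / (boundaryDist a b x / 2)))
  exact hk.integral_abs_kernel_mul_le_of_dist (hu _) hd fun t ht =>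
    boundaryDist_half_le_abs_sub (hc _ t ht) (hN _ (by omega)) (by omega)

lemma abs_cutoff_sub_one_le (n : ℕ) (x : ℝ) : |cutoff a b n x - 1| ≤ 1 :=
  abs_sub_le_iff.2 ⟨by linarith [cutoff_le_one (a := a) (b := b) n x],
    by linarith [cutoff_nonneg (a := a) (b := b) n x]⟩

lemma WeaklySingular.tendsto_convCommutator_cutoff (hk : WeaklySingular k C) (hf : Integrable f)
    (hf0 : ∀ t, f t ≠ 0 → t ∈ Ioo a b) (hx : x ∈ Ioo a b) :
    Filter.Tendsto (fun N : ℕ => convCommutator k (cutoff a b N) f x) Filter.atTop (nhds 0) := by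
  have hd : 0 < boundaryDist a b x / 2 := half_pos (boundaryDist_pos.2 hx)
  rw [← integral_zero ℝ ℝ (μ := volume)]
  refine tendsto_integral_filter_of_dominated_convergence
    (fun t => C / (boundaryDist a b x / 2) * |f t|)
    (.of_forall fun N => hk.aestronglyMeasurable_commutator_integrand (lipschitzWith_cutoff N) hf x)
    ?_ (hf.abs.const_mul _) (.of_forall fun t => ?_)
  · filter_upwards [eventually_le_mul_boundaryDist hx 4, Filter.eventually_gt_atTop 0]
      with N hN hN0
    refine .of_forall fun t => ?_
    rw [norm_mul, norm_eq_abs, norm_eq_abs, abs_mul, cutoff_eq_one (x := x) (by linarith)]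
    refine mul_le_mul_of_nonneg_right ?_ (abs_nonneg _)
    rcases le_total 2 (N * boundaryDist a b t) with ht | ht
    · simpa [cutoff_eq_one ht] using div_nonneg hk.nonneg hd.le
    · calc |cutoff a b N t - 1| * |k (x - t)| ≤ |k (x - t)| :=
            mul_le_of_le_one_left (abs_nonneg _) (abs_cutoff_sub_one_le N t)
        _ ≤ C / (boundaryDist a b x / 2) :=
            hk.abs_le_div hd (boundaryDist_half_le_abs_sub ht (by linarith) hN0)
  · refine tendsto_const_nhds.congr' ?_
    by_cases hft : f t = 0
    · simp [hft]
    · filter_upwards [eventually_le_mul_boundaryDist hx 2,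
        eventually_le_mul_boundaryDist (hf0 t hft) 2] with N hNx hNt
      simp [cutoff_eq_one hNx, cutoff_eq_one hNt]

lemma WeaklySingular.sum_convCommutator_unityPiece (hk : WeaklySingular k C) (hf : Integrable f)
    (N : ℕ) (x : ℝ) : ∑ n ∈ Finset.range N, convCommutator k (unityPiece a b n) f x =
      convCommutator k (cutoff a b N) f x := by
  unfold convCommutator
  rw [← integral_finsetSum _ fun n _ =>
    hk.integrable_commutator_integrand (lipschitzWith_unityPiece n) hf x]
  refine integral_congr_ae (.of_forall fun t => ?_)
  simp only [← sum_unityPiece, ← Finset.sum_sub_distrib, Finset.sum_mul]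

end PartitionOfUnity

section Regularization

/-- The parts `kp`, `km` of a convolution kernel, for which a bound of `kp ⋆ q` or `km ⋆ q` almost
everywhere extends to all points where the convolution exists. -/
structure KernelPair (kp km : ℝ → ℝ) (R : ℝ) : Prop where
  left : ∃ C, WeaklySingular kp C
  right : ∃ C, WeaklySingular km C
  left_mean : MeanDominated (-1) kp R
  right_mean : MeanDominated 1 km R

namespace KernelPair

variable {k kp km : ℝ → ℝ} {R : ℝ}

lemma weaklySingular (h : KernelPair kp km R) (hk : k ∈ ({kp, km} : Set (ℝ → ℝ))) :
    ∃ C, WeaklySingular k C := by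
  rcases hk with rfl | rfl
  exacts [h.left, h.right]

lemma weaklySingular_add (h : KernelPair kp km R) : ∃ C, WeaklySingular (kp + km) C := by
  obtain ⟨Cp, hp⟩ := h.left
  obtain ⟨Cm, hm⟩ := h.right
  exact ⟨Cp + Cm, hp.add hm⟩

lemma abs_convolution_le (h : KernelPair kp km R) (hk : k ∈ ({kp, km} : Set (ℝ → ℝ)))
    {q : ℝ → ℝ} {x M : ℝ} (hq : Integrable q) (hqR : ∀ t, q t ≠ 0 → |x - t| ≤ R)
    (hx : ConvolvableAt k q x) (hM : ∀ᵐ u, |(k ⋆ q) u| ≤ M) : |(k ⋆ q) x| ≤ M := by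
  obtain ⟨C, hC⟩ := h.weaklySingular hk
  rcases hk with rfl | rfl
  · exact h.left_mean.abs_convolution_le hC (by simp) hq hqR hx hM
  · exact h.right_mean.abs_convolution_le hC one_ne_zero hq hqR hx hM

lemma exists_ae_bound (h : KernelPair kp km R) (hdom : ConvDominated kp (kp + km)) :
    ∃ C, 1 ≤ C ∧ ∀ q, Integrable q → HasCompactSupport q → ∀ M, ∫ t, |q t| ≤ M →
      (∀ᵐ x, |((kp + km) ⋆ q) x| ≤ M) →
      ∀ k ∈ ({kp, km} : Set (ℝ → ℝ)), ∀ᵐ x, |(k ⋆ q) x| ≤ C * M := by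
  obtain ⟨Cp, hp⟩ := h.left
  obtain ⟨Cm, hm⟩ := h.right
  obtain ⟨C, hC0, hC⟩ := hdom.exists_ae_bound hp.integrable (hp.add hm).integrable
  refine ⟨C + 1, by linarith, fun q hq hqc M hqM hM k hk => ?_⟩
  have h_left := hC q hq hqc M hqM hM
  have hM0 : 0 ≤ M := (integral_nonneg fun t => abs_nonneg (q t)).trans hqM
  rcases hk with rfl | rfl
  · exact h_left.mono fun x hx => hx.trans (by linarith)
  · filter_upwards [hp.convolvableAt_ae hq, hm.convolvableAt_ae hq, h_left, hM]
      with x hxp hxm h_le h_sum_le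
    rw [hxp.add_distrib hxm] at h_sum_le
    calc |(k ⋆ q) x| = |(kp ⋆ q) x + (k ⋆ q) x - (kp ⋆ q) x| := by rw [add_sub_cancel_left]
      _ ≤ M + C * M := (abs_sub _ _).trans (add_le_add h_sum_le h_le)
      _ = (C + 1) * M := by ring

end KernelPair

/-- A continuous approximation `g` of `G`, with support within `r` of that of `G`, whose convolution
with `kp + km` is uniformly within `ε` of `Φ`. If the one-sided convolutions are controlled by the
full one, they are also within `ε` of those of `G`. -/
structure IsRegularization (kp km : ℝ → ℝ) (a b : ℝ) (G Φ : ℝ → ℝ) (ε r : ℝ) (g : ℝ → ℝ) :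
    Prop where
  continuous : Continuous g
  exists_near : ∀ x, g x ≠ 0 → ∃ t, |x - t| < r ∧ G t ≠ 0
  integral_abs_sub_le : ∫ t, |g t - G t| ≤ ε
  abs_convolution_sub_le : ∀ x, |((kp + km) ⋆ g) x - Φ x| ≤ ε
  abs_one_sided_le : ConvDominated kp (kp + km) → ∀ k ∈ ({kp, km} : Set (ℝ → ℝ)),
    ∀ x ∈ Ioo a b, ConvolvableAt k G x → |(k ⋆ (g - G)) x| ≤ ε

variable {k kp km G Φ : ℝ → ℝ} {a b ε r : ℝ}

lemma hasCompactSupport_of_mem_Ioo {q : ℝ → ℝ} (h : ∀ t, q t ≠ 0 → t ∈ Ioo a b) :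
    HasCompactSupport q :=
  .intro isCompact_Icc fun t ht => by
    by_contra hq
    exact ht (Ioo_subset_Icc_self (h t hq))

lemma mem_Ioo_of_mollify_sub_ne_zero (hG : ∀ t, G t ≠ 0 → t ∈ Ioo a b) (hr : 0 < r) (hr1 : r ≤ 1)
    {t : ℝ} (ht : (mollify r hr G - G) t ≠ 0) : t ∈ Ioo (a - 1) (b + 1) := by
  by_cases h : mollify r hr G t = 0
  · obtain ⟨hat, htb⟩ := hG t fun h' => ht (by simp [h, h'])
    exact ⟨by linarith, by linarith⟩
  · obtain ⟨s, hs, hGs⟩ := exists_of_mollify_ne_zero hr h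
    obtain ⟨has, hsb⟩ := hG s hGs
    obtain ⟨h_lt, h_gt⟩ := abs_lt.1 hs
    exact ⟨by linarith, by linarith⟩

lemma KernelPair.abs_convolution_mollify_sub_le (h : KernelPair kp km (b - a + 1))
    {δ C : ℝ} (hC : ∀ q, Integrable q → HasCompactSupport q → ∀ M, ∫ t, |q t| ≤ M →
      (∀ᵐ x, |((kp + km) ⋆ q) x| ≤ M) →
      ∀ k ∈ ({kp, km} : Set (ℝ → ℝ)), ∀ᵐ x, |(k ⋆ q) x| ≤ C * M)
    (hG : Integrable G) (hG0 : ∀ t, G t ≠ 0 → t ∈ Ioo a b)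
    (hGΦ : (kp + km) ⋆ G =ᵐ[volume] Φ) (hr : 0 < r) (hr1 : r ≤ 1)
    (h_int : ∫ t, |mollify r hr G t - G t| ≤ δ)
    (h_conv : ∀ x, |((kp + km) ⋆ mollify r hr G) x - Φ x| ≤ δ)
    (hk : k ∈ ({kp, km} : Set (ℝ → ℝ))) {x : ℝ} (hx : x ∈ Ioo a b) (hkG : ConvolvableAt k G x) :
    |(k ⋆ (mollify r hr G - G)) x| ≤ C * δ := by
  obtain ⟨CK, hK⟩ := h.weaklySingular_add
  obtain ⟨Ck, hk'⟩ := h.weaklySingular hk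
  have hg := continuous_mollify hr hG
  have hgc := hasCompactSupport_mollify hr (hasCompactSupport_of_mem_Ioo hG0)
  have h_supp : ∀ t, (mollify r hr G - G) t ≠ 0 → t ∈ Ioo (a - 1) (b + 1) := fun t =>
    mem_Ioo_of_mollify_sub_ne_zero hG0 hr hr1
  have hq : Integrable (mollify r hr G - G) := (integrable_mollify hr hG).sub hG
  have h_ae : ∀ᵐ u, |((kp + km) ⋆ (mollify r hr G - G)) u| ≤ δ := by
    filter_upwards [hK.convolvableAt_ae hG, hGΦ] with u hu hu_eq
    rw [(hK.convolvableAt_of_continuous hg hgc u).convolution_sub hu, hu_eq]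
    exact h_conv u
  refine h.abs_convolution_le hk hq (fun t ht => ?_)
    ((hk'.convolvableAt_of_continuous hg hgc x).sub hkG)
    (hC _ hq (hasCompactSupport_of_mem_Ioo h_supp) δ h_int h_ae k hk)
  obtain ⟨h_left, h_right⟩ := h_supp t ht
  exact abs_le.2 ⟨by linarith [hx.1], by linarith [hx.2]⟩

lemma KernelPair.exists_isRegularization (h : KernelPair kp km (b - a + 1))
    (hG : Integrable G) (hG0 : ∀ t, G t ≠ 0 → t ∈ Ioo a b) (hΦ : Continuous Φ)
    (hΦc : HasCompactSupport Φ) (hGΦ : (kp + km) ⋆ G =ᵐ[volume] Φ) (hε : 0 < ε) (hr : 0 < r) :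
    ∃ g, IsRegularization kp km a b G Φ ε r g := by
  obtain ⟨CK, hK⟩ := h.weaklySingular_add
  obtain ⟨C, hC1, hC⟩ : ∃ C, 1 ≤ C ∧ (ConvDominated kp (kp + km) → ∀ q, Integrable q →
      HasCompactSupport q → ∀ M, ∫ t, |q t| ≤ M → (∀ᵐ x, |((kp + km) ⋆ q) x| ≤ M) →
      ∀ k ∈ ({kp, km} : Set (ℝ → ℝ)), ∀ᵐ x, |(k ⋆ q) x| ≤ C * M) := by
    by_cases hdom : ConvDominated kp (kp + km)
    · obtain ⟨C, hC1, hC⟩ := h.exists_ae_bound hdom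
      exact ⟨C, hC1, fun _ => hC⟩
    · exact ⟨1, le_rfl, fun hdom' => absurd hdom' hdom⟩
  have hC0 : 0 < C := one_pos.trans_le hC1
  obtain ⟨r₁, hr₁, h_unif⟩ := exists_abs_mollify_sub_le hΦ hΦc (div_pos hε hC0)
  obtain ⟨r₂, hr₂, h_int⟩ := exists_integral_abs_mollify_sub_le hG (div_pos hε hC0)
  obtain ⟨ρ, hρ, hρr, hρ1, hρr₁, hρr₂⟩ : ∃ ρ > 0, ρ ≤ r ∧ ρ ≤ 1 ∧ ρ ≤ r₁ ∧ ρ ≤ r₂ :=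
    ⟨min (min r 1) (min r₁ r₂), by positivity, by simp, by simp, by simp, by simp⟩
  have h_le : ε / C ≤ ε := div_le_self hε.le hC1
  have h_conv : ∀ x, |((kp + km) ⋆ mollify ρ hρ G) x - Φ x| ≤ ε / C := fun x => by
    rw [convolution_mollify hρ hK.integrable hG, mollify_congr hρ hGΦ]
    exact h_unif ρ hρ hρr₁ x
  refine ⟨mollify ρ hρ G, continuous_mollify hρ hG, fun x hx => ?_,
    (h_int ρ hρ hρr₂).trans h_le, fun x => (h_conv x).trans h_le, fun hdom k hk x hx hkG => ?_⟩
  · obtain ⟨t, ht, hGt⟩ := exists_of_mollify_ne_zero hρ hx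
    exact ⟨t, ht.trans_le hρr, hGt⟩
  · exact (h.abs_convolution_mollify_sub_le (hC hdom) hG hG0 hGΦ hρ hρ1 (h_int ρ hρ hρr₂) h_conv
      hk hx hkG).trans_eq (mul_div_cancel₀ ε hC0.ne')

end Regularization

section Repair

/-- The function that `K ⋆ (unityPiece a b n * f)` agrees with almost everywhere when `K ⋆ f` agrees
with `φ` almost everywhere on `(a, b)`. -/
def pieceImage (K f φ : ℝ → ℝ) (a b : ℝ) (n : ℕ) (x : ℝ) : ℝ :=
  unityPiece a b n x * φ x + convCommutator K (unityPiece a b n) f x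

variable {k K kp km f φ : ℝ → ℝ} {a b x C : ℝ} {e : ℕ → ℝ} {g : ℕ → ℝ → ℝ}

lemma WeaklySingular.continuous_pieceImage (hK : WeaklySingular K C) (hf : Integrable f)
    (hφ : Continuous φ) (n : ℕ) : Continuous (pieceImage K f φ a b n) :=
  ((lipschitzWith_unityPiece n).continuous.mul hφ).add
    (hK.continuous_convCommutator (lipschitzWith_unityPiece n) hf)

lemma WeaklySingular.hasCompactSupport_pieceImage (hK : WeaklySingular K C) (n : ℕ) :
    HasCompactSupport (pieceImage K f φ a b n) :=
  (hasCompactSupport_of_forall_le_abs fun _ => unityPiece_eq_zero_of_le_abs).mul_right.add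
    (hK.hasCompactSupport_convCommutator fun _ => unityPiece_eq_zero_of_le_abs)

lemma WeaklySingular.convolution_unityPiece_mul_ae_eq (hK : WeaklySingular K C)
    (hf : Integrable f) (hφ : ∀ᵐ x, x ∈ Ioo a b → (K ⋆ f) x = φ x) (n : ℕ) :
    (K ⋆ fun t => unityPiece a b n t * f t) =ᵐ[volume] pieceImage K f φ a b n :=
  hK.convolution_mul_ae_eq (lipschitzWith_unityPiece n) hf <|
    hφ.mono fun _ hx h => hx (mem_Ioo_of_unityPiece_ne_zero h)

lemma WeaklySingular.tendsto_sum_pieceImage (hK : WeaklySingular K C) (hf : Integrable f)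
    (hf0 : ∀ t, f t ≠ 0 → t ∈ Ioo a b) (hx : x ∈ Ioo a b) :
    Filter.Tendsto (fun N => ∑ n ∈ Finset.range N, pieceImage K f φ a b n x) Filter.atTop
      (nhds (φ x)) := by
  simp only [pieceImage, Finset.sum_add_distrib, ← Finset.sum_mul, sum_unityPiece,
    hK.sum_convCommutator_unityPiece hf]
  have h_cutoff : Filter.Tendsto (fun N => cutoff a b N x * φ x) Filter.atTop (nhds (φ x)) := by
    refine tendsto_const_nhds.congr' ?_
    filter_upwards [eventually_le_mul_boundaryDist hx 2] with N hN
    rw [cutoff_eq_one hN, one_mul]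
  simpa only [add_zero] using h_cutoff.add (hK.tendsto_convCommutator_cutoff hf hf0 hx)

/-- A family of regularizations of the pieces `unityPiece a b n * f`, whose scale
`1 / (2 * (n + 1))` keeps their supports inside `(a, b)` and locally finite there. -/
structure RegularizedPieces (kp km f φ : ℝ → ℝ) (a b : ℝ) (e : ℕ → ℝ) (g : ℕ → ℝ → ℝ) :
    Prop where
  integrable : Integrable f
  mem_Ioo : ∀ t, f t ≠ 0 → t ∈ Ioo a b
  continuous : Continuous φ
  summable : Summable e
  piece : ∀ n : ℕ, IsRegularization kp km a b (fun t => unityPiece a b n t * f t)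
    (pieceImage (kp + km) f φ a b n) (e n / (2 * ((n : ℝ) + 1))) (1 / (2 * ((n : ℝ) + 1))) (g n)

/-- The sum of the errors made in regularizing the pieces `unityPiece a b n * f`. -/
def repair (f : ℝ → ℝ) (a b : ℝ) (g : ℕ → ℝ → ℝ) (t : ℝ) : ℝ :=
  ∑' n, (g n t - unityPiece a b n t * f t)

lemma KernelPair.exists_regularizedPieces (h : KernelPair kp km (b - a + 1))
    (hf : Integrable f) (hf0 : ∀ t, f t ≠ 0 → t ∈ Ioo a b) (hφ : Continuous φ)
    (hfφ : ∀ᵐ x, x ∈ Ioo a b → ((kp + km) ⋆ f) x = φ x) (he : ∀ n, 0 < e n) (hes : Summable e) :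
    ∃ g, RegularizedPieces kp km f φ a b e g := by
  obtain ⟨CK, hK⟩ := h.weaklySingular_add
  have h_piece := fun n : ℕ => h.exists_isRegularization (integrable_unityPiece_mul hf n)
    (fun t ht => hf0 t (right_ne_zero_of_mul ht)) (hK.continuous_pieceImage hf hφ n)
    (hK.hasCompactSupport_pieceImage n) (hK.convolution_unityPiece_mul_ae_eq hf hfφ n)
    (ε := e n / (2 * ((n : ℝ) + 1))) (r := 1 / (2 * ((n : ℝ) + 1)))
    (div_pos (he n) (by positivity)) (by positivity)
  choose g hg using h_piece
  exact ⟨g, hf, hf0, hφ, hes, hg⟩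

namespace RegularizedPieces

lemma error_nonneg (h : RegularizedPieces kp km f φ a b e g) (n : ℕ) : 0 ≤ e n := by
  have h_le := (integral_nonneg fun t => abs_nonneg (g n t - unityPiece a b n t * f t)).trans
    (h.piece n).integral_abs_sub_le
  rwa [le_div_iff₀ (by positivity), zero_mul] at h_le

lemma error_div_le (h : RegularizedPieces kp km f φ a b e g) (n : ℕ) :
    e n / (2 * ((n : ℝ) + 1)) ≤ e n :=
  div_le_self (h.error_nonneg n) (by linarith [Nat.cast_nonneg (α := ℝ) n])

lemma boundaryDist_lt (h : RegularizedPieces kp km f φ a b e g) (n : ℕ) {t : ℝ} (ht : g n t ≠ 0) :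
    1 / (2 * ((n : ℝ) + 1)) < boundaryDist a b t ∧ n * boundaryDist a b t < 3 := by
  obtain ⟨s, hts, hs⟩ := (h.piece n).exists_near t ht
  obtain ⟨h_lower, h_upper⟩ := boundaryDist_lt_of_unityPiece_ne_zero (left_ne_zero_of_mul hs)
  have h_half : 1 / ((n : ℝ) + 1) = 1 / (2 * ((n : ℝ) + 1)) + 1 / (2 * ((n : ℝ) + 1)) := by
    field_simp
    norm_num
  have h_mul : (n : ℝ) * (1 / (2 * ((n : ℝ) + 1))) ≤ 1 := by
    rw [mul_one_div, div_le_one (by positivity)]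
    linarith [Nat.cast_nonneg (α := ℝ) n]
  have h_dist := boundaryDist_sub_le a b t s
  have h_dist' := boundaryDist_sub_le a b s t
  rw [abs_sub_comm] at h_dist'
  have h_mul_dist : (n : ℝ) * (boundaryDist a b t - boundaryDist a b s) ≤
      n * (1 / (2 * ((n : ℝ) + 1))) := mul_le_mul_of_nonneg_left (by linarith) (Nat.cast_nonneg n)
  constructor <;> linarith

lemma boundaryDist_lt_of_sub (h : RegularizedPieces kp km f φ a b e g) (n : ℕ) {t : ℝ}
    (ht : g n t - unityPiece a b n t * f t ≠ 0) :
    1 / (2 * ((n : ℝ) + 1)) < boundaryDist a b t ∧ n * boundaryDist a b t < 3 := by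
  by_cases hg : g n t = 0
  · obtain ⟨h_lower, h_upper⟩ := boundaryDist_lt_of_unityPiece_ne_zero (a := a) (b := b) (n := n)
      (x := t) fun hψ => ht (by simp [hg, hψ])
    refine ⟨lt_of_le_of_lt ?_ h_lower, by linarith⟩
    exact one_div_le_one_div_of_le (by positivity) (by linarith [Nat.cast_nonneg (α := ℝ) n])
  · exact h.boundaryDist_lt n hg

lemma mem_Ioo_of_ne_zero (h : RegularizedPieces kp km f φ a b e g) (n : ℕ) {t : ℝ}
    (ht : g n t ≠ 0) : t ∈ Ioo a b :=
  boundaryDist_pos.1 ((by positivity : (0 : ℝ) < 1 / (2 * ((n : ℝ) + 1))).trans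
    (h.boundaryDist_lt n ht).1)

lemma hasCompactSupport_piece (h : RegularizedPieces kp km f φ a b e g) (n : ℕ) :
    HasCompactSupport (g n) :=
  hasCompactSupport_of_mem_Ioo fun _ => h.mem_Ioo_of_ne_zero n

lemma integrable_piece (h : RegularizedPieces kp km f φ a b e g) (n : ℕ) : Integrable (g n) :=
  (h.piece n).continuous.integrable_of_hasCompactSupport (h.hasCompactSupport_piece n)

lemma integrable_piece_sub (h : RegularizedPieces kp km f φ a b e g) (n : ℕ) :
    Integrable fun t => g n t - unityPiece a b n t * f t :=
  (h.integrable_piece n).sub (integrable_unityPiece_mul h.integrable n)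

lemma boundarySmall_piece_sub (h : RegularizedPieces kp km f φ a b e g) (n : ℕ) :
    BoundarySmall a b (e n) fun t => g n t - unityPiece a b n t * f t := by
  refine .of_le_boundaryDist (h.integrable_piece_sub n) (d := 1 / (2 * ((n : ℝ) + 1)))
    (by positivity) (fun t ht => (h.boundaryDist_lt_of_sub n ht).1.le) ?_
  rw [one_div_mul_eq_div]
  exact (h.piece n).integral_abs_sub_le

lemma boundarySmall_repair (h : RegularizedPieces kp km f φ a b e g) :
    BoundarySmall a b (∑' n, e n) (repair f a b g) :=
  .tsum h.boundarySmall_piece_sub h.summable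

lemma summable_integral_abs_piece_sub (h : RegularizedPieces kp km f φ a b e g) :
    Summable fun n => ∫ t, |g n t - unityPiece a b n t * f t| :=
  h.summable.of_nonneg_of_le (fun _ => integral_nonneg fun _ => abs_nonneg _)
    fun n => (h.piece n).integral_abs_sub_le.trans (h.error_div_le n)

lemma summable_integral_abs_piece (h : RegularizedPieces kp km f φ a b e g) :
    Summable fun n => ∫ t, |g n t| := by
  refine .of_nonneg_of_le (fun n => integral_nonneg fun t => abs_nonneg _) (fun n => ?_)
    (h.summable_integral_abs_piece_sub.add
      (summable_integral_abs_unityPiece_mul (a := a) (b := b) h.integrable))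
  have h_sub := (h.integrable_piece_sub n).abs
  have h_unity := (integrable_unityPiece_mul (a := a) (b := b) h.integrable n).abs
  rw [← integral_add h_sub h_unity]
  refine integral_mono (h.integrable_piece n).abs (h_sub.add h_unity) fun t => ?_
  simpa using abs_add_le (g n t - unityPiece a b n t * f t) (unityPiece a b n t * f t)

lemma summable_piece (h : RegularizedPieces kp km f φ a b e g) (ht : x ∈ Ioo a b) :
    Summable fun n => g n x := by
  obtain ⟨N, hN⟩ := Filter.eventually_atTop.1 (eventually_le_mul_boundaryDist ht 3)
  refine summable_of_ne_finset_zero (s := Finset.range N) fun n hn => ?_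
  by_contra hg
  linarith [(h.boundaryDist_lt n hg).2, hN n (by simpa using hn)]

lemma add_repair (h : RegularizedPieces kp km f φ a b e g) :
    f + repair f a b g = fun t => ∑' n, g n t := by
  ext t
  by_cases ht : t ∈ Ioo a b
  · have h_sum : HasSum (fun n => unityPiece a b n t * f t) (f t) := by
      simpa using (hasSum_unityPiece ht).mul_right (f t)
    rw [Pi.add_apply, repair, (h.summable_piece ht).tsum_sub h_sum.summable, h_sum.tsum_eq,
      add_sub_cancel]
  · have hf : f t = 0 := not_imp_comm.1 (h.mem_Ioo t) ht
    have hr : repair f a b g t = 0 := not_imp_comm.1 (h.boundarySmall_repair.mem_Ioo t) ht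
    have hg : ∀ n, g n t = 0 := fun n => not_imp_comm.1 (h.mem_Ioo_of_ne_zero n) ht
    simp [hf, hr, hg]

lemma convolvableAt_hasSum_add_repair (h : RegularizedPieces kp km f φ a b e g)
    (hk : WeaklySingular k C) (hx : x ∈ Ioo a b) :
    ConvolvableAt k (f + repair f a b g) x ∧
      HasSum (fun n => (k ⋆ g n) x) ((k ⋆ (f + repair f a b g)) x) := by
  rw [h.add_repair]
  exact hk.convolvableAt_tsum_near_boundary h.integrable_piece h.summable_integral_abs_piece
    (fun n t ht => (h.boundaryDist_lt n ht).2.le) hx fun n =>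
      hk.convolvableAt_of_continuous (h.piece n).continuous (h.hasCompactSupport_piece n) x

lemma abs_convolution_piece_sub_le (h : RegularizedPieces kp km f φ a b e g) (n : ℕ) (x : ℝ) :
    |((kp + km) ⋆ g n) x - pieceImage (kp + km) f φ a b n x| ≤ e n :=
  ((h.piece n).abs_convolution_sub_le x).trans (h.error_div_le n)

lemma continuous_tsum_convolution_sub (h : RegularizedPieces kp km f φ a b e g)
    (hK : WeaklySingular (kp + km) C) :
    Continuous fun x => ∑' n, (((kp + km) ⋆ g n) x - pieceImage (kp + km) f φ a b n x) :=
  continuous_tsum (fun n => (hK.continuous_convolution (h.piece n).continuous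
    (h.hasCompactSupport_piece n)).sub (hK.continuous_pieceImage h.integrable h.continuous n))
    h.summable h.abs_convolution_piece_sub_le

lemma convolution_add_repair (h : RegularizedPieces kp km f φ a b e g)
    (hK : WeaklySingular (kp + km) C) (hx : x ∈ Ioo a b) :
    ((kp + km) ⋆ (f + repair f a b g)) x =
      φ x + ∑' n, (((kp + km) ⋆ g n) x - pieceImage (kp + km) f φ a b n x) := by
  have h_error : Summable fun n => ((kp + km) ⋆ g n) x - pieceImage (kp + km) f φ a b n x :=
    .of_norm_bounded h.summable (h.abs_convolution_piece_sub_le · x)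
  have h_sum := ((h.convolvableAt_hasSum_add_repair hK hx).2.sub h_error.hasSum).tendsto_sum_nat
  simp only [sub_sub_cancel] at h_sum
  linarith [tendsto_nhds_unique h_sum (hK.tendsto_sum_pieceImage h.integrable h.mem_Ioo hx)]

lemma convolution_repair_of_notMem (h : RegularizedPieces kp km f φ a b e g)
    (hK : WeaklySingular (kp + km) C) (hx : x ∉ Ioo a b) :
    ((kp + km) ⋆ repair f a b g) x =
      ∑' n, (((kp + km) ⋆ g n) x - pieceImage (kp + km) f φ a b n x) := by
  have h_unity : ∀ n, unityPiece a b n x = 0 := fun n =>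
    not_imp_comm.1 mem_Ioo_of_unityPiece_ne_zero hx
  have h_piece : ∀ n, ((kp + km) ⋆ fun t => g n t - unityPiece a b n t * f t) x =
      ((kp + km) ⋆ g n) x - pieceImage (kp + km) f φ a b n x := fun n => by
    have h_zero := Or.inl (b := ConvolvableAt (kp + km) f x) (h_unity n)
    have h_sub := (hK.convolvableAt_of_continuous (h.piece n).continuous
      (h.hasCompactSupport_piece n) x).convolution_sub
      (hK.convolvableAt_mul (lipschitzWith_unityPiece n) h.integrable h_zero)
    rw [hK.convolution_mul_eq (lipschitzWith_unityPiece n) h.integrable h_zero] at h_sub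
    rw [pieceImage, h_unity, zero_mul, zero_add]
    rwa [h_unity, zero_mul, zero_add] at h_sub
  have h_summable : Summable fun n =>
      ∫ t, |(kp + km) (x - t) * (g n t - unityPiece a b n t * f t)| :=
    .of_nonneg_of_le (fun n => integral_nonneg fun t => abs_nonneg _)
      (fun n => (h.boundarySmall_piece_sub n).integral_abs_kernel_mul_le hK hx)
      (h.summable.mul_left C)
  simp_rw [← h_piece]
  exact (convolvableAt_tsum (fun n => (h.boundarySmall_piece_sub n).convolvableAt hK hx)
    h_summable).2.tsum_eq.symm

lemma abs_convolution_repair_le (h : RegularizedPieces kp km f φ a b e g)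
    (hdom : ConvDominated kp (kp + km)) (hk : WeaklySingular k C)
    (hk_mem : k ∈ ({kp, km} : Set (ℝ → ℝ))) (hx : x ∈ Ioo a b) (hkf : ConvolvableAt k f x) :
    |(k ⋆ repair f a b g) x| ≤ ∑' n, e n := by
  have h_unity : ∀ n, ConvolvableAt k (fun t => unityPiece a b n t * f t) x := fun n =>
    hk.convolvableAt_mul (lipschitzWith_unityPiece n) h.integrable (Or.inr hkf)
  have h_sum := (hk.convolvableAt_tsum_near_boundary h.integrable_piece_sub
    h.summable_integral_abs_piece_sub (fun n t ht => (h.boundaryDist_lt_of_sub n ht).2.le) hx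
    fun n => (hk.convolvableAt_of_continuous (h.piece n).continuous
      (h.hasCompactSupport_piece n) x).sub (h_unity n)).2
  rw [show k ⋆ repair f a b g = k ⋆ fun t => ∑' n, (g n t - unityPiece a b n t * f t) from rfl,
    ← h_sum.tsum_eq]
  exact tsum_of_norm_bounded (f := fun n => (k ⋆ fun t => g n t - unityPiece a b n t * f t) x)
    h.summable.hasSum fun n => ((h.piece n).abs_one_sided_le hdom k hk_mem x hx (h_unity n)).trans
      (h.error_div_le n)

end RegularizedPieces

end Repair

section Bumps

/-- Bumps `q i` near well separated centres `x i` of `(a, b)`, at scale `d i`, which `K ⋆ ·` barely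
sees whereas `k ⋆ q i` takes the prescribed value `τ i` at `x i`. -/
structure SeparatedBumps {ι : Type*} (k K : ℝ → ℝ) (a b : ℝ) (x d τ e : ι → ℝ) (q : ι → ℝ → ℝ) :
    Prop where
  scale_pos : ∀ i, 0 < d i
  four_mul_le : ∀ i j, i ≠ j → 4 * d i ≤ |x i - x j|
  two_mul_le : ∀ i, 2 * d i ≤ boundaryDist a b (x i)
  summable : Summable e
  continuous : ∀ i, Continuous (q i)
  abs_sub_lt : ∀ i t, q i t ≠ 0 → |t - x i| < d i
  integral_abs_le : ∀ i, ∫ t, |q i t| ≤ d i * e i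
  abs_convolution_le : ∀ i u, |(K ⋆ q i) u| ≤ e i
  convolution_eq : ∀ i, (k ⋆ q i) (x i) = τ i

variable {ι : Type*} {k k' K : ℝ → ℝ} {C C' CK a b : ℝ} {x d τ e : ι → ℝ} {q : ι → ℝ → ℝ}

lemma exists_scale {d e τ : ℝ} (hd : 0 < d) (he : 0 < e) :
    ∃ θ, 0 < θ ∧ θ ≤ d ∧ |τ| * θ ≤ e ∧ |τ| * θ ≤ d * e := by
  have h_le : ∀ {θ c : ℝ}, 0 < θ → θ ≤ c / (|τ| + 1) → |τ| * θ ≤ c := fun {θ c} hθ h => by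
    rw [le_div_iff₀ (by positivity)] at h
    linarith
  have h_pos : 0 < min d (min (e / (|τ| + 1)) (d * e / (|τ| + 1))) := by positivity
  exact ⟨_, h_pos, min_le_left _ _,
    h_le h_pos ((min_le_right _ _).trans (min_le_left _ _)),
    h_le h_pos ((min_le_right _ _).trans (min_le_right _ _))⟩

lemma exists_separatedBumps (hk : WeaklySingular k C) (hK : WeaklySingular K CK)
    (h : ¬ ConvDominated k K) (hd : ∀ i, 0 < d i)
    (hsep : ∀ i j, i ≠ j → 4 * d i ≤ |x i - x j|) (hbd : ∀ i, 2 * d i ≤ boundaryDist a b (x i))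
    (τ : ι → ℝ) (he : ∀ i, 0 < e i) (hes : Summable e) :
    ∃ q, SeparatedBumps k K a b x d τ e q := by
  choose θ hθ0 hθd hθe hθde using fun i => exists_scale (τ := τ i) (hd i) (he i)
  choose Q hQ using fun i => exists_isConcentratedBump hk hK h (hθ0 i)
  have h_conv : ∀ k i u,
      (k ⋆ fun t => τ i * Q i (t + -x i)) u = τ i * (k ⋆ Q i) (u - x i) := fun k i u => by
    rw [convolution_const_mul, convolution_comp_add_right, sub_eq_add_neg]
  refine ⟨fun i t => τ i * Q i (t + -x i), hd, hsep, hbd, hes,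
    fun i => continuous_const.mul ((hQ i).continuous.comp (continuous_id.add continuous_const)),
    fun i t ht => ?_, fun i => ?_, fun i u => ?_, fun i => ?_⟩
  · by_contra! hle
    exact right_ne_zero_of_mul ht ((hQ i).eq_zero_of_le _ ((hθd i).trans hle))
  · simp only [abs_mul]
    rw [integral_const_mul, integral_add_right_eq_self fun t => |Q i t|]
    exact (mul_le_mul_of_nonneg_left (hQ i).integral_abs_le (abs_nonneg _)).trans (hθde i)
  · rw [h_conv, abs_mul]
    exact (mul_le_mul_of_nonneg_left ((hQ i).abs_convolution_le _) (abs_nonneg _)).trans (hθe i)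
  · rw [h_conv, sub_self, (hQ i).convolution_zero_eq_one, mul_one]

namespace SeparatedBumps

lemma error_nonneg (h : SeparatedBumps k K a b x d τ e q) (i : ι) : 0 ≤ e i :=
  (abs_nonneg _).trans (h.abs_convolution_le i 0)

lemma scale_le_boundaryDist (h : SeparatedBumps k K a b x d τ e q) {i : ι} {t : ℝ}
    (ht : q i t ≠ 0) : d i ≤ boundaryDist a b t := by
  have h_dist := boundaryDist_sub_le a b (x i) t
  rw [abs_sub_comm] at h_dist
  linarith [h.abs_sub_lt i t ht, h.two_mul_le i]

lemma hasCompactSupport (h : SeparatedBumps k K a b x d τ e q) (i : ι) : HasCompactSupport (q i) :=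
  hasCompactSupport_of_mem_Ioo fun _ ht =>
    boundaryDist_pos.1 ((h.scale_pos i).trans_le (h.scale_le_boundaryDist ht))

lemma integrable (h : SeparatedBumps k K a b x d τ e q) (i : ι) : Integrable (q i) :=
  (h.continuous i).integrable_of_hasCompactSupport (h.hasCompactSupport i)

lemma boundarySmall_tsum [Countable ι] (h : SeparatedBumps k K a b x d τ e q) :
    BoundarySmall a b (∑' i, e i) fun t => ∑' i, q i t :=
  .tsum (fun i => .of_le_boundaryDist (h.integrable i) (h.scale_pos i)
    (fun _ => h.scale_le_boundaryDist) (h.integral_abs_le i)) h.summable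

lemma integral_abs_kernel_mul_le (h : SeparatedBumps k K a b x d τ e q)
    (hk' : WeaklySingular k' C') {i : ι} {u : ℝ}
    (hu : 2 * d i ≤ |u - x i|) : ∫ t, |k' (u - t) * q i t| ≤ C' * e i := by
  refine (hk'.integral_abs_kernel_mul_le_of_dist (h.integrable i) (h.scale_pos i)
    fun t ht => ?_).trans ?_
  · linarith [abs_sub_le u t (x i), h.abs_sub_lt i t ht]
  · calc C' / d i * ∫ t, |q i t| ≤ C' / d i * (d i * e i) :=
          mul_le_mul_of_nonneg_left (h.integral_abs_le i)
            (div_nonneg hk'.nonneg (h.scale_pos i).le)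
      _ = C' * e i := by
          rw [← mul_assoc, div_mul_cancel₀ _ (h.scale_pos i).ne']

lemma two_mul_le_abs_sub (h : SeparatedBumps k K a b x d τ e q) {i j : ι} (hij : i ≠ j) {u : ℝ}
    (hu : |u - x j| < 2 * d j) :
    2 * d i ≤ |u - x i| := by
  have h_ij := h.four_mul_le i j hij
  have h_ji := h.four_mul_le j i hij.symm
  rw [abs_sub_comm] at h_ji
  have h_triangle := abs_sub_le (x i) u (x j)
  rw [abs_sub_comm (x i) u] at h_triangle
  linarith

lemma summable_integral_abs_kernel_mul (h : SeparatedBumps k K a b x d τ e q)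
    (hk' : WeaklySingular k' C') (u : ℝ) :
    Summable fun i => ∫ t, |k' (u - t) * q i t| := by
  have h_near : {i | |u - x i| < 2 * d i}.Subsingleton := fun i hi j hj => by
    by_contra hij
    exact (h.two_mul_le_abs_sub hij hj).not_gt hi
  refine .of_norm_bounded_eventually (h.summable.mul_left C') ?_
  filter_upwards [h_near.finite.compl_mem_cofinite] with i hi
  rw [Real.norm_of_nonneg (integral_nonneg fun t => abs_nonneg _)]
  exact h.integral_abs_kernel_mul_le hk' (not_lt.1 hi)

lemma convolvableAt_hasSum [Countable ι]
    (h : SeparatedBumps k K a b x d τ e q) (hk' : WeaklySingular k' C') (u : ℝ) :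
    ConvolvableAt k' (fun t => ∑' i, q i t) u ∧
      HasSum (fun i => (k' ⋆ q i) u) ((k' ⋆ fun t => ∑' i, q i t) u) :=
  convolvableAt_tsum
    (fun i => hk'.convolvableAt_of_continuous (h.continuous i) (h.hasCompactSupport i) u)
    (h.summable_integral_abs_kernel_mul hk' u)

lemma continuous_convolution_tsum [Countable ι]
    (h : SeparatedBumps k K a b x d τ e q) (hK : WeaklySingular K CK) :
    Continuous (K ⋆ fun t => ∑' i, q i t) := by
  rw [funext fun u => (h.convolvableAt_hasSum hK u).2.tsum_eq.symm]
  exact continuous_tsum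
    (fun i => hK.continuous_convolution (h.continuous i) (h.hasCompactSupport i))
    h.summable h.abs_convolution_le

lemma abs_convolution_tsum_le [Countable ι]
    (h : SeparatedBumps k K a b x d τ e q) (hK : WeaklySingular K CK) (u : ℝ) :
    |(K ⋆ fun t => ∑' i, q i t) u| ≤ ∑' i, e i := by
  rw [← (h.convolvableAt_hasSum hK u).2.tsum_eq]
  exact tsum_of_norm_bounded (f := fun i => (K ⋆ q i) u) h.summable.hasSum
    (h.abs_convolution_le · u)

lemma abs_convolution_tsum_sub_le [Countable ι]
    (h : SeparatedBumps k K a b x d τ e q) (hk : WeaklySingular k C) (i : ι) :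
    |(k ⋆ fun t => ∑' i, q i t) (x i) - τ i| ≤ C * ∑' i, e i := by
  classical
  have h_sum := (h.convolvableAt_hasSum hk (x i)).2.sub (hasSum_ite_eq i (τ i))
  rw [← tsum_mul_left]
  refine h_sum.norm_le_of_bounded (h.summable.mul_left C).hasSum fun j => ?_
  rcases eq_or_ne j i with rfl | hj
  · rw [if_pos rfl, h.convolution_eq, sub_self, norm_zero]
    exact mul_nonneg hk.nonneg (h.error_nonneg j)
  · rw [if_neg hj, sub_zero, convolution_eq_integral]
    refine abs_integral_le_integral_abs.trans (h.integral_abs_kernel_mul_le hk ?_)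
    refine h.two_mul_le_abs_sub hj ?_
    simpa using h.scale_pos i

end SeparatedBumps

end Bumps

section Separation

lemma exists_seq_separated {X : Type*} [MetricSpace X] {S : Set X} (hS : S.Infinite) :
    ∃ x : ℕ → X, (∀ n, x n ∈ S) ∧ ∀ n, ∃ ρ > 0, ∀ m, m ≠ n → ρ ≤ dist (x n) (x m) := by
  have := hS.to_subtype
  obtain ⟨U, hUi, hUo, hUd⟩ := exists_seq_infinite_isOpen_pairwise_disjoint S
  choose u hu using fun n => (hUi n).nonempty
  refine ⟨fun n => u n, fun n => (u n).2, fun n => ?_⟩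
  obtain ⟨ρ, hρ, h_ball⟩ := Metric.isOpen_iff.1 (hUo n) (u n) (hu n)
  refine ⟨ρ, hρ, fun m hm => ?_⟩
  by_contra! h_lt
  rw [dist_comm] at h_lt
  exact Set.disjoint_left.1 (hUd hm) (hu m) (h_ball h_lt)

lemma exists_separated_of_finite {X : Type*} [MetricSpace X] {S : Set X} (hS : S.Finite) (i : S) :
    ∃ ρ > 0, ∀ j : S, j ≠ i → ρ ≤ dist (i : X) j := by
  have := hS.to_subtype
  obtain ⟨ρ, hρ, h_ball⟩ := Metric.isOpen_iff.1 (isOpen_discrete ({i} : Set S)) i rfl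
  refine ⟨ρ, hρ, fun j hj => ?_⟩
  by_contra! h_lt
  rw [dist_comm] at h_lt
  exact hj (h_ball h_lt)

end Separation

section Correction

/-- A small perturbation `q` of `f` after which both one-sided convolutions exist throughout
`(a, b)`, while their sum is `φ` up to the small continuous error `Ψ`. -/
structure Correction (kp km f φ : ℝ → ℝ) (a b η : ℝ) (q Ψ : ℝ → ℝ) : Prop
    extends BoundarySmall a b η q where
  continuous : Continuous Ψ
  abs_le : ∀ x, |Ψ x| ≤ η
  convolvableAt_add : ∀ k ∈ ({kp, km} : Set (ℝ → ℝ)), ∀ x ∈ Ioo a b, ConvolvableAt k (f + q) x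
  convolution_add_eq : ∀ x ∈ Ioo a b, ((kp + km) ⋆ (f + q)) x = φ x + Ψ x
  convolution_eq : ∀ x ∉ Ioo a b, ((kp + km) ⋆ q) x = Ψ x

/-- The points of `(a, b)` where exactly one of the two one-sided convolutions of `f` exists. -/
def oneSidedPoints (kp km f : ℝ → ℝ) (a b : ℝ) : Set ℝ :=
  {x ∈ Ioo a b | Xor (ConvolvableAt kp f x) (ConvolvableAt km f x)}

open Classical in
/-- At a point of `oneSidedPoints kp km f a b`, the value of that convolution of `q` whose kernel is
the one convolvable with `f`. -/
def oneSidedValue (kp km f q : ℝ → ℝ) (x : ℝ) : ℝ :=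
  if ConvolvableAt kp f x then (kp ⋆ q) x else (km ⋆ q) x

variable {kp km f φ r Ψ : ℝ → ℝ} {Cp Cm a b x η : ℝ} {ι : Type*} {c d τ e : ι → ℝ}
  {q : ι → ℝ → ℝ}

lemma Correction.mono {η' : ℝ} (h : Correction kp km f φ a b η r Ψ) (hη : η ≤ η') :
    Correction kp km f φ a b η' r Ψ where
  __ := h
  toBoundarySmall := h.toBoundarySmall.mono hη
  abs_le x := (h.abs_le x).trans hη

lemma Correction.add_bumps [Countable ι] (hr : Correction kp km f φ a b η r Ψ)
    (hp : WeaklySingular kp Cp) (hm : WeaklySingular km Cm)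
    (hq : SeparatedBumps kp (kp + km) a b c d τ e q) :
    Correction kp km f φ a b (η + ∑' i, e i) (r + fun t => ∑' i, q i t)
      (Ψ + (kp + km) ⋆ fun t => ∑' i, q i t) where
  toBoundarySmall := hr.toBoundarySmall.add hq.boundarySmall_tsum
  continuous := hr.continuous.add (hq.continuous_convolution_tsum (hp.add hm))
  abs_le x := (abs_add_le _ _).trans
    (add_le_add (hr.abs_le x) (hq.abs_convolution_tsum_le (hp.add hm) x))
  convolvableAt_add k hk x hx := by
    rw [← add_assoc]
    refine (hr.convolvableAt_add k hk x hx).add ?_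
    rcases hk with rfl | rfl
    exacts [(hq.convolvableAt_hasSum hp x).1, (hq.convolvableAt_hasSum hm x).1]
  convolution_add_eq x hx := by
    have h_conv := (hr.convolvableAt_add kp (.inl rfl) x hx).add_kernel
      (hr.convolvableAt_add km (.inr rfl) x hx)
    rw [← add_assoc, h_conv.distrib_add (hq.convolvableAt_hasSum (hp.add hm) x).1,
      hr.convolution_add_eq x hx, Pi.add_apply, add_assoc]
  convolution_eq x hx := by
    rw [(hr.toBoundarySmall.convolvableAt (hp.add hm) hx).distrib_add
      (hq.convolvableAt_hasSum (hp.add hm) x).1, hr.convolution_eq x hx, Pi.add_apply]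

open Classical in
/-- The value of `kp ⋆ ·` which the bumps must have at `x` for the one-sided value of `r` plus
bumps to be `±M` there, up to the smallness of the image of the bumps under `(kp + km) ⋆ ·`. -/
def bumpTarget (kp km f r : ℝ → ℝ) (x M : ℝ) : ℝ :=
  if ConvolvableAt kp f x then -(kp ⋆ r) x + M else (km ⋆ r) x + M

lemma Correction.abs_oneSidedValue_add_bumps_le [Countable ι] {M : ι → ℝ}
    (hr : Correction kp km f φ a b η r Ψ) (hp : WeaklySingular kp Cp) (hm : WeaklySingular km Cm)
    (hq : SeparatedBumps kp (kp + km) a b c d (fun i => bumpTarget kp km f r (c i) (M i)) e q)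
    {i : ι} (hi : c i ∈ oneSidedPoints kp km f a b) :
    |(|oneSidedValue kp km f (r + fun t => ∑' i, q i t) (c i)| - |M i|)| ≤
      (Cp + 1) * ∑' i, e i := by
  have h_centre := hq.abs_convolution_tsum_sub_le hp i
  have h_sum := hq.abs_convolution_tsum_le (hp.add hm) (c i)
  set s : ℝ → ℝ := fun t => ∑' i, q i t
  have hsp : ConvolvableAt kp s (c i) := (hq.convolvableAt_hasSum hp _).1
  have hsm : ConvolvableAt km s (c i) := (hq.convolvableAt_hasSum hm _).1
  obtain ⟨hi_mem, ⟨hpf, -⟩ | ⟨hmf, hpf⟩⟩ := hi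
  · have hrp : ConvolvableAt kp r (c i) := by
      simpa using (hr.convolvableAt_add kp (.inl rfl) _ hi_mem).sub hpf
    rw [bumpTarget, if_pos hpf] at h_centre
    rw [oneSidedValue, if_pos hpf, hrp.distrib_add hsp]
    refine (abs_abs_sub_abs_le _ _).trans ?_
    rw [show (kp ⋆ r) (c i) + (kp ⋆ s) (c i) - M i =
      (kp ⋆ s) (c i) - (-(kp ⋆ r) (c i) + M i) by ring]
    linarith [(abs_nonneg _).trans h_sum]
  · have hrm : ConvolvableAt km r (c i) := by
      simpa using (hr.convolvableAt_add km (.inr rfl) _ hi_mem).sub hmf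
    rw [bumpTarget, if_neg hpf] at h_centre
    rw [oneSidedValue, if_neg hpf, hrm.distrib_add hsm, ← abs_neg (M i)]
    refine (abs_abs_sub_abs_le _ _).trans ?_
    rw [hsp.add_distrib hsm] at h_sum
    rw [show (km ⋆ r) (c i) + (km ⋆ s) (c i) - -M i = (kp ⋆ s) (c i) + (km ⋆ s) (c i) -
      ((kp ⋆ s) (c i) - ((km ⋆ r) (c i) + M i)) by ring]
    exact (abs_sub _ _).trans (by linarith)

lemma Correction.exists_of_not_convDominated [Countable ι]
    (hr : Correction kp km f φ a b (η / 2) r Ψ) (hp : WeaklySingular kp Cp)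
    (hm : WeaklySingular km Cm) (h : ¬ ConvDominated kp (kp + km)) (hη : 0 < η)
    (hc : ∀ i, c i ∈ Ioo a b) (hsep : ∀ i, ∃ ρ > 0, ∀ j, j ≠ i → ρ ≤ dist (c i) (c j))
    (M : ι → ℝ) :
    ∃ q Ψ', Correction kp km f φ a b η q Ψ' ∧ ∀ i, c i ∈ oneSidedPoints kp km f a b →
      |(|oneSidedValue kp km f q (c i)| - |M i|)| ≤ η := by
  have hCp := hp.nonneg
  obtain ⟨e, he, hes, he_sum⟩ :=
    exists_pos_summable_tsum_le ι (ε := η / 2 / (Cp + 1)) (by positivity)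
  rw [le_div_iff₀' (by positivity)] at he_sum
  have he_nonneg : 0 ≤ Cp * ∑' i, e i := mul_nonneg hCp (tsum_nonneg fun i => (he i).le)
  choose ρ hρ0 hρ using hsep
  set d : ι → ℝ := fun i => min (ρ i / 4) (boundaryDist a b (c i) / 2)
  have hd_sep : ∀ i, d i ≤ ρ i / 4 := fun i => min_le_left _ _
  have hd_bd : ∀ i, d i ≤ boundaryDist a b (c i) / 2 := fun i => min_le_right _ _
  obtain ⟨q, hq⟩ := exists_separatedBumps hp (hp.add hm) h (d := d)
    (fun i => lt_min (by linarith [hρ0 i]) (half_pos (boundaryDist_pos.2 (hc i))))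
    (fun i j hij => by linarith [hρ i j hij.symm, hd_sep i, Real.dist_eq (c i) (c j)])
    (fun i => by linarith [hd_bd i]) (fun i => bumpTarget kp km f r (c i) (M i)) he hes
  exact ⟨_, _, (hr.add_bumps hp hm hq).mono (by linarith), fun i hi =>
    (hr.abs_oneSidedValue_add_bumps_le hp hm hq hi).trans (by linarith)⟩

lemma RegularizedPieces.correction {e : ℕ → ℝ} {g : ℕ → ℝ → ℝ}
    (h : RegularizedPieces kp km f φ a b e g) (hp : WeaklySingular kp Cp)
    (hm : WeaklySingular km Cm) :
    Correction kp km f φ a b (∑' n, e n) (repair f a b g)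
      fun x => ∑' n, (((kp + km) ⋆ g n) x - pieceImage (kp + km) f φ a b n x) where
  toBoundarySmall := h.boundarySmall_repair
  continuous := h.continuous_tsum_convolution_sub (hp.add hm)
  abs_le x := tsum_of_norm_bounded
    (f := fun n => ((kp + km) ⋆ g n) x - pieceImage (kp + km) f φ a b n x) h.summable.hasSum
    fun n => h.abs_convolution_piece_sub_le n x
  convolvableAt_add k hk x hx := by
    rcases hk with rfl | rfl
    exacts [(h.convolvableAt_hasSum_add_repair hp hx).1,
      (h.convolvableAt_hasSum_add_repair hm hx).1]
  convolution_add_eq x hx := h.convolution_add_repair (hp.add hm) hx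
  convolution_eq x hx := h.convolution_repair_of_notMem (hp.add hm) hx

lemma RegularizedPieces.abs_oneSidedValue_repair_le {e : ℕ → ℝ} {g : ℕ → ℝ → ℝ}
    (h : RegularizedPieces kp km f φ a b e g) (hp : WeaklySingular kp Cp)
    (hm : WeaklySingular km Cm) (hdom : ConvDominated kp (kp + km))
    (hx : x ∈ oneSidedPoints kp km f a b) :
    |oneSidedValue kp km f (repair f a b g) x| ≤ ∑' n, e n := by
  obtain ⟨hx_mem, ⟨hpf, -⟩ | ⟨hmf, hpf⟩⟩ := hx
  · rw [oneSidedValue, if_pos hpf]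
    exact h.abs_convolution_repair_le hdom hp (.inl rfl) hx_mem hpf
  · rw [oneSidedValue, if_neg hpf]
    exact h.abs_convolution_repair_le hdom hm (.inr rfl) hx_mem hmf

-- At the exceptional points Lean evaluates a divergent one-sided integral to `0`, so the perturbed
-- trajectory takes there the value of the convergent one alone. It must either stay small, or be
-- unbounded, in which case the supremum defining the norm has the junk value `0`.
lemma KernelPair.exists_correction (h : KernelPair kp km (b - a + 1))
    (hf : Integrable f) (hf0 : ∀ t, f t ≠ 0 → t ∈ Ioo a b) (hφ : Continuous φ)
    (hfφ : ∀ᵐ x, x ∈ Ioo a b → ((kp + km) ⋆ f) x = φ x) (hη : 0 < η) :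
    ∃ q Ψ, Correction kp km f φ a b η q Ψ ∧
      ((∀ M, ∃ x ∈ oneSidedPoints kp km f a b, M < |oneSidedValue kp km f q x|) ∨
        ∀ x ∈ oneSidedPoints kp km f a b, |oneSidedValue kp km f q x| ≤ η) := by
  obtain ⟨⟨Cp, hp⟩, ⟨Cm, hm⟩⟩ := h.left, h.right
  obtain ⟨e, he, hes, he_sum⟩ := exists_pos_summable_tsum_le ℕ (half_pos hη)
  obtain ⟨g, hg⟩ := h.exists_regularizedPieces hf hf0 hφ hfφ he hes
  have hr := (hg.correction hp hm).mono he_sum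
  by_cases hdom : ConvDominated kp (kp + km)
  · exact ⟨_, _, hr.mono (by linarith), Or.inr fun x hx =>
      (hg.abs_oneSidedValue_repair_le hp hm hdom hx).trans (by linarith)⟩
  by_cases hS : (oneSidedPoints kp km f a b).Finite
  · have := hS.to_subtype
    obtain ⟨q, Ψ, hq, hval⟩ := hr.exists_of_not_convDominated hp hm hdom hη
      (fun i : oneSidedPoints kp km f a b => i.2.1) (exists_separated_of_finite hS) fun _ => 0
    exact ⟨q, Ψ, hq, Or.inr fun x hx => by simpa using hval ⟨x, hx⟩ hx⟩
  · obtain ⟨c, hcS, hsep⟩ := exists_seq_separated hS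
    obtain ⟨q, Ψ, hq, hval⟩ := hr.exists_of_not_convDominated hp hm hdom hη
      (fun i => (hcS i).1) hsep fun n => (n : ℝ)
    refine ⟨q, Ψ, hq, Or.inl fun M => ?_⟩
    obtain ⟨n, hn⟩ := exists_nat_gt (M + η)
    have h_lower := (abs_le.1 (hval n (hcS n))).1
    rw [Nat.abs_cast] at h_lower
    exact ⟨c n, hcS n, by linarith⟩

end Correction

section Kernels

/-- The power kernel `s ^ (-e)` truncated to `(0, B)`. -/
def truncPow (e B : ℝ) : ℝ → ℝ := (Ioo 0 B).indicator fun s => s ^ (-e)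

variable {e B R σ a b α β γ x : ℝ} {k F : ℝ → ℝ}

lemma truncPow_nonneg (s : ℝ) : 0 ≤ truncPow e B s :=
  indicator_nonneg (fun _ hs => rpow_nonneg hs.1.le _) s

lemma weaklySingular_truncPow (he : e ∈ Ioo (0 : ℝ) 1) (hB : 0 < B) :
    WeaklySingular (truncPow e B) (B ^ (1 - e)) where
  measurable := (measurable_id.pow_const _).indicator measurableSet_Ioo
  integrable := by
    have h_int : IntegrableOn (fun s : ℝ => s ^ (-e)) (Ioc 0 B) :=
      (intervalIntegrable_iff_integrableOn_Ioc_of_le hB.le).1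
        (intervalIntegral.intervalIntegrable_rpow' (by linarith [he.2]))
    exact (integrable_indicator_iff measurableSet_Ioo).2 (h_int.mono_set Ioo_subset_Ioc_self)
  abs_id_mul_le s := by
    by_cases hs : s ∈ Ioo 0 B
    · rw [truncPow, indicator_of_mem hs, ← rpow_one_add' hs.1.le (by linarith [he.2]),
        ← sub_eq_add_neg, abs_of_nonneg (rpow_nonneg hs.1.le _)]
      exact rpow_le_rpow hs.1.le hs.2.le (by linarith [he.2])
    · rw [truncPow, indicator_of_notMem hs, mul_zero, abs_zero]
      positivity
  continuousAt := by
    refine ⟨{0, B}, (countable_singleton B).insert (0 : ℝ), fun s hs => ?_⟩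
    have h_frontier : s ∉ frontier (Ioo 0 B) := by rwa [frontier_Ioo hB]
    by_cases hs_mem : s ∈ Ioo 0 B
    · refine (continuousAt_rpow_const s (-e) (.inl hs_mem.1.ne')).congr ?_
      filter_upwards [Ioo_mem_nhds hs_mem.1 hs_mem.2] with u hu
      rw [truncPow, indicator_of_mem hu]
    · refine (continuousAt_const (y := (0 : ℝ))).congr ?_
      have hs_closure : s ∉ closure (Ioo 0 B) := fun h =>
        h_frontier ⟨h, by rwa [isOpen_Ioo.interior_eq]⟩
      filter_upwards [isClosed_closure.isOpen_compl.mem_nhds hs_closure] with u hu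
      exact (indicator_of_notMem (fun h => hu (subset_closure h)) _).symm
  eq_zero_of_le := ⟨B, fun s hs => indicator_of_notMem
    (fun h => (hs.trans_eq (abs_of_pos h.1)).not_gt h.2) _⟩

lemma integral_truncPow {w τ : ℝ} (hwτ : w ≤ τ) (hτB : τ < B) :
    ∫ u in w..τ, truncPow e B u = ∫ u in Ioc (max w 0) τ, u ^ (-e) := by
  rw [intervalIntegral.integral_of_le hwτ, truncPow, setIntegral_indicator measurableSet_Ioo]
  congr 2
  ext u
  simp only [mem_inter_iff, mem_Ioc, mem_Ioo, max_lt_iff]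
  exact ⟨fun h => ⟨⟨h.1.1, h.2.1⟩, h.1.2⟩, fun h => ⟨⟨h.1.1, h.2⟩, h.1.2, h.2.trans_lt hτB⟩⟩

-- The function `s ^ (-e)` is decreasing, so `v ^ (1 - e) ≥ v * τ ^ (-e)` for `0 ≤ v ≤ τ`.
lemma setIntegral_rpow_neg_le (he : e ∈ Ioo (0 : ℝ) 1) {v τ : ℝ} (hv : 0 ≤ v) (hvτ : v ≤ τ)
    (hτ : 0 < τ) : ∫ u in Ioc v τ, u ^ (-e) ≤ (τ - v) * τ ^ (-e) / (1 - e) := by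
  have he1 : 0 < 1 - e := by linarith [he.2]
  have h_mul : ∀ s : ℝ, 0 ≤ s → s ^ (-e + 1) = s * s ^ (-e) := fun s hs => by
    rw [add_comm, rpow_one_add' hs (by linarith)]
  have h_lower : v * τ ^ (-e) ≤ v * v ^ (-e) := by
    rcases hv.eq_or_lt with rfl | hv0
    · simp
    · exact mul_le_mul_of_nonneg_left
        (rpow_le_rpow_of_nonpos hv0 hvτ (by linarith [he.1])) hv
  rw [← intervalIntegral.integral_of_le hvτ, integral_rpow (.inl (by linarith)), h_mul τ hτ.le,
    h_mul v hv, neg_add_eq_sub, sub_mul]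
  gcongr

lemma meanDominated_truncPow (he : e ∈ Ioo (0 : ℝ) 1) (hR : R < B) :
    MeanDominated (-1) (truncPow e B) R := by
  have he1 : 0 < 1 - e := by linarith [he.2]
  refine ⟨1 / (1 - e), fun τ hτ ε hε => ?_⟩
  have hτB : τ < B := (le_abs_self τ).trans_lt (hτ.trans_lt hR)
  have h_le : τ + -1 * ε ≤ τ := by linarith [hε.1]
  have h_mean : intervalMean (fun u => |truncPow e B u|) (-1 * ε) τ =
      (∫ u in Ioc (max (τ + -1 * ε) 0) τ, u ^ (-e)) / ε := by
    simp_rw [intervalMean, abs_of_nonneg (truncPow_nonneg _)]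
    rw [intervalIntegral.integral_symm, integral_truncPow h_le hτB, neg_one_mul, inv_neg,
      neg_mul_neg, inv_mul_eq_div]
  rw [h_mean, div_le_iff₀ hε.1, abs_of_nonneg (truncPow_nonneg _)]
  rcases le_or_gt τ 0 with h0 | h0
  · rw [Ioc_eq_empty_of_le (h0.trans (le_max_right _ _)), setIntegral_empty]
    exact mul_nonneg (mul_nonneg (by positivity) (truncPow_nonneg τ)) hε.1.le
  · rw [truncPow, indicator_of_mem (show τ ∈ Ioo 0 B from ⟨h0, hτB⟩)]
    refine (setIntegral_rpow_neg_le he (le_max_right _ _) (max_le h_le h0.le) h0).trans ?_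
    calc (τ - max (τ + -1 * ε) 0) * τ ^ (-e) / (1 - e) ≤ ε * τ ^ (-e) / (1 - e) := by
          gcongr
          linarith [le_max_left (τ + -1 * ε) 0]
      _ = 1 / (1 - e) * τ ^ (-e) * ε := by ring

lemma MeanDominated.const_mul (h : MeanDominated σ k R) (c : ℝ) :
    MeanDominated σ (fun s => c * k s) R := by
  obtain ⟨C, hC⟩ := h
  refine ⟨C, fun τ hτ ε hε => ?_⟩
  simp only [intervalMean, abs_mul, intervalIntegral.integral_const_mul]
  rw [mul_left_comm, mul_left_comm C]
  exact mul_le_mul_of_nonneg_left (hC τ hτ ε hε) (abs_nonneg c)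

lemma MeanDominated.comp_neg (h : MeanDominated σ k R) :
    MeanDominated (-σ) (fun s => k (-s)) R := by
  obtain ⟨C, hC⟩ := h
  refine ⟨C, fun τ hτ ε hε => ?_⟩
  have h_bound := hC (-τ) (by rwa [abs_neg]) ε hε
  rw [intervalMean] at h_bound ⊢
  rw [intervalIntegral.integral_comp_neg fun u => |k u|, intervalIntegral.integral_symm, neg_mul,
    inv_neg, neg_mul_neg, neg_add, neg_neg]
  exact h_bound

/-- The kernel of the left part of the combined Caputo derivative. The truncation at `b - a + 3` is
immaterial on `[a, b]`. -/
def leftKernel (a b α γ s : ℝ) : ℝ := γ / Gamma (1 - α) * truncPow α (b - a + 3) s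

/-- The kernel of the right part of the combined Caputo derivative. -/
def rightKernel (a b β γ s : ℝ) : ℝ := -((1 - γ) / Gamma (1 - β)) * truncPow β (b - a + 3) (-s)

lemma kernelPair_leftKernel_rightKernel (hab : a < b) (hα : α ∈ Ioo (0 : ℝ) 1)
    (hβ : β ∈ Ioo (0 : ℝ) 1) (γ : ℝ) :
    KernelPair (leftKernel a b α γ) (rightKernel a b β γ) (b - a + 1) where
  left := ⟨_, (weaklySingular_truncPow hα (by linarith)).const_mul _⟩
  right := ⟨_, (weaklySingular_truncPow hβ (by linarith)).comp_neg.const_mul _⟩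
  left_mean := (meanDominated_truncPow hα (by linarith)).const_mul _
  right_mean := by
    have h_mean := (meanDominated_truncPow hβ (by linarith : b - a + 1 < b - a + 3)).comp_neg
    rw [neg_neg] at h_mean
    exact h_mean.const_mul _

lemma truncPow_mul_indicator_left (hx : x ∈ Icc a b) (hB : b - a ≤ B) (t : ℝ) :
    truncPow e B (x - t) * (Ioo a b).indicator F t =
      (Ioo a x).indicator (fun t => (x - t) ^ (-e) * F t) t := by
  by_cases ht : t ∈ Ioo a b
  · by_cases htx : t < x
    · have h_sub : x - t ∈ Ioo 0 B := ⟨sub_pos.2 htx, by linarith [ht.1, hx.2]⟩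
      have ht_left : t ∈ Ioo a x := ⟨ht.1, htx⟩
      rw [truncPow, indicator_of_mem h_sub, indicator_of_mem ht, indicator_of_mem ht_left]
    · rw [truncPow, indicator_of_notMem fun h => htx (sub_pos.1 h.1), zero_mul,
        indicator_of_notMem fun h => htx h.2]
  · rw [indicator_of_notMem ht, mul_zero,
      indicator_of_notMem fun h => ht ⟨h.1, h.2.trans_le hx.2⟩]

lemma truncPow_mul_indicator_right (hx : x ∈ Icc a b) (hB : b - a ≤ B) (t : ℝ) :
    truncPow e B (t - x) * (Ioo a b).indicator F t =
      (Ioo x b).indicator (fun t => (t - x) ^ (-e) * F t) t := by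
  by_cases ht : t ∈ Ioo a b
  · by_cases htx : x < t
    · have h_sub : t - x ∈ Ioo 0 B := ⟨sub_pos.2 htx, by linarith [ht.2, hx.1]⟩
      have ht_right : t ∈ Ioo x b := ⟨htx, ht.2⟩
      rw [truncPow, indicator_of_mem h_sub, indicator_of_mem ht, indicator_of_mem ht_right]
    · rw [truncPow, indicator_of_notMem fun h => htx (sub_pos.1 h.1), zero_mul,
        indicator_of_notMem fun h => htx h.1]
  · rw [indicator_of_notMem ht, mul_zero,
      indicator_of_notMem fun h => ht ⟨hx.1.trans_lt h.1, h.2⟩]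

/-- The combined Caputo derivative of a primitive of `F`. -/
def kernelCaputo (a b α β γ : ℝ) (F : ℝ → ℝ) (x : ℝ) : ℝ :=
  (leftKernel a b α γ ⋆ F) x + (rightKernel a b β γ ⋆ F) x

lemma leftKernel_convolution_indicator (hx : x ∈ Icc a b) :
    (leftKernel a b α γ ⋆ (Ioo a b).indicator F) x =
      γ * (1 / Gamma (1 - α) * ∫ t in a..x, (x - t) ^ (-α) * F t) := by
  simp_rw [convolution_eq_integral, leftKernel, mul_assoc,
    truncPow_mul_indicator_left hx (by linarith : b - a ≤ b - a + 3)]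
  rw [integral_const_mul, integral_indicator measurableSet_Ioo, ← integral_Ioc_eq_integral_Ioo,
    ← intervalIntegral.integral_of_le hx.1]
  ring

lemma rightKernel_convolution_indicator (hx : x ∈ Icc a b) :
    (rightKernel a b β γ ⋆ (Ioo a b).indicator F) x =
      (1 - γ) * (-(1 / Gamma (1 - β)) * ∫ t in x..b, (t - x) ^ (-β) * F t) := by
  simp_rw [convolution_eq_integral, rightKernel, neg_sub, mul_assoc,
    truncPow_mul_indicator_right hx (by linarith : b - a ≤ b - a + 3)]
  rw [integral_const_mul, integral_indicator measurableSet_Ioo, ← integral_Ioc_eq_integral_Ioo,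
    ← intervalIntegral.integral_of_le hx.2]
  ring

lemma combCaputo_eq_kernelCaputo {Y : ℝ → ℝ} (hx : x ∈ Icc a b) :
    combCaputo a b α β γ Y x = kernelCaputo a b α β γ ((Ioo a b).indicator (deriv Y)) x := by
  rw [combCaputo, kernelCaputo, caputoLeft, caputoRight, leftKernel_convolution_indicator hx,
    rightKernel_convolution_indicator hx]

end Kernels

section TestFunctions

variable {a b α β : ℝ} {v w p : ℝ → ℝ} {ι : Type*} [Fintype ι] {ω : ι → ℝ → ℝ}

/-- Continuous functions whose (topological) support lies in `(a, b)`. -/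
def testFn (a b : ℝ) : Submodule ℝ (ℝ → ℝ) where
  carrier := {p | Continuous p ∧ tsupport p ⊆ Ioo a b}
  add_mem' := fun {p q} hp hq =>
    ⟨hp.1.add hq.1, (tsupport_add p q).trans (union_subset hp.2 hq.2)⟩
  zero_mem' := ⟨continuous_zero, by simp [tsupport]⟩
  smul_mem' := fun c p hp =>
    ⟨hp.1.const_smul c, (closure_mono (Function.support_const_smul_subset c p)).trans hp.2⟩

lemma hasCompactSupport_of_mem_testFn (hp : p ∈ testFn a b) : HasCompactSupport p :=
  isCompact_Icc.of_isClosed_subset (isClosed_tsupport p) (hp.2.trans Ioo_subset_Icc_self)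

lemma integrable_mul_testFn (hw : ContinuousOn w (Ioo a b)) (hp : p ∈ testFn a b) :
    Integrable fun t => w t * p t := by
  have h_tsupport : tsupport (fun t => w t * p t) ⊆ Ioo a b := tsupport_mul_subset_right.trans hp.2
  exact ((hw.mul hp.1.continuousOn).continuous_of_tsupport_subset isOpen_Ioo
    h_tsupport).integrable_of_hasCompactSupport (hasCompactSupport_of_mem_testFn hp).mul_left

/-- Integration against `w` as a linear form on test functions. -/
def pairing (w : ℝ → ℝ) (hw : ContinuousOn w (Ioo a b)) : testFn a b →ₗ[ℝ] ℝ where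
  toFun p := ∫ t, w t * p.1 t
  map_add' p q := by
    simp only [Submodule.coe_add, Pi.add_apply, mul_add]
    exact integral_add (integrable_mul_testFn hw p.2) (integrable_mul_testFn hw q.2)
  map_smul' c p := by
    simp only [Submodule.coe_smul, Pi.smul_apply, smul_eq_mul, RingHom.id_apply, mul_left_comm _ c]
    exact integral_const_mul c _

lemma sum_smul_pairing (hω : ∀ j, ContinuousOn (ω j) (Ioo a b)) (c : ι → ℝ)
    (hc : ContinuousOn (fun t => ∑ j, c j * ω j t) (Ioo a b)) :
    ∑ j, c j • pairing (ω j) (hω j) = pairing (fun t => ∑ j, c j * ω j t) hc := by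
  ext p
  have h_int : ∀ j, Integrable fun t => c j * (ω j t * p.1 t) := fun j =>
    (integrable_mul_testFn (hω j) p.2).const_mul (c j)
  simp only [pairing, LinearMap.sum_apply, LinearMap.smul_apply, LinearMap.coe_mk, AddHom.coe_mk,
    smul_eq_mul, Finset.sum_mul, mul_assoc]
  simp_rw [integral_finsetSum _ fun j _ => h_int j, integral_const_mul]

lemma eqOn_of_pairing_eq (hv : ContinuousOn v (Ioo a b)) (hw : ContinuousOn w (Ioo a b))
    (h : pairing v hv = pairing w hw) : EqOn v w (Ioo a b) := by
  have h_ae := isOpen_Ioo.ae_eq_zero_of_integral_contDiff_smul_eq_zero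
    (hv.sub hw |>.locallyIntegrableOn (μ := volume) measurableSet_Ioo) fun g hg _ hgs => by
      have hg_mem : g ∈ testFn a b := ⟨hg.continuous, hgs⟩
      simp only [smul_eq_mul, Pi.sub_apply, mul_comm (g _), sub_mul]
      rw [integral_sub (integrable_mul_testFn hv hg_mem) (integrable_mul_testFn hw hg_mem)]
      exact sub_eq_zero.2 (LinearMap.congr_fun h ⟨g, hg_mem⟩)
  have h_ae_eq : v =ᵐ[volume.restrict (Ioo a b)] w :=
    (ae_restrict_iff' measurableSet_Ioo).2 (h_ae.mono fun t ht ht_mem => sub_eq_zero.1 (ht ht_mem))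
  exact Measure.eqOn_open_of_ae_eq h_ae_eq isOpen_Ioo hv hw

lemma continuousOn_sum_const_mul (hω : ∀ j, ContinuousOn (ω j) (Ioo a b)) (c : ι → ℝ) :
    ContinuousOn (fun t => ∑ j, c j * ω j t) (Ioo a b) :=
  continuousOn_finsetSum _ fun j _ => continuousOn_const.mul (hω j)

lemma exists_multiplier (hω : ∀ j, ContinuousOn (ω j) (Ioo a b)) (hw : ContinuousOn w (Ioo a b))
    (h : ∀ p ∈ testFn a b, (∀ j, ∫ t, ω j t * p t = 0) → ∫ t, w t * p t = 0) :
    ∃ c : ι → ℝ, ∀ t ∈ Ioo a b, w t = ∑ j, c j * ω j t := by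
  have h_mem : pairing w hw ∈ Submodule.span ℝ (range fun j => pairing (ω j) (hω j)) := by
    refine mem_span_of_iInf_ker_le_ker fun p hp => ?_
    simp only [Submodule.mem_iInf, LinearMap.mem_ker] at hp
    exact h p.1 p.2 hp
  obtain ⟨c, hc⟩ := (Submodule.mem_span_range_iff_exists_fun ℝ).1 h_mem
  rw [sum_smul_pairing hω c (continuousOn_sum_const_mul hω c)] at hc
  exact ⟨c, fun t ht => (eqOn_of_pairing_eq _ _ hc ht).symm⟩

lemma exists_dual_testFn [DecidableEq ι] (hω : ∀ j, ContinuousOn (ω j) (Ioo a b))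
    (h_indep : ∀ c : ι → ℝ, (∀ t ∈ Ioo a b, ∑ j, c j * ω j t = 0) → c = 0) :
    ∃ e : ι → ℝ → ℝ, (∀ j, e j ∈ testFn a b) ∧
      ∀ i j, ∫ t, ω i t * e j t = if i = j then 1 else 0 := by
  set B := Fintype.linearCombination ℝ fun j => pairing (ω j) (hω j) with hB
  have hB_inj : Function.Injective B := (injective_iff_map_eq_zero B).2 fun c hc => by
    rw [hB, Fintype.linearCombination_apply,
      sum_smul_pairing hω c (continuousOn_sum_const_mul hω c)] at hc
    have h_zero : pairing (fun _ : ℝ => (0 : ℝ)) (continuousOn_const (s := Ioo a b)) = 0 := by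
      ext p
      simp [pairing]
    exact h_indep c (eqOn_of_pairing_eq _ continuousOn_const (hc.trans h_zero.symm))
  choose e he using fun j => LinearMap.flip_surjective_iff₁.2 hB_inj (LinearMap.proj j)
  refine ⟨fun j => e j, fun j => (e j).2, fun i j => ?_⟩
  have h_eval := LinearMap.congr_fun (he j) (Pi.single i 1)
  rw [LinearMap.flip_apply, hB, Fintype.linearCombination_apply_single, one_smul,
    LinearMap.proj_apply, Pi.single_apply] at h_eval
  exact h_eval.trans (if_congr eq_comm rfl rfl)

end TestFunctions

section EndpointWeights

variable {a b α β c₁ c₂ : ℝ} {v w : ℝ → ℝ}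

lemma eq_zero_of_eq_add_rpow_neg (hab : a < b) (hβ : 0 < β)
    (hv : ContinuousWithinAt v (Icc a b) a)
    (h : ∀ t ∈ Ioo a b, v t = c₁ * (t - a) ^ (-β) + c₂ * (b - t) ^ (-α)) : c₁ = 0 := by
  have h_neBot : (nhdsWithin a (Ioo a b)).NeBot := by
    rw [nhdsWithin_Ioo_eq_nhdsGT hab]
    infer_instance
  have h_pow : Filter.Tendsto (fun t => (t - a) ^ β) (nhdsWithin a (Ioo a b)) (nhds 0) := by
    have h_cont : ContinuousAt (fun t : ℝ => (t - a) ^ β) a :=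
      ContinuousAt.rpow_const (by fun_prop) (.inr hβ.le)
    have h_lim := h_cont.tendsto
    rw [sub_self, zero_rpow hβ.ne'] at h_lim
    exact h_lim.mono_left nhdsWithin_le_nhds
  have h_right : Filter.Tendsto (fun t => (b - t) ^ (-α)) (nhdsWithin a (Ioo a b))
      (nhds ((b - a) ^ (-α))) := by
    have h_cont : ContinuousAt (fun t : ℝ => (b - t) ^ (-α)) a :=
      ContinuousAt.rpow_const (by fun_prop) (.inl (by linarith))
    exact h_cont.tendsto.mono_left nhdsWithin_le_nhds
  have h_eq : ∀ t ∈ Ioo a b,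
      (t - a) ^ β * v t = c₁ + (t - a) ^ β * (c₂ * (b - t) ^ (-α)) := fun t ht => by
    have h_cancel : (t - a) ^ β * (t - a) ^ (-β) = 1 := by
      rw [← rpow_add (sub_pos.2 ht.1), add_neg_cancel, rpow_zero]
    rw [h t ht]
    linear_combination c₁ * h_cancel
  have h_limit := tendsto_nhds_unique
    ((h_pow.mul (hv.tendsto.mono_left (nhdsWithin_mono a Ioo_subset_Icc_self))).congr'
      (Filter.eventually_of_mem self_mem_nhdsWithin h_eq))
    ((tendsto_const_nhds (x := c₁)).add (h_pow.mul (h_right.const_mul c₂)))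
  simpa only [zero_mul, add_zero, eq_comm] using h_limit

lemma eq_zero_and_eq_zero_of_eq_add_rpow_neg (hab : a < b) (hα : 0 < α) (hβ : 0 < β)
    (hv : ContinuousOn v (Icc a b))
    (h : ∀ t ∈ Ioo a b, v t = c₁ * (t - a) ^ (-β) + c₂ * (b - t) ^ (-α)) : c₁ = 0 ∧ c₂ = 0 := by
  refine ⟨eq_zero_of_eq_add_rpow_neg hab hβ (hv a (left_mem_Icc.2 hab.le)) h, ?_⟩
  have h_maps : MapsTo (fun t => a + b - t) (Icc a b) (Icc a b) := fun t ht =>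
    ⟨by linarith [ht.2], by linarith [ht.1]⟩
  refine eq_zero_of_eq_add_rpow_neg (v := fun t => v (a + b - t)) (c₂ := c₁) (α := β) hab hα
    ((hv.comp (by fun_prop) h_maps) a (left_mem_Icc.2 hab.le)) fun t ht => ?_
  have h_left : a + b - t - a = b - t := by ring
  have h_right : b - (a + b - t) = t - a := by ring
  rw [h (a + b - t) ⟨by linarith [ht.2], by linarith [ht.1]⟩, h_left, h_right, add_comm]

/-- The weights against which a correction of the derivative is integrated to obtain the change of
the endpoint values of the trajectory and of its one-sided Caputo derivatives at `a` and `b`. -/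
def endpointWeight (a b α β : ℝ) : Fin 3 → ℝ → ℝ :=
  ![fun _ => 1, fun t => (t - a) ^ (-β), fun t => (b - t) ^ (-α)]

lemma continuousOn_endpointWeight (j : Fin 3) :
    ContinuousOn (endpointWeight a b α β j) (Ioo a b) := by
  fin_cases j
  · exact continuousOn_const
  · exact ContinuousOn.rpow_const (by fun_prop) fun t ht => .inl (sub_pos.2 ht.1).ne'
  · exact ContinuousOn.rpow_const (by fun_prop) fun t ht => .inl (sub_pos.2 ht.2).ne'

lemma endpointWeight_coeff_eq_zero (hab : a < b) (hα : 0 < α) (hβ : 0 < β)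
    (hw : ContinuousOn w (Icc a b)) {c : Fin 3 → ℝ}
    (h : ∀ t ∈ Ioo a b, w t = ∑ j, c j * endpointWeight a b α β j t) : c 1 = 0 ∧ c 2 = 0 := by
  refine eq_zero_and_eq_zero_of_eq_add_rpow_neg (v := fun t => w t - c 0) hab hα hβ
    (hw.sub continuousOn_const) fun t ht => ?_
  rw [h t ht, Fin.sum_univ_three]
  simp only [endpointWeight, Matrix.cons_val]
  ring

lemma endpointWeight_linearIndependent (hab : a < b) (hα : 0 < α) (hβ : 0 < β) (c : Fin 3 → ℝ)
    (h : ∀ t ∈ Ioo a b, ∑ j, c j * endpointWeight a b α β j t = 0) : c = 0 := by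
  obtain ⟨h1, h2⟩ := endpointWeight_coeff_eq_zero (w := fun _ => 0) hab hα hβ continuousOn_const
    fun t ht => (h t ht).symm
  have h0 := h ((a + b) / 2) ⟨by linarith, by linarith⟩
  simp only [Fin.sum_univ_three, h1, h2, zero_mul, add_zero, endpointWeight, Matrix.cons_val,
    mul_one] at h0
  ext j
  fin_cases j
  exacts [h0, h1, h2]

lemma abs_rpow_neg_mul_le {e s B : ℝ} (he : e < 1) (hs : 0 < s) (hsB : s ≤ B) :
    |s ^ (-e)| * s ≤ B ^ (1 - e) := by
  rw [abs_of_pos (rpow_pos_of_pos hs _), mul_comm, ← rpow_one_add' hs.le (by linarith),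
    ← sub_eq_add_neg]
  exact rpow_le_rpow hs.le hsB (by linarith)

lemma exists_abs_endpointWeight_mul_boundaryDist_le (hab : a ≤ b) (hα : α < 1) (hβ : β < 1) :
    ∃ C, 0 ≤ C ∧
      ∀ j, ∀ t ∈ Ioo a b, |endpointWeight a b α β j t| * boundaryDist a b t ≤ C := by
  refine ⟨max (b - a) (max ((b - a) ^ (1 - β)) ((b - a) ^ (1 - α))),
    le_max_of_le_left (sub_nonneg.2 hab), fun j t ht => ?_⟩
  have h_left : boundaryDist a b t ≤ t - a := min_le_left _ _
  have h_right : boundaryDist a b t ≤ b - t := min_le_right _ _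
  fin_cases j
  · refine le_trans ?_ (le_max_left _ _)
    change |(1 : ℝ)| * boundaryDist a b t ≤ b - a
    rw [abs_one, one_mul]
    linarith [ht.2]
  · refine le_trans ?_ ((le_max_left _ _).trans (le_max_right _ _))
    exact (mul_le_mul_of_nonneg_left h_left (abs_nonneg _)).trans
      (abs_rpow_neg_mul_le hβ (sub_pos.2 ht.1) (by linarith [ht.2]))
  · refine le_trans ?_ ((le_max_right _ _).trans (le_max_right _ _))
    exact (mul_le_mul_of_nonneg_left h_right (abs_nonneg _)).trans
      (abs_rpow_neg_mul_le hα (sub_pos.2 ht.2) (by linarith [ht.1]))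

end EndpointWeights

section CorrectedPerturbation

variable {k kp km f q r φ Ψ : ℝ → ℝ} {a b x η P Cp Cm : ℝ}

lemma convolution_eq_zero_of_not_convolvableAt (h : ¬ ConvolvableAt k f x) : (k ⋆ f) x = 0 :=
  integral_undef h

lemma convolution_add_of_convolution_eq_zero (hq : ConvolvableAt k q x) (h0 : (k ⋆ q) x = 0) :
    (k ⋆ (f + q)) x = (k ⋆ f) x := by
  by_cases hf : ConvolvableAt k f x
  · rw [hf.distrib_add hq, h0, add_zero]
  · have h_sum : ¬ ConvolvableAt k (f + q) x := fun h => hf (add_sub_cancel_right f q ▸ h.sub hq)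
    rw [convolution_eq_zero_of_not_convolvableAt hf,
      convolution_eq_zero_of_not_convolvableAt h_sum]

lemma convolution_add_eq_zero_of_not_convolvableAt (hfq : ConvolvableAt k (f + q) x)
    (hr : ConvolvableAt k r x) (hf : ¬ ConvolvableAt k f x) : (k ⋆ (q + r)) x = 0 := by
  refine convolution_eq_zero_of_not_convolvableAt fun h => hf ?_
  have h_diff := (hfq.add hr).sub h
  rwa [add_assoc, add_sub_cancel_right] at h_diff

lemma abs_convolution_le_of_abs_le (hk : Integrable k) (hP : ∀ t, |r t| ≤ P) (x : ℝ) :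
    |(k ⋆ r) x| ≤ (∫ s, |k s|) * P := by
  rw [← norm_eq_abs, convolution_mul_comm, convolution_eq_integral, ← integral_mul_const]
  refine norm_integral_le_of_norm_le (hk.abs.mul_const P) (.of_forall fun s => ?_)
  rw [norm_mul, mul_comm]
  exact mul_le_mul_of_nonneg_left (hP _) (abs_nonneg _)

lemma abs_convolution_add_convolution_le (hp : Integrable kp) (hm : Integrable km)
    (hP : ∀ t, |r t| ≤ P) (x : ℝ) :
    |(kp ⋆ r) x + (km ⋆ r) x| ≤ ((∫ s, |kp s|) + ∫ s, |km s|) * P := by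
  rw [add_mul]
  exact (abs_add_le _ _).trans (add_le_add (abs_convolution_le_of_abs_le hp hP x)
    (abs_convolution_le_of_abs_le hm hP x))

lemma WeaklySingular.convolvableAt_testFn (hk : WeaklySingular k Cp) (hr : r ∈ testFn a b)
    (x : ℝ) : ConvolvableAt k r x :=
  hk.convolvableAt_of_continuous hr.1 (hasCompactSupport_of_mem_testFn hr) x

namespace Correction

lemma convolution_add_testFn (hq : Correction kp km f φ a b η q Ψ) (hp : WeaklySingular kp Cp)
    (hm : WeaklySingular km Cm) (hr : r ∈ testFn a b)
    (hfφ : ∀ x ∈ Icc a b, (kp ⋆ f) x + (km ⋆ f) x = φ x)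
    (h_end : ∀ k ∈ ({kp, km} : Set (ℝ → ℝ)), ∀ x ∈ ({a, b} : Set ℝ), (k ⋆ (q + r)) x = 0)
    (hx : x ∈ Icc a b) :
    (kp ⋆ (f + (q + r))) x + (km ⋆ (f + (q + r))) x =
      φ x + Ψ x + ((kp ⋆ r) x + (km ⋆ r) x) := by
  have hpr := hp.convolvableAt_testFn hr x
  have hmr := hm.convolvableAt_testFn hr x
  by_cases hxo : x ∈ Ioo a b
  · have hpf := hq.convolvableAt_add kp (.inl rfl) x hxo
    have hmf := hq.convolvableAt_add km (.inr rfl) x hxo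
    have h_eq := hq.convolution_add_eq x hxo
    rw [hpf.add_distrib hmf] at h_eq
    rw [← add_assoc f, hpf.distrib_add hpr, hmf.distrib_add hmr, ← h_eq]
    ring
  · have hx_end : x ∈ ({a, b} : Set ℝ) := by
      have h_cases := eq_endpoints_or_mem_Ioo_of_mem_Icc hx
      tauto
    have hpq := hq.convolvableAt hp hxo
    have hmq := hq.convolvableAt hm hxo
    have hp0 := h_end kp (.inl rfl) x hx_end
    have hm0 := h_end km (.inr rfl) x hx_end
    rw [convolution_add_of_convolution_eq_zero (hpq.add hpr) hp0,
      convolution_add_of_convolution_eq_zero (hmq.add hmr) hm0, hfφ x hx,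
      ← hq.convolution_eq x hxo, hpq.add_distrib hmq]
    rw [hpq.distrib_add hpr] at hp0
    rw [hmq.distrib_add hmr] at hm0
    linarith

lemma abs_convolution_add_le_of_notMem (hq : Correction kp km f φ a b η q Ψ)
    (hp : WeaklySingular kp Cp) (hm : WeaklySingular km Cm) (hr : r ∈ testFn a b)
    (hfφ : ∀ x ∈ Icc a b, (kp ⋆ f) x + (km ⋆ f) x = φ x)
    (h_end : ∀ k ∈ ({kp, km} : Set (ℝ → ℝ)), ∀ x ∈ ({a, b} : Set ℝ), (k ⋆ (q + r)) x = 0)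
    (hx : x ∈ Icc a b) (hx' : x ∉ oneSidedPoints kp km f a b) :
    |(kp ⋆ (q + r)) x + (km ⋆ (q + r)) x| ≤ |(kp ⋆ r) x + (km ⋆ r) x| + η := by
  have hη : 0 ≤ η := (abs_nonneg _).trans (hq.abs_le x)
  have hpr := hp.convolvableAt_testFn hr x
  have hmr := hm.convolvableAt_testFn hr x
  rcases eq_endpoints_or_mem_Ioo_of_mem_Icc hx with rfl | rfl | hxo
  · rw [h_end kp (.inl rfl) x (.inl rfl), h_end km (.inr rfl) x (.inl rfl), add_zero, abs_zero]
    positivity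
  · rw [h_end kp (.inl rfl) x (.inr rfl), h_end km (.inr rfl) x (.inr rfl), add_zero, abs_zero]
    positivity
  have hpf := hq.convolvableAt_add kp (.inl rfl) x hxo
  have hmf := hq.convolvableAt_add km (.inr rfl) x hxo
  have h_iff : ConvolvableAt kp f x ↔ ConvolvableAt km f x := (not_xor _ _).1 fun h => hx' ⟨hxo, h⟩
  by_cases h : ConvolvableAt kp f x
  · have h_eq := hq.convolution_add_testFn hp hm hr hfφ h_end hx
    have hpq : ConvolvableAt kp q x := by simpa using hpf.sub h
    have hmq : ConvolvableAt km q x := by simpa using hmf.sub (h_iff.1 h)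
    rw [h.distrib_add (hpq.add hpr), (h_iff.1 h).distrib_add (hmq.add hmr), ← hfφ x hx] at h_eq
    calc |(kp ⋆ (q + r)) x + (km ⋆ (q + r)) x|
        = |((kp ⋆ r) x + (km ⋆ r) x) + Ψ x| := by congr 1; linarith
      _ ≤ _ := (abs_add_le _ _).trans (add_le_add_right (hq.abs_le x) _)
  · rw [convolution_add_eq_zero_of_not_convolvableAt hpf hpr h,
      convolution_add_eq_zero_of_not_convolvableAt hmf hmr (h_iff.not.1 h), add_zero, abs_zero]
    positivity

lemma abs_convolution_add_sub_oneSidedValue_le (hq : Correction kp km f φ a b η q Ψ)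
    (hp : WeaklySingular kp Cp) (hm : WeaklySingular km Cm) (hr : r ∈ testFn a b)
    (hP : ∀ t, |r t| ≤ P) (hx : x ∈ oneSidedPoints kp km f a b) :
    |(kp ⋆ (q + r)) x + (km ⋆ (q + r)) x - oneSidedValue kp km f q x| ≤
      ((∫ s, |kp s|) + ∫ s, |km s|) * P := by
  have hP0 : 0 ≤ P := (abs_nonneg _).trans (hP 0)
  have hp_nonneg : 0 ≤ (∫ s, |kp s|) * P :=
    mul_nonneg (integral_nonneg fun _ => abs_nonneg _) hP0
  have hm_nonneg : 0 ≤ (∫ s, |km s|) * P :=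
    mul_nonneg (integral_nonneg fun _ => abs_nonneg _) hP0
  have hpr := hp.convolvableAt_testFn hr x
  have hmr := hm.convolvableAt_testFn hr x
  have hpf := hq.convolvableAt_add kp (.inl rfl) x hx.1
  have hmf := hq.convolvableAt_add km (.inr rfl) x hx.1
  rw [add_mul]
  rcases hx.2 with ⟨h, h'⟩ | ⟨h, h'⟩
  · have hpq : ConvolvableAt kp q x := by simpa using hpf.sub h
    rw [oneSidedValue, if_pos h, convolution_add_eq_zero_of_not_convolvableAt hmf hmr h',
      hpq.distrib_add hpr, add_zero, add_sub_cancel_left]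
    linarith [abs_convolution_le_of_abs_le hp.integrable hP x]
  · have hmq : ConvolvableAt km q x := by simpa using hmf.sub h
    rw [oneSidedValue, if_neg h', convolution_add_eq_zero_of_not_convolvableAt hpf hpr h',
      hmq.distrib_add hmr, zero_add, add_sub_cancel_left]
    linarith [abs_convolution_le_of_abs_le hm.integrable hP x]

-- If the values are unbounded, then `sSup` takes the junk value `0`.
lemma sSup_abs_convolution_add_le (hq : Correction kp km f φ a b η q Ψ)
    (h_dichotomy : (∀ M, ∃ x ∈ oneSidedPoints kp km f a b, M < |oneSidedValue kp km f q x|) ∨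
      ∀ x ∈ oneSidedPoints kp km f a b, |oneSidedValue kp km f q x| ≤ η)
    (hp : WeaklySingular kp Cp) (hm : WeaklySingular km Cm) (hr : r ∈ testFn a b)
    (hfφ : ∀ x ∈ Icc a b, (kp ⋆ f) x + (km ⋆ f) x = φ x)
    (h_end : ∀ k ∈ ({kp, km} : Set (ℝ → ℝ)), ∀ x ∈ ({a, b} : Set ℝ), (k ⋆ (q + r)) x = 0)
    (hP : ∀ t, |r t| ≤ P) :
    sSup ((fun x => |(kp ⋆ (q + r)) x + (km ⋆ (q + r)) x|) '' Icc a b) ≤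
      ((∫ s, |kp s|) + ∫ s, |km s|) * P + η := by
  have hη : 0 ≤ η := (abs_nonneg _).trans (hq.abs_le 0)
  have hκ : 0 ≤ ((∫ s, |kp s|) + ∫ s, |km s|) * P :=
    (abs_nonneg _).trans (abs_convolution_add_convolution_le hp.integrable hm.integrable hP 0)
  have h_near := fun {x : ℝ} (hx : x ∈ oneSidedPoints kp km f a b) =>
    hq.abs_convolution_add_sub_oneSidedValue_le hp hm hr hP hx
  rcases h_dichotomy with h_unbounded | h_bounded
  · rw [Real.sSup_of_not_bddAbove]
    · exact add_nonneg hκ hη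
    rintro ⟨B, hB⟩
    obtain ⟨x, hx, hBx⟩ := h_unbounded (B + ((∫ s, |kp s|) + ∫ s, |km s|) * P)
    have h_le := hB ⟨x, Ioo_subset_Icc_self hx.1, rfl⟩
    have h_tri := abs_sub_abs_le_abs_sub (oneSidedValue kp km f q x)
      ((kp ⋆ (q + r)) x + (km ⋆ (q + r)) x)
    rw [abs_sub_comm] at h_tri
    linarith [h_near hx]
  · refine Real.sSup_le ?_ (add_nonneg hκ hη)
    rintro _ ⟨x, hx, rfl⟩
    by_cases hx1 : x ∈ oneSidedPoints kp km f a b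
    · linarith [h_near hx1, h_bounded x hx1, abs_sub_abs_le_abs_sub
        ((kp ⋆ (q + r)) x + (km ⋆ (q + r)) x) (oneSidedValue kp km f q x)]
    · exact (hq.abs_convolution_add_le_of_notMem hp hm hr hfφ h_end hx hx1).trans
        (add_le_add_left
          (abs_convolution_add_convolution_le hp.integrable hm.integrable hP x) _)

end Correction

end CorrectedPerturbation

section Perturbation

variable {a b α β γ η M S x : ℝ} {f φ p q s G Ψ : ℝ → ℝ}

lemma intervalIntegral_eq_integral_of_mem_Ioo (hG : ∀ t, G t ≠ 0 → t ∈ Ioo a b)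
    (w : ℝ → ℝ) : ∫ t in a..b, w t * G t = ∫ t, w t * G t := by
  refine intervalIntegral.integral_eq_integral_of_support_subset fun t ht => ?_
  exact Ioo_subset_Ioc_self (hG t (right_ne_zero_of_mul ht))

lemma convolution_eq_zero_of_integral_endpointWeight_eq_zero (hab : a ≤ b)
    (hG : ∀ t, G t ≠ 0 → t ∈ Ioo a b) (h1 : ∫ t, endpointWeight a b α β 1 t * G t = 0)
    (h2 : ∫ t, endpointWeight a b α β 2 t * G t = 0) :
    ∀ k ∈ ({leftKernel a b α γ, rightKernel a b β γ} : Set (ℝ → ℝ)), ∀ x ∈ ({a, b} : Set ℝ),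
      (k ⋆ G) x = 0 := by
  have hG_ind : (Ioo a b).indicator G = G := indicator_eq_self.2 hG
  have h_left : ∫ t in a..b, (t - a) ^ (-β) * G t = 0 :=
    (intervalIntegral_eq_integral_of_mem_Ioo hG _).trans h1
  have h_right : ∫ t in a..b, (b - t) ^ (-α) * G t = 0 :=
    (intervalIntegral_eq_integral_of_mem_Ioo hG _).trans h2
  rw [← hG_ind]
  rintro k (rfl | rfl) x (rfl | rfl)
  · rw [leftKernel_convolution_indicator (left_mem_Icc.2 hab), intervalIntegral.integral_same,
      mul_zero, mul_zero]
  · rw [leftKernel_convolution_indicator (right_mem_Icc.2 hab), h_right, mul_zero, mul_zero]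
  · rw [rightKernel_convolution_indicator (left_mem_Icc.2 hab), h_left, mul_zero, mul_zero]
  · rw [rightKernel_convolution_indicator (right_mem_Icc.2 hab), intervalIntegral.integral_same,
      mul_zero, mul_zero]

lemma mem_Ioo_of_mem_testFn (hp : p ∈ testFn a b) (t : ℝ) (ht : p t ≠ 0) : t ∈ Ioo a b :=
  hp.2 (subset_tsupport p ht)

lemma integrable_testFn (hp : p ∈ testFn a b) : Integrable p :=
  hp.1.integrable_of_hasCompactSupport (hasCompactSupport_of_mem_testFn hp)

lemma integral_abs_le_of_mem_Ioo (hab : a ≤ b) (hG : ∀ t, G t ≠ 0 → t ∈ Ioo a b)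
    (hM : ∀ t, |G t| ≤ M) : ∫ t, |G t| ≤ (b - a) * M := by
  have h_supp : ∀ t ∉ Ioo a b, |G t| = 0 := fun t ht => by
    rw [abs_eq_zero]
    exact not_imp_comm.1 (hG t) ht
  have h_le := norm_setIntegral_le_of_norm_le_const (μ := volume) (f := fun t => |G t|)
    (s := Ioo a b) (C := M) measure_Ioo_lt_top fun t _ => by rw [norm_eq_abs, abs_abs]; exact hM t
  rw [setIntegral_eq_integral_of_forall_compl_eq_zero h_supp, volume_real_Ioo_of_le hab,
    mul_comm] at h_le
  exact (le_abs_self _).trans h_le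

section Weight

variable {w : ℝ → ℝ} {C : ℝ}

lemma BoundarySmall.abs_mul_le (hq : BoundarySmall a b η q)
    (hC : ∀ t ∈ Ioo a b, |w t| * boundaryDist a b t ≤ C) (t : ℝ) :
    |w t * q t| ≤ C * |q t / boundaryDist a b t| := by
  by_cases hqt : q t = 0
  · simp [hqt]
  have hd : 0 < boundaryDist a b t := boundaryDist_pos.2 (hq.mem_Ioo t hqt)
  rw [abs_mul, abs_div, abs_of_pos hd, mul_div_assoc', le_div_iff₀ hd, mul_right_comm]
  exact mul_le_mul_of_nonneg_right (hC t (hq.mem_Ioo t hqt)) (abs_nonneg _)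

lemma BoundarySmall.integrable_mul (hq : BoundarySmall a b η q) (hw : ContinuousOn w (Ioo a b))
    (hC : ∀ t ∈ Ioo a b, |w t| * boundaryDist a b t ≤ C) : Integrable fun t => w t * q t := by
  have h_ind : (fun t => w t * q t) = fun t => (Ioo a b).indicator w t * q t := by
    ext t
    by_cases ht : t ∈ Ioo a b
    · rw [indicator_of_mem ht]
    · rw [not_imp_comm.1 (hq.mem_Ioo t) ht, mul_zero, mul_zero]
  have h_meas : AEStronglyMeasurable fun t => w t * q t := by
    rw [h_ind]
    refine .mul ?_ hq.integrable.aestronglyMeasurable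
    rw [aestronglyMeasurable_indicator_iff measurableSet_Ioo]
    exact hw.aestronglyMeasurable measurableSet_Ioo
  exact (hq.integrable_div.abs.const_mul C).mono' h_meas (.of_forall (hq.abs_mul_le hC))

lemma BoundarySmall.integral_abs_mul_le (hq : BoundarySmall a b η q) (hC0 : 0 ≤ C)
    (hC : ∀ t ∈ Ioo a b, |w t| * boundaryDist a b t ≤ C) : ∫ t, |w t * q t| ≤ C * η :=
  calc ∫ t, |w t * q t|
      ≤ ∫ t, C * |q t / boundaryDist a b t| :=
        integral_mono_of_nonneg (.of_forall fun t => abs_nonneg _)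
          (hq.integrable_div.abs.const_mul C) (.of_forall (hq.abs_mul_le hC))
    _ ≤ C * η := by
        rw [integral_const_mul]
        exact mul_le_mul_of_nonneg_left hq.integral_abs_div_le hC0

end Weight

lemma exists_testFn_integral_eq {ι : Type*} [Fintype ι] {ω : ι → ℝ → ℝ}
    (hω : ∀ j, ContinuousOn (ω j) (Ioo a b))
    (h_indep : ∀ c : ι → ℝ, (∀ t ∈ Ioo a b, ∑ j, c j * ω j t = 0) → c = 0) :
    ∃ K, 0 ≤ K ∧ ∀ c : ι → ℝ, ∃ s ∈ testFn a b, (∀ i, ∫ t, ω i t * s t = c i) ∧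
      ∀ t, |s t| ≤ K * ‖c‖ := by
  classical
  obtain ⟨e, he, h_dual⟩ := exists_dual_testFn hω h_indep
  choose B hB using fun j =>
    (he j).1.bounded_above_of_compact_support (hasCompactSupport_of_mem_testFn (he j))
  refine ⟨∑ j, B j, Finset.sum_nonneg fun j _ => (norm_nonneg _).trans (hB j 0), fun c =>
    ⟨∑ j, c j • e j, Submodule.sum_mem _ fun j _ => Submodule.smul_mem _ _ (he j),
      fun i => ?_, fun t => ?_⟩⟩
  · have h_int : ∀ j ∈ Finset.univ, Integrable fun t => c j * (ω i t * e j t) := fun j _ =>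
      (integrable_mul_testFn (hω i) (he j)).const_mul _
    simp only [Finset.sum_apply, Pi.smul_apply, smul_eq_mul, Finset.mul_sum, mul_left_comm (ω i _)]
    rw [integral_finsetSum _ h_int]
    simp only [integral_const_mul, h_dual, mul_ite, mul_one, mul_zero, Finset.sum_ite_eq,
      Finset.mem_univ, if_true]
  · rw [← norm_eq_abs, Finset.sum_apply, Finset.sum_mul]
    refine norm_sum_le_of_le _ fun j _ => ?_
    rw [Pi.smul_apply, norm_smul, mul_comm]
    exact mul_le_mul (hB j t) (norm_le_pi_norm c j) (norm_nonneg _)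
      ((norm_nonneg _).trans (hB j t))

/-- The total mass of the two kernels of the combined Caputo derivative. -/
def kernelMass (a b α β γ : ℝ) : ℝ := (∫ s, |leftKernel a b α γ s|) + ∫ s, |rightKernel a b β γ s|

lemma kernelMass_nonneg : 0 ≤ kernelMass a b α β γ :=
  add_nonneg (integral_nonneg fun _ => abs_nonneg _) (integral_nonneg fun _ => abs_nonneg _)

/-- Adding `h` to the derivative `f` of a trajectory keeps the combined Caputo image continuous and
changes it, up to `η`, in the way the continuous function `p` would; `M` bounds the norm of the
combined Caputo derivative of a primitive of `h`. -/
structure IsPerturbation (a b α β γ : ℝ) (f φ p : ℝ → ℝ) (η M : ℝ) (h : ℝ → ℝ) : Prop where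
  mem_Ioo : ∀ t, h t ≠ 0 → t ∈ Ioo a b
  integrable : Integrable h
  integral_abs_sub_le : ∫ t, |h t - p t| ≤ η
  integral_eq : ∫ t, h t = ∫ t, p t
  continuousOn : ContinuousOn (kernelCaputo a b α β γ (f + h)) (Icc a b)
  abs_sub_le : ∀ x ∈ Icc a b,
    |kernelCaputo a b α β γ (f + h) x - (φ x + kernelCaputo a b α β γ p x)| ≤ η
  sSup_le : sSup ((fun x => |kernelCaputo a b α β γ h x|) '' Icc a b) ≤ M

lemma continuous_kernelCaputo_testFn (hab : a < b) (hα : α ∈ Ioo (0 : ℝ) 1)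
    (hβ : β ∈ Ioo (0 : ℝ) 1) (hp : p ∈ testFn a b) : Continuous (kernelCaputo a b α β γ p) := by
  obtain ⟨⟨_, hL⟩, ⟨_, hR⟩, -, -⟩ := kernelPair_leftKernel_rightKernel hab hα hβ γ
  exact (hL.continuous_convolution hp.1 (hasCompactSupport_of_mem_testFn hp)).add
    (hR.continuous_convolution hp.1 (hasCompactSupport_of_mem_testFn hp))

lemma kernelCaputo_testFn_sub (hab : a < b) (hα : α ∈ Ioo (0 : ℝ) 1) (hβ : β ∈ Ioo (0 : ℝ) 1)
    (hp : p ∈ testFn a b) (hs : s ∈ testFn a b) (x : ℝ) :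
    kernelCaputo a b α β γ (p - s) x =
      kernelCaputo a b α β γ p x - kernelCaputo a b α β γ s x := by
  obtain ⟨⟨_, hL⟩, ⟨_, hR⟩, -, -⟩ := kernelPair_leftKernel_rightKernel hab hα hβ γ
  rw [kernelCaputo, (hL.convolvableAt_testFn hp x).convolution_sub (hL.convolvableAt_testFn hs x),
    (hR.convolvableAt_testFn hp x).convolution_sub (hR.convolvableAt_testFn hs x), kernelCaputo,
    kernelCaputo]
  ring

lemma abs_kernelCaputo_le (hab : a < b) (hα : α ∈ Ioo (0 : ℝ) 1) (hβ : β ∈ Ioo (0 : ℝ) 1)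
    (hS : ∀ t, |s t| ≤ S) (x : ℝ) :
    |kernelCaputo a b α β γ s x| ≤ kernelMass a b α β γ * S := by
  obtain ⟨⟨_, hL⟩, ⟨_, hR⟩, -, -⟩ := kernelPair_leftKernel_rightKernel hab hα hβ γ
  exact abs_convolution_add_convolution_le hL.integrable hR.integrable hS x

variable {P ε : ℝ}

lemma integral_endpointWeight_mul_add_sub (hp : p ∈ testFn a b) (hs : s ∈ testFn a b)
    {j : Fin 3} (hq : Integrable fun t => endpointWeight a b α β j t * q t)
    (hqs : ∫ t, endpointWeight a b α β j t * s t = ∫ t, endpointWeight a b α β j t * q t) :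
    ∫ t, endpointWeight a b α β j t * (q + (p - s)) t =
      ∫ t, endpointWeight a b α β j t * p t := by
  have hp_int := integrable_mul_testFn (continuousOn_endpointWeight (α := α) (β := β) j) hp
  have hs_int := integrable_mul_testFn (continuousOn_endpointWeight (α := α) (β := β) j) hs
  have h_diff : Integrable fun t =>
      endpointWeight a b α β j t * p t - endpointWeight a b α β j t * s t := hp_int.sub hs_int
  simp only [Pi.add_apply, Pi.sub_apply, mul_add, mul_sub]
  rw [integral_add hq h_diff, integral_sub hp_int hs_int, hqs, add_sub_cancel]

lemma integral_abs_add_sub_sub_le (hab : a ≤ b) (hq : Integrable q) (hs : s ∈ testFn a b)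
    (hS : ∀ t, |s t| ≤ S) : ∫ t, |(q + (p - s)) t - p t| ≤ (∫ t, |q t|) + (b - a) * S :=
  calc ∫ t, |(q + (p - s)) t - p t|
      ≤ ∫ t, (|q t| + |s t|) := by
        refine integral_mono_of_nonneg (.of_forall fun t => abs_nonneg _)
          (hq.abs.add (integrable_testFn hs).abs) (.of_forall fun t => ?_)
        change |q t + (p t - s t) - p t| ≤ |q t| + |s t|
        rw [add_sub_assoc, sub_sub_cancel_left, ← sub_eq_add_neg]
        exact abs_sub _ _
    _ ≤ (∫ t, |q t|) + (b - a) * S := by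
        rw [integral_add hq.abs (integrable_testFn hs).abs]
        linarith [integral_abs_le_of_mem_Ioo hab (mem_Ioo_of_mem_testFn hs) hS]

lemma Correction.isPerturbation (hab : a < b) (hα : α ∈ Ioo (0 : ℝ) 1) (hβ : β ∈ Ioo (0 : ℝ) 1)
    (hq : Correction (leftKernel a b α γ) (rightKernel a b β γ) f φ a b ε q Ψ)
    (h_dichotomy :
      (∀ M, ∃ x ∈ oneSidedPoints (leftKernel a b α γ) (rightKernel a b β γ) f a b,
        M < |oneSidedValue (leftKernel a b α γ) (rightKernel a b β γ) f q x|) ∨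
      ∀ x ∈ oneSidedPoints (leftKernel a b α γ) (rightKernel a b β γ) f a b,
        |oneSidedValue (leftKernel a b α γ) (rightKernel a b β γ) f q x| ≤ ε)
    (hφ : Continuous φ) (hfφ : ∀ x ∈ Icc a b, kernelCaputo a b α β γ f x = φ x)
    (hp : p ∈ testFn a b) (hP : ∀ t, |p t| ≤ P)
    (hp1 : ∫ t, endpointWeight a b α β 1 t * p t = 0)
    (hp2 : ∫ t, endpointWeight a b α β 2 t * p t = 0)
    (hq_int : ∀ j, Integrable fun t => endpointWeight a b α β j t * q t)
    (hs : s ∈ testFn a b) (hS : ∀ t, |s t| ≤ S)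
    (hqs : ∀ j, ∫ t, endpointWeight a b α β j t * s t = ∫ t, endpointWeight a b α β j t * q t)
    (hη_int : (∫ t, |q t|) + (b - a) * S ≤ η) (hη : ε + kernelMass a b α β γ * S ≤ η) :
    IsPerturbation a b α β γ f φ p η (kernelMass a b α β γ * P + η) (q + (p - s)) := by
  have hr : p - s ∈ testFn a b := Submodule.sub_mem _ hp hs
  have h_weight := fun j => integral_endpointWeight_mul_add_sub hp hs (hq_int j) (hqs j)
  have h_mem : ∀ t, (q + (p - s)) t ≠ 0 → t ∈ Ioo a b := fun t ht => by
    by_cases hqt : q t = 0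
    · exact mem_Ioo_of_mem_testFn hr t fun h => ht (by rw [Pi.add_apply, hqt, h, add_zero])
    · exact hq.mem_Ioo t hqt
  have h_end := convolution_eq_zero_of_integral_endpointWeight_eq_zero (γ := γ) hab.le h_mem
    ((h_weight 1).trans hp1) ((h_weight 2).trans hp2)
  obtain ⟨⟨_, hL⟩, ⟨_, hR⟩, -, -⟩ := kernelPair_leftKernel_rightKernel hab hα hβ γ
  have h_image : ∀ x ∈ Icc a b, kernelCaputo a b α β γ (f + (q + (p - s))) x =
      φ x + Ψ x + kernelCaputo a b α β γ (p - s) x := fun x hx =>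
    hq.convolution_add_testFn hL hR hr hfφ h_end hx
  refine ⟨h_mem, hq.integrable.add (integrable_testFn hr), ?_, ?_, ?_, fun x hx => ?_, ?_⟩
  · exact (integral_abs_add_sub_sub_le hab.le hq.integrable hs hS).trans hη_int
  · simpa [endpointWeight] using h_weight 0
  · exact ((hφ.add hq.continuous).add
      (continuous_kernelCaputo_testFn hab hα hβ hr)).continuousOn.congr h_image
  · rw [h_image x hx, kernelCaputo_testFn_sub hab hα hβ hp hs]
    calc _ = |Ψ x - kernelCaputo a b α β γ s x| := by congr 1; ring
      _ ≤ |Ψ x| + |kernelCaputo a b α β γ s x| := abs_sub _ _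
      _ ≤ η := by linarith [hq.abs_le x, abs_kernelCaputo_le (γ := γ) hab hα hβ hS x]
  · have h_abs : ∀ t, |(p - s) t| ≤ P + S := fun t =>
      (abs_sub _ _).trans (add_le_add (hP t) (hS t))
    refine (hq.sSup_abs_convolution_add_le h_dichotomy hL hR hr hfφ h_end h_abs).trans ?_
    change kernelMass a b α β γ * (P + S) + ε ≤ _
    linarith [mul_add (kernelMass a b α β γ) P S]

lemma exists_isPerturbation (hab : a < b) (hα : α ∈ Ioo (0 : ℝ) 1) (hβ : β ∈ Ioo (0 : ℝ) 1)
    (hf : Integrable f) (hf0 : ∀ t, f t ≠ 0 → t ∈ Ioo a b) (hφ : Continuous φ)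
    (hfφ : ∀ x ∈ Icc a b, kernelCaputo a b α β γ f x = φ x) (hp : p ∈ testFn a b)
    (hP : ∀ t, |p t| ≤ P) (hp1 : ∫ t, endpointWeight a b α β 1 t * p t = 0)
    (hp2 : ∫ t, endpointWeight a b α β 2 t * p t = 0) (hη : 0 < η) :
    ∃ h, IsPerturbation a b α β γ f φ p η (kernelMass a b α β γ * P + η) h := by
  have h_pair := kernelPair_leftKernel_rightKernel hab hα hβ γ
  obtain ⟨C, hC0, hC⟩ := exists_abs_endpointWeight_mul_boundaryDist_le hab.le hα.2 hβ.2
  obtain ⟨K, hK0, hK⟩ := exists_testFn_integral_eq (a := a) (b := b)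
    (continuousOn_endpointWeight (α := α) (β := β))
    (endpointWeight_linearIndependent hab hα.1 hβ.1)
  have hκ := kernelMass_nonneg (a := a) (b := b) (α := α) (β := β) (γ := γ)
  have := sub_pos.2 hab
  have hT : 0 < 1 + C + (b - a + kernelMass a b α β γ) * (K * C) := by positivity
  obtain ⟨ε, hε, hεη⟩ : ∃ ε > 0,
      ε * (1 + C + (b - a + kernelMass a b α β γ) * (K * C)) = η :=
    ⟨_, div_pos hη hT, div_mul_cancel₀ _ hT.ne'⟩
  have hfφ_ae : ∀ᵐ x, x ∈ Ioo a b → ((leftKernel a b α γ + rightKernel a b β γ) ⋆ f) x = φ x := by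
    obtain ⟨⟨_, hL⟩, ⟨_, hR⟩, -, -⟩ := h_pair
    filter_upwards [hL.convolvableAt_ae hf, hR.convolvableAt_ae hf] with x hxL hxR hx
    rw [hxL.add_distrib hxR]
    exact hfφ x (Ioo_subset_Icc_self hx)
  obtain ⟨q, Ψ, hq, h_dichotomy⟩ := h_pair.exists_correction hf hf0 hφ hfφ_ae hε
  obtain ⟨s, hs, hqs, hs_abs⟩ := hK fun j => ∫ t, endpointWeight a b α β j t * q t
  have h_norm : ‖fun j => ∫ t, endpointWeight a b α β j t * q t‖ ≤ C * ε :=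
    (pi_norm_le_iff_of_nonneg (by positivity)).2 fun j =>
      abs_integral_le_integral_abs.trans (hq.integral_abs_mul_le hC0 (hC j))
  have hq_abs : ∫ t, |q t| ≤ C * ε := by
    simpa [endpointWeight] using hq.integral_abs_mul_le hC0 (hC 0)
  refine ⟨_, hq.isPerturbation hab hα hβ h_dichotomy hφ hfφ hp hP hp1 hp2
    (fun j => hq.integrable_mul (continuousOn_endpointWeight j) (hC j)) hs
    (fun t => (hs_abs t).trans (mul_le_mul_of_nonneg_left h_norm hK0)) hqs ?_ ?_⟩
  · have : 0 ≤ ε * (1 + kernelMass a b α β γ * (K * C)) := by positivity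
    linarith
  · have : 0 ≤ ε * (C + (b - a) * (K * C)) := by positivity
    linarith

end Perturbation

section Integrand
variable {E : Type*} [NormedAddCommGroup E] {a b : ℝ} {Λ : ℝ × E → ℝ} {w : ℝ → E}

lemma uIoc_subset_Icc_of_le (hab : a ≤ b) : uIoc a b ⊆ Icc a b :=
  uIoc_of_le hab ▸ Ioc_subset_Icc_self

lemma exists_norm_le_of_continuousOn_Icc (hw : ContinuousOn w (Icc a b)) :
    ∃ R, ∀ x ∈ Icc a b, ‖w x‖ ≤ R := by
  obtain ⟨R, hR⟩ := (isCompact_Icc.image_of_continuousOn hw).isBounded.exists_norm_le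
  exact ⟨R, fun x hx => hR _ ⟨x, hx, rfl⟩⟩

lemma tendsto_intervalIntegral_of_norm_sub_le [ProperSpace E] (hab : a ≤ b) (hΛ : Continuous Λ)
    (hw : ContinuousOn w (Icc a b)) {wn : ℕ → ℝ → E} (hwn : ∀ n, ContinuousOn (wn n) (Icc a b))
    {ε : ℕ → ℝ} (hε : Filter.Tendsto ε Filter.atTop (nhds 0))
    (hle : ∀ n, ∀ x ∈ Icc a b, ‖wn n x - w x‖ ≤ ε n) :
    Filter.Tendsto (fun n => ∫ x in a..b, Λ (x, wn n x)) Filter.atTop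
      (nhds (∫ x in a..b, Λ (x, w x))) := by
  have hsub := uIoc_subset_Icc_of_le hab
  obtain ⟨R, hR⟩ := exists_norm_le_of_continuousOn_Icc hw
  obtain ⟨R', hR'⟩ := hε.bddAbove_range
  have hwn_le : ∀ n, ∀ x ∈ Icc a b, ‖wn n x‖ ≤ R + R' := fun n x hx => by
    have := norm_le_norm_add_norm_sub (w x) (wn n x)
    rw [norm_sub_rev] at this
    linarith [hR x hx, hle n x hx, hR' ⟨n, rfl⟩]
  obtain ⟨B, hB⟩ := ((isCompact_Icc (a := a) (b := b)).prod
    (isCompact_closedBall (0 : E) (R + R'))).exists_bound_of_continuousOn hΛ.continuousOn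
  refine intervalIntegral.tendsto_integral_filter_of_dominated_convergence (fun _ => B)
    (.of_forall fun n => ?_) (.of_forall fun n => .of_forall fun x hx => ?_)
    intervalIntegrable_const (.of_forall fun x hx => ?_)
  · exact ((hΛ.comp_continuousOn (continuousOn_id.prodMk (hwn n))).mono hsub).aestronglyMeasurable
      measurableSet_uIoc
  · exact hB _ ⟨hsub hx, mem_closedBall_zero_iff.2 (hwn_le n x (hsub hx))⟩
  · have hlim : Filter.Tendsto (fun n => wn n x) Filter.atTop (nhds (w x)) :=
      tendsto_iff_norm_sub_tendsto_zero.2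
        (squeeze_zero (fun n => norm_nonneg _) (fun n => hle n x (hsub hx)) hε)
    exact (hΛ.tendsto (x, w x)).comp (tendsto_const_nhds.prodMk_nhds hlim)

lemma hasDerivAt_intervalIntegral_add_smul [NormedSpace ℝ E] (hab : a ≤ b) (hΛ : ContDiff ℝ 1 Λ)
    (hw : ContinuousOn w (Icc a b)) {d : ℝ → E} (hd : ContinuousOn d (Icc a b)) :
    HasDerivAt (fun s : ℝ => ∫ x in a..b, Λ (x, w x + s • d x))
      (∫ x in a..b, fderiv ℝ Λ (x, w x) (0, d x)) 0 := by
  have hsub := uIoc_subset_Icc_of_le hab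
  have hmaps : MapsTo (fun q : ℝ × ℝ => q.2) (Icc (-1) 1 ×ˢ Icc a b) (Icc a b) := fun q hq => hq.2
  have hcurve : ContinuousOn (fun q : ℝ × ℝ => (q.2, w q.2 + q.1 • d q.2))
      (Icc (-1) 1 ×ˢ Icc a b) :=
    continuousOn_snd.prodMk ((hw.comp continuousOn_snd hmaps).add
      (continuousOn_fst.smul (hd.comp continuousOn_snd hmaps)))
  have hderiv : ContinuousOn (fun q : ℝ × ℝ => fderiv ℝ Λ (q.2, w q.2 + q.1 • d q.2) (0, d q.2))
      (Icc (-1) 1 ×ˢ Icc a b) :=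
    ((hΛ.continuous_fderiv one_ne_zero).comp_continuousOn hcurve).clm_apply
      (continuousOn_const.prodMk (hd.comp continuousOn_snd hmaps))
  obtain ⟨B, hB⟩ := (isCompact_Icc.prod isCompact_Icc).exists_bound_of_continuousOn hderiv
  have hslice : ∀ s : ℝ, ContinuousOn (fun x => Λ (x, w x + s • d x)) (Icc a b) := fun s =>
    hΛ.continuous.comp_continuousOn (continuousOn_id.prodMk (hw.add (continuousOn_const.smul hd)))
  have hderiv_zero : ContinuousOn (fun x => fderiv ℝ Λ (x, w x + (0 : ℝ) • d x) (0, d x))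
      (Icc a b) :=
    hderiv.comp (f := fun x => ((0 : ℝ), x)) (by fun_prop) fun x hx => ⟨by norm_num, hx⟩
  have key := (intervalIntegral.hasDerivAt_integral_of_dominated_loc_of_deriv_le (μ := volume)
    (F := fun s x => Λ (x, w x + s • d x))
    (F' := fun s x => fderiv ℝ Λ (x, w x + s • d x) (0, d x)) (bound := fun _ => B)
    (Ioo_mem_nhds (by norm_num : (-1 : ℝ) < 0) one_pos)
    (.of_forall fun s => ((hslice s).mono hsub).aestronglyMeasurable measurableSet_uIoc)
    ((hslice 0).mono (uIcc_of_le hab).subset).intervalIntegrable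
    ((hderiv_zero.mono hsub).aestronglyMeasurable measurableSet_uIoc)
    (.of_forall fun x hx s hs => hB (s, x) ⟨Ioo_subset_Icc_self hs, hsub hx⟩)
    intervalIntegrable_const (.of_forall fun x _ s _ => ?_)).2
  · simpa only [zero_smul, add_zero] using key
  · have hline : HasDerivAt (fun s : ℝ => (x, w x + s • d x)) (0, d x) s :=
      (hasDerivAt_const s x).prodMk
        (by simpa using ((hasDerivAt_id s).smul_const (d x)).const_add (w x))
    exact (hΛ.differentiable one_ne_zero _).hasFDerivAt.comp_hasDerivAt s hline

end Integrand

section Lagrangian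
variable {a b x : ℝ} {N : ℕ} {L : ℝ → (Fin N → ℝ) → (Fin N → ℝ) → ℝ} {i : Fin N}

lemma pdY_eq_fderiv (hL : ContDiff ℝ 1
      (fun p : ℝ × (Fin N → ℝ) × (Fin N → ℝ) => L p.1 p.2.1 p.2.2))
    (i : Fin N) (x : ℝ) (u v : Fin N → ℝ) :
    pdY L i x u v = fderiv ℝ (fun p : ℝ × (Fin N → ℝ) × (Fin N → ℝ) => L p.1 p.2.1 p.2.2)
      (x, u, v) (0, Pi.single i 1, 0) := by
  have hcurve : HasDerivAt
      (fun s => ((x, Function.update u i s, v) : ℝ × (Fin N → ℝ) × (Fin N → ℝ)))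
      (0, Pi.single i 1, 0) (u i) :=
    (hasDerivAt_const _ _).prodMk ((hasDerivAt_update u i (u i)).prodMk (hasDerivAt_const _ _))
  have hdiff := (hL.differentiable one_ne_zero (x, u, v)).hasFDerivAt
  rw [← Function.update_eq_self i u] at hdiff
  have hderiv :=
    (hdiff.comp_hasDerivAt (u i) (f := fun s => (x, Function.update u i s, v)) hcurve).deriv
  rw [Function.update_eq_self] at hderiv
  exact hderiv

lemma pdV_eq_fderiv (hL : ContDiff ℝ 1
      (fun p : ℝ × (Fin N → ℝ) × (Fin N → ℝ) => L p.1 p.2.1 p.2.2))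
    (i : Fin N) (x : ℝ) (u v : Fin N → ℝ) :
    pdV L i x u v = fderiv ℝ (fun p : ℝ × (Fin N → ℝ) × (Fin N → ℝ) => L p.1 p.2.1 p.2.2)
      (x, u, v) (0, 0, Pi.single i 1) := by
  have hcurve : HasDerivAt
      (fun s => ((x, u, Function.update v i s) : ℝ × (Fin N → ℝ) × (Fin N → ℝ)))
      (0, 0, Pi.single i 1) (v i) :=
    (hasDerivAt_const _ _).prodMk ((hasDerivAt_const _ _).prodMk (hasDerivAt_update v i (v i)))
  have hdiff := (hL.differentiable one_ne_zero (x, u, v)).hasFDerivAt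
  rw [← Function.update_eq_self i v] at hdiff
  have hderiv :=
    (hdiff.comp_hasDerivAt (v i) (f := fun s => (x, u, Function.update v i s)) hcurve).deriv
  rw [Function.update_eq_self] at hderiv
  exact hderiv

lemma fderiv_lagrangian_single (hL : ContDiff ℝ 1
      (fun p : ℝ × (Fin N → ℝ) × (Fin N → ℝ) => L p.1 p.2.1 p.2.2))
    (i : Fin N) (x : ℝ) (u v : Fin N → ℝ) (c d : ℝ) :
    fderiv ℝ (fun p : ℝ × (Fin N → ℝ) × (Fin N → ℝ) => L p.1 p.2.1 p.2.2)
      (x, u, v) (0, Pi.single i c, Pi.single i d) = pdY L i x u v * c + pdV L i x u v * d := by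
  have hsplit : ((0, Pi.single i c, Pi.single i d) : ℝ × (Fin N → ℝ) × (Fin N → ℝ)) =
      c • (0, Pi.single i 1, 0) + d • (0, 0, Pi.single i 1) := by
    simp [← Pi.single_smul]
  rw [hsplit, map_add, map_smul, map_smul, pdY_eq_fderiv hL, pdV_eq_fderiv hL, smul_eq_mul,
    smul_eq_mul, mul_comm c, mul_comm d]

variable {u v : ℝ → Fin N → ℝ}

lemma hasDerivAt_integral_lagrangian (hab : a ≤ b)
    (hL : ContDiff ℝ 1 (fun p : ℝ × (Fin N → ℝ) × (Fin N → ℝ) => L p.1 p.2.1 p.2.2))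
    (hu : ContinuousOn u (Icc a b)) (hv : ContinuousOn v (Icc a b)) (i : Fin N) {P W : ℝ → ℝ}
    (hP : ContinuousOn P (Icc a b)) (hW : ContinuousOn W (Icc a b)) :
    HasDerivAt (fun s : ℝ => ∫ x in a..b,
        L x (u x + Pi.single i (s * P x)) (v x + Pi.single i (s * W x)))
      (∫ x in a..b, (pdY L i x (u x) (v x) * P x + pdV L i x (u x) (v x) * W x)) 0 := by
  have hd : ContinuousOn
      (fun x => ((Pi.single i (P x), Pi.single i (W x)) : (Fin N → ℝ) × (Fin N → ℝ))) (Icc a b) :=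
    ((continuous_single i).comp_continuousOn hP).prodMk ((continuous_single i).comp_continuousOn hW)
  simpa only [fderiv_lagrangian_single hL, Prod.smul_mk, Prod.mk_add_mk, ← Pi.single_smul,
    smul_eq_mul] using hasDerivAt_intervalIntegral_add_smul hab hL (hu.prodMk hv) hd

end Lagrangian

section Primitive
variable {a b α β γ x : ℝ} {Y F : ℝ → ℝ}

lemma deriv_ae_of_primitive (hF : Integrable F)
    (hY : ∀ x ∈ Icc a b, Y x = Y a + ∫ t in a..x, F t) :
    ∀ᵐ t, t ∈ Ioo a b → deriv Y t = F t := by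
  filter_upwards [(hF.intervalIntegrable (a := a) (b := b)).ae_hasDerivAt_integral] with t ht hto
  have hab : a ≤ b := (hto.1.trans hto.2).le
  rw [uIcc_of_le hab] at ht
  have hderiv := (ht (Ioo_subset_Icc_self hto) a (left_mem_Icc.2 hab)).const_add (Y a)
  refine (hderiv.congr_of_eventuallyEq ?_).deriv
  filter_upwards [Icc_mem_nhds hto.1 hto.2] with x hx using hY x hx

lemma absolutelyContinuousOn_of_primitive (hab : a ≤ b) (hF : Integrable F)
    (hY : ∀ x ∈ Icc a b, Y x = Y a + ∫ t in a..x, F t) : AbsolutelyContinuousOn Y a b := by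
  have hae : ∀ᵐ t, t ∈ Ioc a b → F t = deriv Y t := by
    filter_upwards [deriv_ae_of_primitive hF hY, compl_mem_ae_iff.2 (measure_singleton b)]
      with t ht htb hto
    exact (ht ⟨hto.1, lt_of_le_of_ne hto.2 htb⟩).symm
  refine ⟨(hF.intervalIntegrable (a := a) (b := b)).congr_ae ?_, fun x hx => ?_⟩
  · rw [uIoc_of_le hab]
    exact (ae_restrict_iff' measurableSet_Ioc).2 hae
  · rw [hY x hx]
    congr 1
    refine intervalIntegral.integral_congr_ae ?_
    filter_upwards [hae] with t ht hto
    rw [uIoc_of_le hx.1] at hto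
    exact ht ⟨hto.1, hto.2.trans hx.2⟩

lemma combCaputo_of_primitive (hF : Integrable F) (hF0 : ∀ t, F t ≠ 0 → t ∈ Ioo a b)
    (hY : ∀ x ∈ Icc a b, Y x = Y a + ∫ t in a..x, F t) (hx : x ∈ Icc a b) :
    combCaputo a b α β γ Y x = kernelCaputo a b α β γ F x := by
  have hae : (Ioo a b).indicator (deriv Y) =ᵐ[volume] F := by
    filter_upwards [deriv_ae_of_primitive hF hY] with t ht
    by_cases hto : t ∈ Ioo a b
    · rw [indicator_of_mem hto, ht hto]
    · rw [indicator_of_notMem hto]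
      exact (not_not.1 fun h => hto (hF0 t h)).symm
  have hconv : ∀ k : ℝ → ℝ, (k ⋆ (Ioo a b).indicator (deriv Y)) x = (k ⋆ F) x := fun k => by
    simp only [convolution_eq_integral]
    exact integral_congr_ae (hae.mono fun t ht => by simp only [ht])
  rw [combCaputo_eq_kernelCaputo hx, kernelCaputo, kernelCaputo, hconv, hconv]

lemma AbsolutelyContinuousOn.integrable_indicator (hab : a ≤ b)
    (hY : AbsolutelyContinuousOn Y a b) : Integrable ((Ioo a b).indicator (deriv Y)) :=
  (integrable_indicator_iff measurableSet_Ioo).2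
    (((intervalIntegrable_iff_integrableOn_Ioc_of_le hab).1 hY.1).mono_set Ioo_subset_Ioc_self)

lemma AbsolutelyContinuousOn.eq_primitive (hY : AbsolutelyContinuousOn Y a b) :
    ∀ x ∈ Icc a b, Y x = Y a + ∫ t in a..x, (Ioo a b).indicator (deriv Y) t := by
  intro x hx
  rw [hY.2 x hx]
  congr 1
  refine intervalIntegral.integral_congr_ae ?_
  filter_upwards [compl_mem_ae_iff.2 (measure_singleton b)] with t htb hto
  rw [uIoc_of_le hx.1] at hto
  rw [indicator_of_mem]
  exact ⟨hto.1, lt_of_le_of_ne (hto.2.trans hx.2) htb⟩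

lemma AbsolutelyContinuousOn.continuousOn (hab : a ≤ b) (hY : AbsolutelyContinuousOn Y a b) :
    ContinuousOn Y (Icc a b) :=
  (continuous_const.add (intervalIntegral.continuous_primitive
    (fun _ _ => (hY.integrable_indicator hab).intervalIntegrable) a)).continuousOn.congr
    hY.eq_primitive

lemma abs_intervalIntegral_le_integral_abs (hF : Integrable F) (hx : a ≤ x) :
    |∫ t in a..x, F t| ≤ ∫ t, |F t| := by
  rw [intervalIntegral.integral_of_le hx]
  exact abs_integral_le_integral_abs.trans
    (setIntegral_le_integral hF.abs (.of_forall fun t => abs_nonneg _))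

end Primitive

section Variation
variable {a b α β γ x η M δ P : ℝ} {N : ℕ} {y : ℝ → Fin N → ℝ} {i j : Fin N} {h p φ : ℝ → ℝ}

lemma memD.continuousOn (hab : a ≤ b) (hy : memD a b α β γ y) : ContinuousOn y (Icc a b) :=
  continuousOn_pi.2 fun i => (hy.1 i).continuousOn hab

lemma memD.continuousOn_combCaputoVec (hy : memD a b α β γ y) :
    ContinuousOn (combCaputoVec a b α β γ y) (Icc a b) :=
  continuousOn_pi.2 fun i => hy.2 i

/-- The trajectory `y` with the primitive of `h` added to its `i`-th component. -/
def variation (a : ℝ) (i : Fin N) (h : ℝ → ℝ) (y : ℝ → Fin N → ℝ) (x : ℝ) : Fin N → ℝ :=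
  y x + Pi.single i (∫ t in a..x, h t)

lemma variation_apply_self (t : ℝ) : variation a i h y t i = y t i + ∫ s in a..t, h s := by
  simp [variation]

lemma variation_apply_of_ne (hji : j ≠ i) :
    (fun t => variation a i h y t j) = fun t => y t j := by
  ext t
  simp [variation, hji]

lemma variation_left_endpoint : variation a i h y a = y a := by
  simp [variation]

lemma variation_sub : variation a i h y - y = variation a i h 0 := by
  ext x j
  simp [variation]

lemma variation_eq_primitive (hy : AbsolutelyContinuousOn (fun t => y t i) a b) (hab : a ≤ b)
    (hh : Integrable h) : ∀ x ∈ Icc a b, variation a i h y x i = variation a i h y a i +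
      ∫ t in a..x, ((Ioo a b).indicator (deriv fun t => y t i) + h) t := by
  intro x hx
  simp only [Pi.add_apply]
  rw [intervalIntegral.integral_add (hy.integrable_indicator hab).intervalIntegrable
    hh.intervalIntegrable, variation_left_endpoint, variation_apply_self, hy.eq_primitive x hx,
    add_assoc]

lemma combCaputo_variation_self (hy : AbsolutelyContinuousOn (fun t => y t i) a b) (hab : a ≤ b)
    (hh : Integrable h) (hh0 : ∀ t, h t ≠ 0 → t ∈ Ioo a b) (hx : x ∈ Icc a b) :
    combCaputo a b α β γ (fun t => variation a i h y t i) x =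
      kernelCaputo a b α β γ ((Ioo a b).indicator (deriv fun t => y t i) + h) x := by
  refine combCaputo_of_primitive ((hy.integrable_indicator hab).add hh) (fun t ht => ?_)
    (variation_eq_primitive hy hab hh) hx
  by_contra hto
  refine hto (hh0 t ?_)
  rwa [Pi.add_apply, indicator_of_notMem hto, zero_add] at ht

lemma memD.variation (hab : a ≤ b) (hy : memD a b α β γ y) (hh : Integrable h)
    (hh0 : ∀ t, h t ≠ 0 → t ∈ Ioo a b)
    (hc : ContinuousOn
      (kernelCaputo a b α β γ ((Ioo a b).indicator (deriv fun t => y t i) + h)) (Icc a b)) :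
    memD a b α β γ (variation a i h y) := by
  refine ⟨fun j => ?_, fun j => ?_⟩
  · rcases eq_or_ne j i with rfl | hji
    · exact absolutelyContinuousOn_of_primitive hab
        (((hy.1 j).integrable_indicator hab).add hh) (variation_eq_primitive (hy.1 j) hab hh)
    · rw [variation_apply_of_ne hji]
      exact hy.1 j
  · rcases eq_or_ne j i with rfl | hji
    · exact hc.congr fun x hx => combCaputo_variation_self (hy.1 j) hab hh hh0 hx
    · simp only [variation_apply_of_ne hji]
      exact hy.2 j

lemma combCaputoVec_variation (hab : a ≤ b) (hy : AbsolutelyContinuousOn (fun t => y t i) a b)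
    (hh : Integrable h) (hh0 : ∀ t, h t ≠ 0 → t ∈ Ioo a b) (hx : x ∈ Icc a b) :
    combCaputoVec a b α β γ (variation a i h y) x = combCaputoVec a b α β γ y x +
      Pi.single i (kernelCaputo a b α β γ ((Ioo a b).indicator (deriv fun t => y t i) + h) x -
        combCaputo a b α β γ (fun t => y t i) x) := by
  ext j
  rcases eq_or_ne j i with rfl | hji
  · simp [combCaputoVec, combCaputo_variation_self hy hab hh hh0 hx]
  · simp [combCaputoVec, variation_apply_of_ne hji, hji]

lemma norm1inf_variation_zero_le (hab : a ≤ b) (hh : Integrable h)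
    (hh0 : ∀ t, h t ≠ 0 → t ∈ Ioo a b) :
    norm1inf a b α β γ (variation a i h 0) ≤
      (∫ t, |h t|) + sSup ((fun x => |kernelCaputo a b α β γ h x|) '' Icc a b) := by
  have hzero : AbsolutelyContinuousOn (fun t => (0 : ℝ → Fin N → ℝ) t i) a b := by
    simp [AbsolutelyContinuousOn]
  have himage : (fun x => ‖combCaputoVec a b α β γ (variation a i h 0) x‖) '' Icc a b =
      (fun x => |kernelCaputo a b α β γ h x|) '' Icc a b := by
    refine image_congr fun x hx => ?_
    have hvec : combCaputoVec a b α β γ (0 : ℝ → Fin N → ℝ) x = 0 := by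
      ext j
      simp [combCaputoVec, combCaputo, caputoLeft, caputoRight]
    have hsum : (Ioo a b).indicator (deriv fun t => (0 : ℝ → Fin N → ℝ) t i) + h = h := by
      ext t
      simp
    have hcomp : combCaputo a b α β γ (fun t => (0 : ℝ → Fin N → ℝ) t i) x = 0 :=
      congrFun hvec i
    simp only [combCaputoVec_variation hab hzero hh hh0 hx, hvec, hsum, hcomp, zero_add, sub_zero,
      Pi.norm_single, norm_eq_abs]
  rw [norm1inf, himage]
  refine add_le_add_left (Real.sSup_le ?_ (integral_nonneg fun t => abs_nonneg _)) _
  rintro _ ⟨x, hx, rfl⟩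
  simpa only [variation, Pi.zero_apply, zero_add, Pi.norm_single, norm_eq_abs] using
    abs_intervalIntegral_le_integral_abs hh hx.1

end Variation

section FirstVariation
variable {a b α β γ x η M δ P : ℝ} {N : ℕ} {L : ℝ → (Fin N → ℝ) → (Fin N → ℝ) → ℝ}
  {y : ℝ → Fin N → ℝ} {F : Set (Fin N)} {i : Fin N} {f h p φ : ℝ → ℝ}

/-- The functional `J(y) = ∫ L(x, y, ᶜD_γ^{α,β} y) dx`. -/
def action (a b α β γ : ℝ) (L : ℝ → (Fin N → ℝ) → (Fin N → ℝ) → ℝ) (y : ℝ → Fin N → ℝ) : ℝ :=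
  ∫ x in a..b, L x (y x) (combCaputoVec a b α β γ y x)

/-- `y` minimizes `action` among the trajectories of `memD` within distance `δ` of `y` that have
the same value at `a` and the same components at `b`, except those with index in `F`, which are
free at `b`. -/
def MinimizesAction (a b α β γ : ℝ) (L : ℝ → (Fin N → ℝ) → (Fin N → ℝ) → ℝ) (F : Set (Fin N))
    (δ : ℝ) (y : ℝ → Fin N → ℝ) : Prop :=
  ∀ z : ℝ → Fin N → ℝ, memD a b α β γ z → z a = y a → (∀ i ∉ F, z b i = y b i) →
    norm1inf a b α β γ (z - y) < δ → action a b α β γ L y ≤ action a b α β γ L z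

lemma IsPerturbation.integral_abs_le (hh : IsPerturbation a b α β γ f φ p η M h)
    (hp : Integrable p) : ∫ t, |h t| ≤ (∫ t, |p t|) + η := by
  have hsub := (hh.integrable.sub hp).abs
  calc ∫ t, |h t| ≤ ∫ t, (|p t| + |h t - p t|) :=
        integral_mono hh.integrable.abs (hp.abs.add hsub) fun t => by
          simpa using abs_add_le (p t) (h t - p t)
    _ = (∫ t, |p t|) + ∫ t, |h t - p t| := integral_add hp.abs hsub
    _ ≤ (∫ t, |p t|) + η := add_le_add_right hh.integral_abs_sub_le _

lemma IsPerturbation.action_le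
    (hh : IsPerturbation a b α β γ ((Ioo a b).indicator (deriv fun t => y t i)) φ p η M h)
    (hab : a ≤ b) (hy : memD a b α β γ y) (hmin : MinimizesAction a b α β γ L F δ y)
    (hp : Integrable p) (hp0 : i ∉ F → ∫ t, p t = 0) (hδ : (∫ t, |p t|) + η + M < δ) :
    action a b α β γ L y ≤ action a b α β γ L (variation a i h y) := by
  refine hmin _ (hy.variation hab hh.integrable hh.mem_Ioo hh.continuousOn)
    variation_left_endpoint (fun j hj => ?_) ?_
  · rcases eq_or_ne j i with rfl | hji
    · have hint : ∫ t in a..b, h t = ∫ t, h t := by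
        simpa only [one_mul] using intervalIntegral_eq_integral_of_mem_Ioo hh.mem_Ioo fun _ => 1
      rw [variation_apply_self, hint, hh.integral_eq, hp0 hj, add_zero]
    · exact congrFun (variation_apply_of_ne hji) b
  · rw [variation_sub]
    have := norm1inf_variation_zero_le (i := i) (α := α) (β := β) (γ := γ) hab hh.integrable
      hh.mem_Ioo
    linarith [hh.integral_abs_le hp, hh.sSup_le]

lemma IsPerturbation.norm_variation_sub_le
    (hh : IsPerturbation a b α β γ ((Ioo a b).indicator (deriv fun t => y t i)) φ p η M h)
    (hab : a ≤ b) (hy : AbsolutelyContinuousOn (fun t => y t i) a b)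
    (hφ : φ x = combCaputo a b α β γ (fun t => y t i) x) (hp : Integrable p) (hx : x ∈ Icc a b) :
    ‖(variation a i h y x, combCaputoVec a b α β γ (variation a i h y) x) -
      (variation a i p y x,
        combCaputoVec a b α β γ y x + Pi.single i (kernelCaputo a b α β γ p x))‖ ≤ η := by
  refine norm_prod_le_iff.2 ⟨?_, ?_⟩
  · rw [Prod.fst_sub, variation, variation, add_sub_add_left_eq_sub, ← Pi.single_sub,
      Pi.norm_single, norm_eq_abs, ← intervalIntegral.integral_sub
        hh.integrable.intervalIntegrable hp.intervalIntegrable]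
    exact (abs_intervalIntegral_le_integral_abs (hh.integrable.sub hp) hx.1).trans
      hh.integral_abs_sub_le
  · rw [Prod.snd_sub, combCaputoVec_variation hab hy hh.integrable hh.mem_Ioo hx,
      add_sub_add_left_eq_sub, ← Pi.single_sub, Pi.norm_single, norm_eq_abs, sub_sub, ← hφ]
    exact hh.abs_sub_le x hx

lemma exists_continuous_eqOn_Icc {u : ℝ → ℝ} (hab : a ≤ b) (hu : ContinuousOn u (Icc a b)) :
    ∃ φ : ℝ → ℝ, Continuous φ ∧ EqOn φ u (Icc a b) :=
  ⟨IccExtend hab ((Icc a b).domRestrict u),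
    continuous_IccExtend_iff.2 (continuousOn_iff_continuous_domRestrict.1 hu),
    fun _ hx => IccExtend_of_mem hab _ hx⟩

lemma MinimizesAction.le_integral_variation (hmin : MinimizesAction a b α β γ L F δ y)
    (hδ : 0 < δ) (hab : a < b) (hα : α ∈ Ioo (0 : ℝ) 1) (hβ : β ∈ Ioo (0 : ℝ) 1)
    (hL : Continuous fun p : ℝ × (Fin N → ℝ) × (Fin N → ℝ) => L p.1 p.2.1 p.2.2)
    (hy : memD a b α β γ y) (hp : p ∈ testFn a b) (hp0 : i ∉ F → ∫ t, p t = 0)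
    (hp1 : ∫ t, endpointWeight a b α β 1 t * p t = 0)
    (hp2 : ∫ t, endpointWeight a b α β 2 t * p t = 0) (hP : ∀ t, |p t| ≤ P)
    (hPδ : (b - a) * P + kernelMass a b α β γ * P < δ / 2) :
    action a b α β γ L y ≤ ∫ x in a..b, L x (variation a i p y x)
      (combCaputoVec a b α β γ y x + Pi.single i (kernelCaputo a b α β γ p x)) := by
  have hp_int := integrable_testFn hp
  obtain ⟨φ, hφ, hφy⟩ := exists_continuous_eqOn_Icc hab.le (hy.2 i)
  let η : ℕ → ℝ := fun n => δ / 4 * (1 / ((n : ℝ) + 1))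
  have hη_pos : ∀ n, 0 < η n := fun n => by positivity
  have hη_le : ∀ n, η n ≤ δ / 4 := fun n =>
    mul_le_of_le_one_right (by positivity) (div_le_one_of_le₀ (by simp) (by positivity))
  have hη_lim : Filter.Tendsto η Filter.atTop (nhds 0) := by
    simpa only [η, mul_zero] using
      (tendsto_one_div_add_atTop_nhds_zero_nat (𝕜 := ℝ)).const_mul (δ / 4)
  choose h hh using fun n => exists_isPerturbation hab hα hβ
    ((hy.1 i).integrable_indicator hab.le) (fun t ht => mem_of_indicator_ne_zero ht) hφ
    (fun x hx => by rw [← combCaputo_eq_kernelCaputo hx, hφy hx]) hp hP hp1 hp2 (hη_pos n)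
  have hhy : ∀ n, memD a b α β γ (variation a i (h n) y) := fun n =>
    hy.variation hab.le (hh n).integrable (hh n).mem_Ioo (hh n).continuousOn
  have hlimit : ContinuousOn (fun x => (variation a i p y x,
      combCaputoVec a b α β γ y x + Pi.single i (kernelCaputo a b α β γ p x))) (Icc a b) :=
    ((hy.continuousOn hab.le).add ((continuous_single i).comp
      (intervalIntegral.continuous_primitive
        (fun _ _ => hp_int.intervalIntegrable) a)).continuousOn).prodMk
      (hy.continuousOn_combCaputoVec.add ((continuous_single i).comp
        (continuous_kernelCaputo_testFn hab hα hβ hp)).continuousOn)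
  refine ge_of_tendsto' (tendsto_intervalIntegral_of_norm_sub_le hab.le hL hlimit
    (fun n => ((hhy n).continuousOn hab.le).prodMk (hhy n).continuousOn_combCaputoVec) hη_lim
    fun n x hx => (hh n).norm_variation_sub_le hab.le (hy.1 i) (hφy hx) hp_int hx) fun n =>
    (hh n).action_le hab.le hy hmin hp_int hp0 ?_
  have := integral_abs_le_of_mem_Ioo hab.le (mem_Ioo_of_mem_testFn hp) hP
  linarith [hη_le n]

lemma kernelCaputo_const_mul (c : ℝ) :
    (kernelCaputo a b α β γ fun t => c * p t) x = c * kernelCaputo a b α β γ p x := by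
  simp only [kernelCaputo, convolution_const_mul, mul_add]

lemma exists_abs_le_of_mem_testFn (hp : p ∈ testFn a b) : ∃ P, ∀ t, |p t| ≤ P :=
  hp.1.bounded_above_of_compact_support (hasCompactSupport_of_mem_testFn hp)

lemma MinimizesAction.first_variation (hmin : MinimizesAction a b α β γ L F δ y)
    (hδ : 0 < δ) (hab : a < b) (hα : α ∈ Ioo (0 : ℝ) 1) (hβ : β ∈ Ioo (0 : ℝ) 1)
    (hL : ContDiff ℝ 1 fun p : ℝ × (Fin N → ℝ) × (Fin N → ℝ) => L p.1 p.2.1 p.2.2)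
    (hy : memD a b α β γ y) (hp : p ∈ testFn a b) (hp0 : i ∉ F → ∫ t, p t = 0)
    (hp1 : ∫ t, endpointWeight a b α β 1 t * p t = 0)
    (hp2 : ∫ t, endpointWeight a b α β 2 t * p t = 0) :
    ∫ x in a..b, (pdY L i x (y x) (combCaputoVec a b α β γ y x) * (∫ t in a..x, p t) +
      pdV L i x (y x) (combCaputoVec a b α β γ y x) * kernelCaputo a b α β γ p x) = 0 := by
  obtain ⟨P, hP⟩ := exists_abs_le_of_mem_testFn hp
  refine IsLocalMin.hasDerivAt_eq_zero ?_ (hasDerivAt_integral_lagrangian hab.le hL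
    (hy.continuousOn hab.le) hy.continuousOn_combCaputoVec i
    (intervalIntegral.continuous_primitive
      (fun _ _ => (integrable_testFn hp).intervalIntegrable) a).continuousOn
    (continuous_kernelCaputo_testFn hab hα hβ hp).continuousOn)
  have hsmall : ∀ᶠ s : ℝ in nhds 0,
      (b - a) * (|s| * P) + kernelMass a b α β γ * (|s| * P) < δ / 2 := by
    have hcont : Continuous fun s : ℝ =>
        (b - a) * (|s| * P) + kernelMass a b α β γ * (|s| * P) := by fun_prop
    exact hcont.continuousAt.eventually_lt_const (by simp [hδ])
  filter_upwards [hsmall] with s hs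
  have hscale : ∀ w : ℝ → ℝ, ∫ t, w t * p t = 0 → ∫ t, w t * (s * p t) = 0 := fun w hw => by
    simp only [mul_left_comm _ s, integral_const_mul, hw, mul_zero]
  have hle := hmin.le_integral_variation (i := i) hδ hab hα hβ hL.continuous hy
    (p := fun t => s * p t) (Submodule.smul_mem _ s hp)
    (fun hi => by rw [integral_const_mul, hp0 hi, mul_zero]) (hscale _ hp1) (hscale _ hp2)
    (fun t => by rw [abs_mul]; exact mul_le_mul_of_nonneg_left (hP t) (abs_nonneg s)) hs
  simpa only [action, variation, intervalIntegral.integral_const_mul, kernelCaputo_const_mul,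
    zero_mul, Pi.single_zero, add_zero] using hle

end FirstVariation

section Momentum
variable {a b α β γ t B : ℝ} {k G Q g p : ℝ → ℝ}

lemma integral_mul_convolution (hk : Integrable k) (hp : Integrable p)
    (hG : AEStronglyMeasurable G) (hB : ∀ x, |G x| ≤ B) :
    ∫ x, G x * (k ⋆ p) x = ∫ t, ((fun s => k (-s)) ⋆ G) t * p t := by
  have h_int : Integrable (fun z : ℝ × ℝ => G z.1 * (k (z.1 - z.2) * p z.2))
      (volume.prod volume) := by
    refine ((hp.convolution_integrand (ContinuousLinearMap.mul ℝ ℝ) hk).bdd_mul (c := B)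
      hG.comp_fst (.of_forall fun z : ℝ × ℝ => hB z.1)).congr (.of_forall fun z => ?_)
    simp only [ContinuousLinearMap.mul_apply']
    ring
  have h_left : ∀ x, G x * (k ⋆ p) x = ∫ t, G x * (k (x - t) * p t) := fun x => by
    rw [convolution_eq_integral, integral_const_mul]
  have h_right : ∀ t, ((fun s => k (-s)) ⋆ G) t * p t = ∫ x, G x * (k (x - t) * p t) :=
    fun t => by
      rw [convolution_eq_integral, ← integral_mul_const]
      congr 1 with x
      rw [neg_sub]
      ring
  simp only [h_left, h_right]
  exact integral_integral_swap h_int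

lemma continuous_convolution_of_bounded {Z : Set ℝ} (hk : Integrable k)
    (hG : AEStronglyMeasurable G) (hB : ∀ x, |G x| ≤ B) (hZ : Z.Countable)
    (hcont : ∀ x ∉ Z, ContinuousAt G x) : Continuous (k ⋆ G) := by
  rw [convolution_mul_comm, funext (convolution_eq_integral G k), continuous_iff_continuousAt]
  intro x
  refine continuousAt_of_dominated (bound := fun t => B * |k t|) (.of_forall fun x => ?_)
    (.of_forall fun x => .of_forall fun t => ?_) (hk.abs.const_mul B) ?_
  · exact (hG.comp_quasiMeasurePreserving
      (quasiMeasurePreserving_sub_left volume x)).mul hk.aestronglyMeasurable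
  · rw [norm_mul]
    exact mul_le_mul_of_nonneg_right (hB _) (abs_nonneg _)
  · have hnull : volume ((fun t => x - t) '' Z) = 0 := (hZ.image _).measure_zero _
    filter_upwards [compl_mem_ae_iff.2 hnull] with t ht
    have hxt : x - t ∉ Z := fun h => ht ⟨x - t, h, by ring⟩
    have hshift : ContinuousAt (fun x => G (x - t)) x :=
      ContinuousAt.comp (g := G) (f := fun x => x - t) (hcont _ hxt) (by fun_prop)
    exact hshift.mul continuousAt_const

lemma aestronglyMeasurable_indicator_Ioo (hg : ContinuousOn g (Icc a b)) :
    AEStronglyMeasurable ((Ioo a b).indicator g) :=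
  (aestronglyMeasurable_indicator_iff measurableSet_Ioo).2
    ((hg.mono Ioo_subset_Icc_self).aestronglyMeasurable measurableSet_Ioo)

lemma exists_abs_indicator_Ioo_le (hg : ContinuousOn g (Icc a b)) :
    ∃ B, ∀ x, |(Ioo a b).indicator g x| ≤ B := by
  obtain ⟨R, hR⟩ := exists_norm_le_of_continuousOn_Icc hg
  refine ⟨max R 0, fun x => ?_⟩
  by_cases hx : x ∈ Ioo a b
  · rw [indicator_of_mem hx]
    exact (hR x (Ioo_subset_Icc_self hx)).trans (le_max_left _ _)
  · rw [indicator_of_notMem hx, abs_zero]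
    exact le_max_right _ _

lemma continuousAt_indicator_Ioo (hg : ContinuousOn g (Icc a b)) {x : ℝ}
    (hx : x ∉ ({a, b} : Set ℝ)) : ContinuousAt ((Ioo a b).indicator g) x := by
  simp only [mem_insert_iff, mem_singleton_iff, not_or] at hx
  by_cases hxo : x ∈ Ioo a b
  · refine (hg.continuousAt (Icc_mem_nhds hxo.1 hxo.2)).congr ?_
    filter_upwards [Ioo_mem_nhds hxo.1 hxo.2] with t ht
    rw [indicator_of_mem ht]
  · have hxc : x ∈ (Icc a b)ᶜ := fun h =>
      hxo ⟨lt_of_le_of_ne h.1 (Ne.symm hx.1), lt_of_le_of_ne h.2 hx.2⟩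
    refine (continuousAt_const (y := (0 : ℝ))).congr ?_
    filter_upwards [isClosed_Icc.isOpen_compl.mem_nhds hxc] with t ht
    rw [indicator_of_notMem fun h => ht (Ioo_subset_Icc_self h)]

lemma continuous_convolution_indicator (hg : ContinuousOn g (Icc a b)) (hk : Integrable k) :
    Continuous (k ⋆ (Ioo a b).indicator g) := by
  obtain ⟨B, hB⟩ := exists_abs_indicator_Ioo_le hg
  exact continuous_convolution_of_bounded (Z := {a, b}) hk (aestronglyMeasurable_indicator_Ioo hg)
    hB (by simp) fun x hx => continuousAt_indicator_Ioo hg hx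

lemma intervalIntegral_mul_convolution (hab : a ≤ b) (hg : ContinuousOn g (Icc a b))
    (hk : Integrable k) (hp : Integrable p) :
    ∫ x in a..b, g x * (k ⋆ p) x =
      ∫ t, ((fun s => k (-s)) ⋆ (Ioo a b).indicator g) t * p t := by
  obtain ⟨B, hB⟩ := exists_abs_indicator_Ioo_le hg
  rw [← integral_mul_convolution hk hp (aestronglyMeasurable_indicator_Ioo hg) hB,
    intervalIntegral.integral_of_le hab, integral_Ioc_eq_integral_Ioo,
    ← integral_indicator measurableSet_Ioo]
  simp only [indicator_mul_left]

lemma neg_kernel_convolution (k q : ℝ → ℝ) (x : ℝ) :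
    ((fun s => -k s) ⋆ q) x = -(k ⋆ q) x := by
  simp [convolution_eq_integral, integral_neg]

lemma leftKernel_comp_neg_convolution (ht : t ∈ Icc a b) :
    ((fun s => leftKernel a b α γ (-s)) ⋆ (Ioo a b).indicator g) t =
      γ * rightRLI b (1 - α) g t := by
  have hneg : (fun s => leftKernel a b α γ (-s)) = fun s => -rightKernel a b α (1 - γ) s := by
    ext s
    unfold leftKernel rightKernel
    ring
  rw [hneg, neg_kernel_convolution, rightKernel_convolution_indicator ht, rightRLI,
    show 1 - α - 1 = -α by ring]
  ring

lemma rightKernel_comp_neg_convolution (ht : t ∈ Icc a b) :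
    ((fun s => rightKernel a b β γ (-s)) ⋆ (Ioo a b).indicator g) t =
      -((1 - γ) * leftRLI a (1 - β) g t) := by
  have hneg : (fun s => rightKernel a b β γ (-s)) = fun s => -leftKernel a b β (1 - γ) s := by
    ext s
    unfold leftKernel rightKernel
    rw [neg_neg]
    ring
  rw [hneg, neg_kernel_convolution, leftKernel_convolution_indicator ht, leftRLI,
    show 1 - β - 1 = -β by ring]

lemma integrable_leftKernel (hab : a < b) (hα : α ∈ Ioo (0 : ℝ) 1) :
    Integrable (leftKernel a b α γ) :=
  (weaklySingular_truncPow hα (by linarith)).integrable.const_mul _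

lemma integrable_rightKernel (hab : a < b) (hβ : β ∈ Ioo (0 : ℝ) 1) :
    Integrable (rightKernel a b β γ) :=
  (weaklySingular_truncPow hβ (by linarith)).integrable.comp_neg.const_mul _

lemma integrable_leftKernel_zero : Integrable (leftKernel a b 0 1) := by
  refine Integrable.const_mul ((integrable_indicator_iff measurableSet_Ioo).2 ?_) _
  simp

/-- The function against which the derivative of a variation is integrated in the first
variation of the functional, for `Q = ∂L/∂y_i` and `g = ∂L/∂v_i`. -/
def momentum (a b α β γ : ℝ) (Q g : ℝ → ℝ) (t : ℝ) : ℝ :=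
  (∫ x in t..b, Q x) + γ * rightRLI b (1 - α) g t - (1 - γ) * leftRLI a (1 - β) g t

lemma momentum_eq_convolution (ht : t ∈ Icc a b) : momentum a b α β γ Q g t =
    ((fun s => leftKernel a b 0 1 (-s)) ⋆ (Ioo a b).indicator Q) t +
      ((fun s => leftKernel a b α γ (-s)) ⋆ (Ioo a b).indicator g) t +
      ((fun s => rightKernel a b β γ (-s)) ⋆ (Ioo a b).indicator g) t := by
  have hprim : rightRLI b 1 Q t = ∫ x in t..b, Q x := by simp [rightRLI]
  rw [leftKernel_comp_neg_convolution ht, leftKernel_comp_neg_convolution ht,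
    rightKernel_comp_neg_convolution ht, momentum, sub_zero, hprim, one_mul, sub_eq_add_neg]

lemma continuousOn_momentum (hab : a < b) (hα : α ∈ Ioo (0 : ℝ) 1) (hβ : β ∈ Ioo (0 : ℝ) 1)
    (hQ : ContinuousOn Q (Icc a b)) (hg : ContinuousOn g (Icc a b)) :
    ContinuousOn (momentum a b α β γ Q g) (Icc a b) := by
  refine ContinuousOn.congr ?_ fun t ht => momentum_eq_convolution ht
  exact (((continuous_convolution_indicator hQ integrable_leftKernel_zero.comp_neg).add
    (continuous_convolution_indicator hg (integrable_leftKernel hab hα).comp_neg)).add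
    (continuous_convolution_indicator hg (integrable_rightKernel hab hβ).comp_neg)).continuousOn

lemma intervalIntegral_eq_leftKernel_convolution (hp : p ∈ testFn a b) {x : ℝ}
    (hx : x ∈ Icc a b) : ∫ t in a..x, p t = (leftKernel a b 0 1 ⋆ p) x := by
  have hconv := leftKernel_convolution_indicator (a := a) (b := b) (α := 0) (γ := 1) (F := p) hx
  rw [indicator_eq_self.2 fun t => mem_Ioo_of_mem_testFn hp t] at hconv
  simp [hconv]

lemma intervalIntegrable_mul_convolution_testFn (hab : a ≤ b) (hg : ContinuousOn g (Icc a b))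
    (hk : Integrable k) (hp : p ∈ testFn a b) :
    IntervalIntegrable (fun x => g x * (k ⋆ p) x) volume a b := by
  refine ContinuousOn.intervalIntegrable ?_
  rw [uIcc_of_le hab]
  exact hg.mul ((hasCompactSupport_of_mem_testFn hp).continuous_convolution_right _
    hk.locallyIntegrable hp.1).continuousOn

lemma integrable_comp_neg_convolution_mul_testFn (hg : ContinuousOn g (Icc a b))
    (hk : Integrable k) (hp : p ∈ testFn a b) :
    Integrable fun t => ((fun s => k (-s)) ⋆ (Ioo a b).indicator g) t * p t :=
  integrable_mul_testFn (continuous_convolution_indicator hg hk.comp_neg).continuousOn hp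

lemma integral_variation_eq (hab : a < b) (hα : α ∈ Ioo (0 : ℝ) 1) (hβ : β ∈ Ioo (0 : ℝ) 1)
    (hQ : ContinuousOn Q (Icc a b)) (hg : ContinuousOn g (Icc a b)) (hp : p ∈ testFn a b) :
    ∫ x in a..b, (Q x * (∫ t in a..x, p t) + g x * kernelCaputo a b α β γ p x) =
      ∫ t, momentum a b α β γ Q g t * p t := by
  have hk0 := integrable_leftKernel_zero (a := a) (b := b)
  have hkL := integrable_leftKernel (γ := γ) hab hα
  have hkR := integrable_rightKernel (γ := γ) hab hβ
  have hp_int := integrable_testFn hp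
  have hQ0 := intervalIntegrable_mul_convolution_testFn hab.le hQ hk0 hp
  have hgL := intervalIntegrable_mul_convolution_testFn hab.le hg hkL hp
  have hgR := intervalIntegrable_mul_convolution_testFn hab.le hg hkR hp
  have hQ0' := integrable_comp_neg_convolution_mul_testFn hQ hk0 hp
  have hgL' := integrable_comp_neg_convolution_mul_testFn hg hkL hp
  have hgR' := integrable_comp_neg_convolution_mul_testFn hg hkR hp
  calc ∫ x in a..b, (Q x * (∫ t in a..x, p t) + g x * kernelCaputo a b α β γ p x)
      = ∫ x in a..b, (Q x * (leftKernel a b 0 1 ⋆ p) x + g x * (leftKernel a b α γ ⋆ p) x +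
          g x * (rightKernel a b β γ ⋆ p) x) := by
        refine intervalIntegral.integral_congr fun x hx => ?_
        rw [uIcc_of_le hab.le] at hx
        simp only [intervalIntegral_eq_leftKernel_convolution hp hx, kernelCaputo]
        ring
    _ = (∫ t, ((fun s => leftKernel a b 0 1 (-s)) ⋆ (Ioo a b).indicator Q) t * p t) +
          (∫ t, ((fun s => leftKernel a b α γ (-s)) ⋆ (Ioo a b).indicator g) t * p t) +
          ∫ t, ((fun s => rightKernel a b β γ (-s)) ⋆ (Ioo a b).indicator g) t * p t := by
        rw [intervalIntegral.integral_add (hQ0.add hgL) hgR, intervalIntegral.integral_add hQ0 hgL,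
          intervalIntegral_mul_convolution hab.le hQ hk0 hp_int,
          intervalIntegral_mul_convolution hab.le hg hkL hp_int,
          intervalIntegral_mul_convolution hab.le hg hkR hp_int]
    _ = ∫ t, momentum a b α β γ Q g t * p t := by
        rw [← integral_add' hQ0' hgL', ← integral_add' (hQ0'.add hgL') hgR']
        congr 1 with t
        by_cases ht : p t = 0
        · simp [ht]
        · rw [momentum_eq_convolution (Ioo_subset_Icc_self (mem_Ioo_of_mem_testFn hp t ht))]
          simp only [Pi.add_apply, add_mul]

lemma exists_momentum_eq (hab : a < b) (hα : α ∈ Ioo (0 : ℝ) 1) (hβ : β ∈ Ioo (0 : ℝ) 1)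
    (hQ : ContinuousOn Q (Icc a b)) (hg : ContinuousOn g (Icc a b)) {free : Prop}
    (h : ∀ p ∈ testFn a b, (¬free → ∫ t, p t = 0) → ∫ t, endpointWeight a b α β 1 t * p t = 0 →
      ∫ t, endpointWeight a b α β 2 t * p t = 0 → ∫ t, momentum a b α β γ Q g t * p t = 0) :
    ∃ c, (free → c = 0) ∧ ∀ t ∈ Icc a b, momentum a b α β γ Q g t = c := by
  have hm := continuousOn_momentum (γ := γ) hab hα hβ hQ hg
  obtain ⟨c, hc⟩ := exists_multiplier (continuousOn_endpointWeight (α := α) (β := β))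
    (hm.mono Ioo_subset_Icc_self) fun p hp hj =>
      h p hp (fun _ => by simpa [endpointWeight] using hj 0) (hj 1) (hj 2)
  obtain ⟨hc1, hc2⟩ := endpointWeight_coeff_eq_zero hab hα.1 hβ.1 hm hc
  have hconst : EqOn (momentum a b α β γ Q g) (fun _ => c 0) (Ioo a b) := fun t ht => by
    rw [hc t ht, Fin.sum_univ_three, hc1, hc2]
    simp [endpointWeight]
  refine ⟨c 0, fun hfree => ?_, hconst.of_subset_closure hm continuousOn_const
    Ioo_subset_Icc_self (closure_Ioo hab.ne).superset⟩
  obtain ⟨e, he, hdual⟩ := exists_dual_testFn (continuousOn_endpointWeight (α := α) (β := β))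
    (endpointWeight_linearIndependent hab hα.1 hβ.1)
  have hmean : ∫ t, e 0 t = 1 := by simpa [endpointWeight] using hdual 0 0
  calc c 0 = ∫ t, c 0 * e 0 t := by rw [integral_const_mul, hmean, mul_one]
    _ = ∫ t, momentum a b α β γ Q g t * e 0 t := by
        congr 1 with t
        by_cases ht : e 0 t = 0
        · simp [ht]
        · rw [hconst (mem_Ioo_of_mem_testFn (he 0) t ht)]
    _ = 0 := h (e 0) (he 0) (fun hn => absurd hfree hn) (by simp [hdual]) (by simp [hdual])

end Momentum

section AeDifferentiability
variable {a b c μ : ℝ} {g u v : ℝ → ℝ}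

lemma intervalIntegrable_rpow_mul (hμ : 0 < μ) (hu : Continuous u) (c d : ℝ) :
    IntervalIntegrable (fun s => s ^ (μ - 1) * u s) volume c d :=
  (intervalIntegral.intervalIntegrable_rpow' (by linarith)).mul_continuousOn hu.continuousOn

lemma leftRLI_eq_integral_comp_sub (u : ℝ → ℝ) (x : ℝ) :
    leftRLI a μ u x = (1 / Real.Gamma μ) * ∫ s in (0)..(x - a), s ^ (μ - 1) * u (x - s) := by
  have h := intervalIntegral.integral_comp_sub_left (a := a) (b := x)
    (fun s => s ^ (μ - 1) * u (x - s)) x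
  simp only [sub_sub_cancel, sub_self] at h
  rw [leftRLI, h]

lemma rightRLI_eq_leftRLI_comp_neg (g : ℝ → ℝ) (x : ℝ) :
    rightRLI b μ g x = leftRLI (-b) μ (fun t => g (-t)) (-x) := by
  have h := intervalIntegral.integral_comp_neg (a := -b) (b := -x)
    (fun t => (t - x) ^ (μ - 1) * g t)
  simp only [neg_neg] at h
  rw [rightRLI, leftRLI, ← h]
  simp only [neg_sub_left, add_comm]

lemma monotoneOn_leftRLI (hμ : 0 < μ) (hu : Continuous u) (hm : Monotone u) (h0 : 0 ≤ u a) :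
    MonotoneOn (leftRLI a μ u) (Ici a) := by
  intro x hx x' hx' hxx
  have hint : ∀ z c d, IntervalIntegrable (fun s => s ^ (μ - 1) * u (z - s)) volume c d :=
    fun z => intervalIntegrable_rpow_mul hμ (hu.comp (by fun_prop))
  rw [mem_Ici] at hx hx'
  rw [leftRLI_eq_integral_comp_sub, leftRLI_eq_integral_comp_sub]
  refine mul_le_mul_of_nonneg_left ?_ (one_div_pos.2 (Real.Gamma_pos_of_pos hμ)).le
  calc ∫ s in (0)..(x - a), s ^ (μ - 1) * u (x - s)
      ≤ ∫ s in (0)..(x - a), s ^ (μ - 1) * u (x' - s) :=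
        intervalIntegral.integral_mono_on (by linarith) (hint _ _ _) (hint _ _ _) fun s hs =>
          mul_le_mul_of_nonneg_left (hm (by linarith)) (rpow_nonneg hs.1 _)
    _ ≤ ∫ s in (0)..(x' - a), s ^ (μ - 1) * u (x' - s) := by
        refine intervalIntegral.integral_mono_interval le_rfl (by linarith) (by linarith) ?_
          (hint _ _ _)
        filter_upwards [ae_restrict_mem measurableSet_Ioc] with s hs
        exact mul_nonneg (rpow_nonneg hs.1.le _) (h0.trans (hm (by linarith [hs.2])))

lemma ae_differentiableAt_leftRLI_of_monotone (hμ : 0 < μ) (hu : Continuous u)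
    (hm : Monotone u) (h0 : 0 ≤ u a) :
    ∀ᵐ x, x ∈ Ioi a → DifferentiableAt ℝ (leftRLI a μ u) x := by
  filter_upwards [(monotoneOn_leftRLI hμ hu hm h0).ae_differentiableWithinAt_of_mem] with x hx hxa
  exact (hx (mem_Ioi.1 hxa).le).differentiableAt (Ici_mem_nhds hxa)

lemma leftRLI_sub (hμ : 0 < μ) (hu : Continuous u) (hv : Continuous v) (x : ℝ) :
    leftRLI a μ (u - v) x = leftRLI a μ u x - leftRLI a μ v x := by
  have hint : ∀ {w : ℝ → ℝ}, Continuous w →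
      IntervalIntegrable (fun s => s ^ (μ - 1) * w (x - s)) volume 0 (x - a) := fun hw =>
    intervalIntegrable_rpow_mul hμ (hw.comp (by fun_prop)) _ _
  simp only [leftRLI_eq_integral_comp_sub, Pi.sub_apply, mul_sub,
    intervalIntegral.integral_sub (hint hu) (hint hv)]

lemma leftRLI_congr {x : ℝ} (hx : a ≤ x) (h : EqOn g u (Icc a x)) :
    leftRLI a μ g x = leftRLI a μ u x := by
  rw [leftRLI, leftRLI]
  congr 1
  refine intervalIntegral.integral_congr fun t ht => ?_
  rw [uIcc_of_le hx] at ht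
  simp only [h ht]

lemma ae_differentiableAt_leftRLI_of_monotone_sub (hμ : 0 < μ) (hu : Continuous u)
    (hv : Continuous v) (hum : Monotone u) (hvm : Monotone v) (hu0 : 0 ≤ u a) (hv0 : 0 ≤ v a)
    (hg : EqOn g (u - v) (Icc a b)) :
    ∀ᵐ x, x ∈ Ioo a b → DifferentiableAt ℝ (leftRLI a μ g) x := by
  filter_upwards [ae_differentiableAt_leftRLI_of_monotone hμ hu hum hu0,
    ae_differentiableAt_leftRLI_of_monotone hμ hv hvm hv0] with x hxu hxv hx
  refine ((hxu hx.1).sub (hxv hx.1)).congr_of_eventuallyEq ?_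
  filter_upwards [Ioo_mem_nhds hx.1 hx.2] with z hz
  rw [leftRLI_congr hz.1.le (hg.mono (Icc_subset_Icc_right hz.2.le)), leftRLI_sub hμ hu hv,
    Pi.sub_apply]

lemma continuous_monotone_primitive (hg : Integrable g) (hg0 : ∀ t, 0 ≤ g t) (a c : ℝ) :
    Continuous (fun x => c + ∫ t in a..x, g t) ∧ Monotone (fun x => c + ∫ t in a..x, g t) := by
  refine ⟨continuous_const.add (intervalIntegral.continuous_primitive
    (fun _ _ => hg.intervalIntegrable) a), fun x x' hx => ?_⟩
  have hsub := intervalIntegral.integral_interval_sub_left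
    (hg.intervalIntegrable (a := a) (b := x')) (hg.intervalIntegrable (a := a) (b := x))
  have hpos := intervalIntegral.integral_nonneg (μ := volume) hx fun t _ => hg0 t
  simp only
  linarith

lemma AbsolutelyContinuousOn.exists_monotone_sub (hab : a ≤ b)
    (hg : AbsolutelyContinuousOn g a b) :
    ∃ u v : ℝ → ℝ, Continuous u ∧ Continuous v ∧ Monotone u ∧ Monotone v ∧ 0 ≤ u a ∧ 0 ≤ v a ∧
      EqOn g (u - v) (Icc a b) := by
  have hint := hg.integrable_indicator hab
  obtain ⟨hu, hum⟩ := continuous_monotone_primitive hint.pos_part (fun t => le_max_right _ _) a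
    (max (g a) 0)
  obtain ⟨hv, hvm⟩ := continuous_monotone_primitive hint.neg_part (fun t => le_max_right _ _) a
    (max (-g a) 0)
  refine ⟨_, _, hu, hv, hum, hvm, by simp, by simp, fun x hx => ?_⟩
  have hsub := intervalIntegral.integral_sub (hint.pos_part.intervalIntegrable (a := a) (b := x))
    (hint.neg_part.intervalIntegrable (a := a) (b := x))
  have hparts : ∀ r : ℝ, max r 0 - max (-r) 0 = r := posPart_sub_negPart
  simp only [hparts] at hsub
  rw [hg.eq_primitive x hx, hsub, Pi.sub_apply]
  linarith [hparts (g a)]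

lemma AbsolutelyContinuousOn.ae_differentiableAt_leftRLI (hab : a ≤ b) (hμ : 0 < μ)
    (hg : AbsolutelyContinuousOn g a b) :
    ∀ᵐ x, x ∈ Ioo a b → DifferentiableAt ℝ (leftRLI a μ g) x := by
  obtain ⟨u, v, hu, hv, hum, hvm, hu0, hv0, h⟩ := hg.exists_monotone_sub hab
  exact ae_differentiableAt_leftRLI_of_monotone_sub hμ hu hv hum hvm hu0 hv0 h

lemma AbsolutelyContinuousOn.ae_differentiableAt_rightRLI (hab : a ≤ b) (hμ : 0 < μ)
    (hg : AbsolutelyContinuousOn g a b) :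
    ∀ᵐ x, x ∈ Ioo a b → DifferentiableAt ℝ (rightRLI b μ g) x := by
  obtain ⟨u, v, hu, hv, hum, hvm, hu0, hv0, h⟩ := hg.exists_monotone_sub hab
  -- Reflection makes `u` and `v` antitone, so they are swapped and subtracted from a constant.
  have hleft := ae_differentiableAt_leftRLI_of_monotone_sub (a := -b) (b := -a) hμ
    (g := fun t => g (-t)) (u := fun t => u b + v b - v (-t)) (v := fun t => u b + v b - u (-t))
    (by fun_prop) (by fun_prop)
    (fun s t hst => sub_le_sub_left (hvm (neg_le_neg hst)) _)
    (fun s t hst => sub_le_sub_left (hum (neg_le_neg hst)) _)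
    (by simpa using hu0.trans (hum hab)) (by simpa using hv0.trans (hvm hab))
    (fun t ht => by
      simp only [h ⟨le_neg_of_le_neg ht.2, neg_le.1 ht.1⟩, Pi.sub_apply]
      ring)
  filter_upwards [(Measure.measurePreserving_neg volume).quasiMeasurePreserving.ae hleft]
    with x hx hxo
  rw [funext (rightRLI_eq_leftRLI_comp_neg g)]
  exact DifferentiableAt.comp (g := leftRLI (-b) μ fun t => g (-t)) x
    (hx ⟨neg_lt_neg hxo.2, neg_lt_neg hxo.1⟩) (by fun_prop)

end AeDifferentiability

section EulerLagrange
variable {a b α β γ c : ℝ} {N : ℕ} {L : ℝ → (Fin N → ℝ) → (Fin N → ℝ) → ℝ}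
  {y : ℝ → Fin N → ℝ} {Q g : ℝ → ℝ}

lemma ae_hasDerivAt_momentum (hab : a < b) (hα : α < 1) (hβ : β < 1)
    (hQ : ContinuousOn Q (Icc a b)) (hg : AbsolutelyContinuousOn g a b) :
    ∀ᵐ x, x ∈ Ioo a b →
      HasDerivAt (momentum a b α β γ Q g) (-(Q x + combRL a b α β γ g x)) x := by
  filter_upwards [hg.ae_differentiableAt_leftRLI hab.le (sub_pos.2 hβ),
    hg.ae_differentiableAt_rightRLI hab.le (sub_pos.2 hα)] with x hleft hright hx
  have hprim : HasDerivAt (fun t => ∫ s in t..b, Q s) (-Q x) x :=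
    intervalIntegral.integral_hasDerivAt_left
      (hQ.mono (uIcc_subset_Icc (Ioo_subset_Icc_self hx)
        (right_mem_Icc.2 hab.le))).intervalIntegrable
      ((hQ.mono Ioo_subset_Icc_self).stronglyMeasurableAtFilter isOpen_Ioo x hx)
      (hQ.continuousAt (Icc_mem_nhds hx.1 hx.2))
  have hsum := (hprim.add ((hright hx).hasDerivAt.const_mul γ)).sub
    ((hleft hx).hasDerivAt.const_mul (1 - γ))
  refine HasDerivAt.congr_deriv (f := momentum a b α β γ Q g) hsum ?_
  simp only [combRL, rlLeftD, rlRightD]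
  ring

lemma add_combRL_eq_zero (hab : a < b) (hα : α < 1) (hβ : β < 1)
    (hQ : ContinuousOn Q (Icc a b)) (hg : AbsolutelyContinuousOn g a b)
    (hD : ContinuousOn (combRL a b α β γ g) (Icc a b))
    (hc : ∀ t ∈ Icc a b, momentum a b α β γ Q g t = c) :
    EqOn (fun x => Q x + combRL a b α β γ g x) (fun _ => 0) (Icc a b) := by
  have hQD := hQ.add hD
  have hae : (fun x => Q x + combRL a b α β γ g x) =ᵐ[volume.restrict (Ioo a b)] fun _ => 0 := by
    refine (ae_restrict_iff' measurableSet_Ioo).2 ?_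
    filter_upwards [ae_hasDerivAt_momentum (γ := γ) hab hα hβ hQ hg] with x hderiv hx
    have hzero : HasDerivAt (momentum a b α β γ Q g) 0 x :=
      (hasDerivAt_const x c).congr_of_eventuallyEq
        (Filter.mem_of_superset (Icc_mem_nhds hx.1 hx.2) hc)
    exact neg_eq_zero.1 ((hderiv hx).unique hzero)
  exact (Measure.eqOn_open_of_ae_eq hae isOpen_Ioo (hQD.mono Ioo_subset_Icc_self)
    continuousOn_const).of_subset_closure hQD continuousOn_const Ioo_subset_Icc_self
    (closure_Ioo hab.ne).superset

lemma continuousOn_fderiv_lagrangian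
    (hL : ContDiff ℝ 1 fun p : ℝ × (Fin N → ℝ) × (Fin N → ℝ) => L p.1 p.2.1 p.2.2)
    {u v : ℝ → Fin N → ℝ} {s : Set ℝ} (hu : ContinuousOn u s) (hv : ContinuousOn v s)
    (w : ℝ × (Fin N → ℝ) × (Fin N → ℝ)) :
    ContinuousOn (fun x => fderiv ℝ (fun p : ℝ × (Fin N → ℝ) × (Fin N → ℝ) =>
      L p.1 p.2.1 p.2.2) (x, u x, v x) w) s :=
  ((hL.continuous_fderiv one_ne_zero).comp_continuousOn
    (continuousOn_id.prodMk (hu.prodMk hv))).clm_apply continuousOn_const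

lemma continuousOn_pdY (hab : a ≤ b)
    (hL : ContDiff ℝ 1 fun p : ℝ × (Fin N → ℝ) × (Fin N → ℝ) => L p.1 p.2.1 p.2.2)
    (hy : memD a b α β γ y) (i : Fin N) :
    ContinuousOn (fun x => pdY L i x (y x) (combCaputoVec a b α β γ y x)) (Icc a b) := by
  simp only [pdY_eq_fderiv hL]
  exact continuousOn_fderiv_lagrangian hL (hy.continuousOn hab) hy.continuousOn_combCaputoVec _

end EulerLagrange

theorem fractional_transversality_free_endpoint_general
    (a b α β γ : ℝ) (N : ℕ) (hab : a < b) (hα : α ∈ Ioo (0 : ℝ) 1) (hβ : β ∈ Ioo (0 : ℝ) 1)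
    (L : ℝ → (Fin N → ℝ) → (Fin N → ℝ) → ℝ)
    (hL : ContDiff ℝ 1 (fun p : ℝ × (Fin N → ℝ) × (Fin N → ℝ) => L p.1 p.2.1 p.2.2))
    (F : Set (Fin N)) (y : ℝ → Fin N → ℝ) (hy : memD a b α β γ y)
    (hmin : ∃ δ > (0 : ℝ), MinimizesAction a b α β γ L F δ y)
    (hreg : ∀ i : Fin N,
      AbsolutelyContinuousOn
        (fun x => pdV L i x (y x) (combCaputoVec a b α β γ y x)) a b ∧
      ContinuousOn
        (fun x => combRL a b α β γ
          (fun t => pdV L i t (y t) (combCaputoVec a b α β γ y t)) x) (Icc a b)) :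
    (∀ i : Fin N, ∀ x ∈ Icc a b,
      pdY L i x (y x) (combCaputoVec a b α β γ y x) +
        combRL a b α β γ
          (fun t => pdV L i t (y t) (combCaputoVec a b α β γ y t)) x = 0) ∧
    ∀ l ∈ F, γ * rightRLI b (1 - α)
        (fun t => pdV L l t (y t) (combCaputoVec a b α β γ y t)) b -
      (1 - γ) * leftRLI a (1 - β)
        (fun t => pdV L l t (y t) (combCaputoVec a b α β γ y t)) b = 0 := by
  obtain ⟨δ, hδ, hmin⟩ := hmin
  have hQ := continuousOn_pdY hab.le hL hy
  have hg := fun i => (hreg i).1.continuousOn hab.le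
  have hmomentum := fun i => exists_momentum_eq (free := i ∈ F) hab hα hβ (hQ i) (hg i)
    fun p hp hp0 hp1 hp2 => by
      rw [← integral_variation_eq hab hα hβ (hQ i) (hg i) hp]
      exact hmin.first_variation hδ hab hα hβ hL hy hp hp0 hp1 hp2
  refine ⟨fun i x hx => ?_, fun l hl => ?_⟩
  · obtain ⟨c, -, hc⟩ := hmomentum i
    exact add_combRL_eq_zero hab hα.2 hβ.2 (hQ i) (hreg i).1 (hreg i).2 hc hx
  · obtain ⟨c, hfree, hc⟩ := hmomentum l
    simpa [momentum, hfree hl] using hc b (right_mem_Icc.2 hab.le)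

/-- Transversality: if `y ∈ 𝐃` with `y(a) = yᵃ`, `yᵢ(b) = yᵢᵇ` for `i ≠ l` (and `y_l(b)` free)
is a local minimizer of `J`, then `y` satisfies the Euler–Lagrange equations together with the
natural boundary condition
`[γ (ₓI_b^{1-α} ∂L/∂v_l) - (1-γ) (ₐIₓ^{1-β} ∂L/∂v_l)]|_{x=b} = 0`. -/
theorem fractional_transversality_free_endpoint
    (a b α β γ : ℝ) (N : ℕ) (hab : a < b)
    (hα : α ∈ Ioo (0 : ℝ) 1) (hβ : β ∈ Ioo (0 : ℝ) 1) (hγ : γ ∈ Icc (0 : ℝ) 1)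
    (L : ℝ → (Fin N → ℝ) → (Fin N → ℝ) → ℝ)
    (hL : ContDiff ℝ 1 (fun p : ℝ × (Fin N → ℝ) × (Fin N → ℝ) => L p.1 p.2.1 p.2.2))
    (l : Fin N) (ya : Fin N → ℝ) (yb : Fin N → ℝ)
    (y : ℝ → Fin N → ℝ) (hy : memD a b α β γ y)
    (hya : y a = ya) (hyb : ∀ i : Fin N, i ≠ l → y b i = yb i)
    (hmin : ∃ δ > (0 : ℝ), ∀ z : ℝ → Fin N → ℝ, memD a b α β γ z → z a = ya →
      (∀ i : Fin N, i ≠ l → z b i = yb i) →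
      norm1inf a b α β γ (z - y) < δ →
      (∫ x in a..b, L x (y x) (combCaputoVec a b α β γ y x)) ≤
        ∫ x in a..b, L x (z x) (combCaputoVec a b α β γ z x))
    (hreg : ∀ i : Fin N,
      AbsolutelyContinuousOn
        (fun x => pdV L i x (y x) (combCaputoVec a b α β γ y x)) a b ∧
      ContinuousOn
        (fun x => combRL a b α β γ
          (fun t => pdV L i t (y t) (combCaputoVec a b α β γ y t)) x) (Icc a b)) :
    (∀ i : Fin N, ∀ x ∈ Icc a b,
      pdY L i x (y x) (combCaputoVec a b α β γ y x) +
        combRL a b α β γ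
          (fun t => pdV L i t (y t) (combCaputoVec a b α β γ y t)) x = 0) ∧
    γ * rightRLI b (1 - α)
        (fun t => pdV L l t (y t) (combCaputoVec a b α β γ y t)) b -
      (1 - γ) * leftRLI a (1 - β)
        (fun t => pdV L l t (y t) (combCaputoVec a b α β γ y t)) b = 0 := by
  obtain ⟨δ, hδ, hmin⟩ := hmin
  exact (fractional_transversality_free_endpoint_general a b α β γ N hab hα hβ L hL {l} y hy
    ⟨δ, hδ, fun z hz hza hzb => hmin z hz (hza.trans hya) fun i hi => (hzb i hi).trans (hyb i hi)⟩
    hreg).imp_right fun h => h l rfl
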